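/- (Bourgain–Kontorovich) For every alphabet 𝒜 with δ_𝒜 > 1 − 5/312, there exist a constant c > 0 and N₀ such that for every integer N ≥ N₀ one has #𝔇_𝒜(N) ≥ c·N. -/

import Mathlib

open Real Filter

noncomputable section

/-- The continuant `⟨d₁,…,d_k⟩`, with `⟨⟩ = 1`, satisfying
`⟨d₁,…,d_k⟩ = d₁·⟨d₂,…,d_k⟩ + ⟨d₃,…,d_k⟩`. -/
def cont : List ℕ → ℕ
  | [] => 1
  | [d] => d
  | d :: e :: l => d * cont (e :: l) + cont l

/-- The value of the finite continued fraction `[d₁,…,d_k] = ⟨d₂,…,d_k⟩ / ⟨d₁,…,d_k⟩`. -/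
def cfVal (l : List ℕ) : ℝ := (cont l.tail : ℝ) / (cont l : ℝ)

/-- The set `E_𝒜` of values of infinite continued fractions `[0; d₁, d₂, …]`
with all partial quotients in `𝒜`. -/
def cfSet (A : Finset ℕ) : Set ℝ :=
  {x | ∃ d : ℕ → ℕ, (∀ i, d i ∈ A) ∧
    Tendsto (fun k => cfVal ((List.range k).map d)) atTop (nhds x)}

/-- `δ_𝒜`, the Hausdorff dimension of `E_𝒜` (as a real number). -/
def hdim (A : Finset ℕ) : ℝ := (dimH (cfSet A)).toReal

/-- `𝔇_𝒜(N)`: the set of positive integers `d ≤ N` representable as a continuant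
of a finite sequence with entries in `𝒜`. -/
def DD (A : Finset ℕ) (N : ℕ) : Set ℕ :=
  {d | 0 < d ∧ d ≤ N ∧ ∃ l : List ℕ, l ≠ [] ∧ (∀ x ∈ l, x ∈ A) ∧ cont l = d}

section
def wmt (l : List ℕ) : Matrix (Fin 2) (Fin 2) ℤ :=
  (l.map (fun d : ℕ => (!![(d:ℤ), 1; 1, 0] : Matrix (Fin 2) (Fin 2) ℤ))).prod

def ca (l : List ℕ) : ℤ := wmt l 0 0
def cb (l : List ℕ) : ℤ := wmt l 0 1
def cc (l : List ℕ) : ℤ := wmt l 1 0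
def cd (l : List ℕ) : ℤ := wmt l 1 1

lemma wmt_append (l m : List ℕ) : wmt (l ++ m) = wmt l * wmt m := by
  simp [wmt]

lemma ca_append (l m : List ℕ) : ca (l ++ m) = ca l * ca m + cb l * cc m := by
  simp [ca, cb, cc, wmt_append, Matrix.mul_apply, Fin.sum_univ_two]
lemma cb_append (l m : List ℕ) : cb (l ++ m) = ca l * cb m + cb l * cd m := by
  simp [ca, cb, cd, wmt_append, Matrix.mul_apply, Fin.sum_univ_two]
lemma cc_append (l m : List ℕ) : cc (l ++ m) = cc l * ca m + cd l * cc m := by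
  simp [ca, cd, cc, wmt_append, Matrix.mul_apply, Fin.sum_univ_two]
lemma cd_append (l m : List ℕ) : cd (l ++ m) = cc l * cb m + cd l * cd m := by
  simp [cb, cd, cc, wmt_append, Matrix.mul_apply, Fin.sum_univ_two]

@[simp] lemma ca_nil : ca [] = 1 := by simp [ca, wmt]
@[simp] lemma cb_nil : cb [] = 0 := by simp [cb, wmt]
@[simp] lemma cc_nil : cc [] = 0 := by simp [cc, wmt]
@[simp] lemma cd_nil : cd [] = 1 := by simp [cd, wmt]

lemma wmt_cons (d : ℕ) (l : List ℕ) : wmt (d :: l) = !![(d:ℤ), 1; 1, 0] * wmt l := by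
  simp [wmt]

lemma ca_cons (d : ℕ) (l : List ℕ) : ca (d :: l) = d * ca l + cc l := by
  simp [ca, cc, wmt_cons, Matrix.mul_apply, Fin.sum_univ_two]
lemma cb_cons (d : ℕ) (l : List ℕ) : cb (d :: l) = d * cb l + cd l := by
  simp [cb, cd, wmt_cons, Matrix.mul_apply, Fin.sum_univ_two]
lemma cc_cons (d : ℕ) (l : List ℕ) : cc (d :: l) = ca l := by
  simp [ca, cc, wmt_cons, Matrix.mul_apply, Fin.sum_univ_two]
lemma cd_cons (d : ℕ) (l : List ℕ) : cd (d :: l) = cb l := by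
  simp [cb, cd, wmt_cons, Matrix.mul_apply, Fin.sum_univ_two]

lemma cont_eq (l : List ℕ) : (cont l : ℤ) = ca l := by
  induction l using cont.induct with
  | case1 => simp [cont]
  | case2 d => simp [cont, ca_cons]
  | case3 d e l ih1 ih2 =>
    rw [cont, ca_cons, cc_cons]; push_cast; rw [ih1, ih2]

lemma wmt_reverse (l : List ℕ) : wmt l.reverse = (wmt l).transpose := by
  induction l with
  | nil => simp [wmt]
  | cons d l ih =>
    rw [List.reverse_cons, wmt_append, ih, wmt_cons d l, Matrix.transpose_mul]
    congr 1
    ext i j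
    fin_cases i <;> fin_cases j <;> simp [wmt]

lemma ca_rev (l : List ℕ) : ca l.reverse = ca l := by simp [ca, wmt_reverse]
lemma cb_rev (l : List ℕ) : cb l.reverse = cc l := by simp [cb, cc, wmt_reverse]
lemma cc_rev (l : List ℕ) : cc l.reverse = cb l := by simp [cb, cc, wmt_reverse]
lemma cd_rev (l : List ℕ) : cd l.reverse = cd l := by simp [cd, wmt_reverse]

lemma cdet (l : List ℕ) : ca l * cd l - cb l * cc l = (-1) ^ l.length := by
  induction l with
  | nil => simp
  | cons d l ih =>
    rw [ca_cons, cb_cons, cc_cons, cd_cons, List.length_cons, pow_succ, ← ih]; ring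

lemma cdet_abs (l : List ℕ) : |ca l * cd l - cb l * cc l| = 1 := by
  rw [cdet]; simp

lemma cprim (l : List ℕ) : IsCoprime (ca l) (cc l) := by
  have h := cdet l
  rcases neg_one_pow_eq_or ℤ l.length with h1 | h1
  · exact ⟨cd l, -cb l, by rw [h1] at h; linarith⟩
  · exact ⟨-cd l, cb l, by rw [h1] at h; linarith⟩

def Pw (l : List ℕ) : Prop := ∀ x ∈ l, 0 < x

lemma Pw.append {l m : List ℕ} (h : Pw l) (h' : Pw m) : Pw (l ++ m) := by
  intro x hx; rcases List.mem_append.1 hx with h1 | h1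
  · exact h x h1
  · exact h' x h1
lemma Pw.rev {l : List ℕ} (h : Pw l) : Pw l.reverse := by
  intro x hx; exact h x (List.mem_reverse.1 hx)
lemma Pw.tail {d : ℕ} {l : List ℕ} (h : Pw (d :: l)) : Pw l :=
  fun x hx => h x (List.mem_cons_of_mem _ hx)

lemma cnonneg (l : List ℕ) : 0 ≤ ca l ∧ 0 ≤ cb l ∧ 0 ≤ cc l ∧ 0 ≤ cd l := by
  induction l with
  | nil => simp
  | cons d l ih =>
    obtain ⟨h1, h2, h3, h4⟩ := ih
    rw [ca_cons, cb_cons, cc_cons, cd_cons]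
    refine ⟨by positivity, by positivity, h1, h2⟩

lemma cc_le_ca {l : List ℕ} (h : Pw l) : cc l ≤ ca l := by
  cases l with
  | nil => simp
  | cons d l =>
    rw [ca_cons, cc_cons]
    have := cnonneg l
    have hd : 1 ≤ (d:ℤ) := by exact_mod_cast h d (by simp)
    nlinarith

lemma cb_le_ca {l : List ℕ} (h : Pw l) : cb l ≤ ca l := by
  have := cc_le_ca h.rev
  rwa [cc_rev, ca_rev] at this

lemma one_le_ca {l : List ℕ} (h : Pw l) : 1 ≤ ca l := by
  induction l with
  | nil => simp
  | cons d l ih =>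
    rw [ca_cons]
    have := cnonneg l
    have hd : 1 ≤ (d:ℤ) := by exact_mod_cast h d (by simp)
    nlinarith [ih h.tail]

lemma ca_mul_le (l m : List ℕ) : ca l * ca m ≤ ca (l ++ m) := by
  rw [ca_append]; have := cnonneg l; have := cnonneg m; nlinarith

lemma ca_le_mul {l m : List ℕ} (h : Pw l) (h' : Pw m) : ca (l ++ m) ≤ 2 * (ca l * ca m) := by
  rw [ca_append]; have h1 := cnonneg l; have h2 := cnonneg m
  have := mul_le_mul (cb_le_ca h) (cc_le_ca h') h2.2.2.1 h1.1
  linarith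

lemma ca_ge_pow {l : List ℕ} (h : Pw l) : (2:ℤ) ^ (l.length / 2) ≤ ca l := by
  induction l using cont.induct with
  | case1 => simp
  | case2 d => simpa using one_le_ca h
  | case3 d e l ih1 ih2 =>
    have ih := ih2 h.tail.tail
    have hd : 1 ≤ (d:ℤ) := by exact_mod_cast h d (by simp)
    have he : 1 ≤ (e:ℤ) := by exact_mod_cast h e (by simp)
    have h0 := cnonneg l
    have : (List.length (d :: e :: l)) / 2 = l.length / 2 + 1 := by simp only [List.length_cons]; omega
    rw [this, pow_succ, ca_cons, cc_cons, ca_cons]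
    have : (ca l) ≤ e * ca l + cc l := by nlinarith
    nlinarith

lemma ca_le_pow {l : List ℕ} (h : Pw l) {K : ℕ} (hK : ∀ x ∈ l, x ≤ K) :
    ca l ≤ ((K:ℤ) + 1) ^ l.length := by
  induction l with
  | nil => simp
  | cons d l ih =>
    have ih := ih h.tail (fun x hx => hK x (List.mem_cons_of_mem _ hx))
    have hd : (d:ℤ) ≤ K := by exact_mod_cast hK d (by simp)
    have h1 := cc_le_ca h.tail
    have h0 := cnonneg l
    rw [ca_cons, List.length_cons, pow_succ]
    nlinarith

/-- slope contraction -/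
lemma cc_contr (l m : List ℕ) :
    |cc (l ++ m) * ca l - cc l * ca (l ++ m)| = cc m := by
  have : cc (l ++ m) * ca l - cc l * ca (l ++ m) = (ca l * cd l - cb l * cc l) * cc m := by
    rw [cc_append, ca_append]; ring
  rw [this, abs_mul, cdet_abs, one_mul, abs_of_nonneg (cnonneg m).2.2.1]

def zz (l : List ℕ) : ℝ := (cc l : ℝ) / (ca l : ℝ)
def yy (l : List ℕ) : ℝ := (cb l : ℝ) / (ca l : ℝ)

lemma ca_pos {l : List ℕ} (h : Pw l) : (0:ℝ) < ca l := by
  have := one_le_ca h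
  exact_mod_cast (by linarith : 0 < ca l)

lemma zz_contr {l m : List ℕ} (h : Pw l) (h' : Pw m) : |zz (l ++ m) - zz l| ≤ 1 / (ca l : ℝ) ^ 2 := by
  have h1 := ca_pos h
  have h2 := ca_pos h'
  have h3 := ca_pos (h.append h')
  have e : zz (l ++ m) - zz l
      = ((cc (l ++ m) * ca l - cc l * ca (l ++ m) : ℤ) : ℝ) / (ca (l ++ m) * ca l) := by
    unfold zz; push_cast; field_simp
  rw [e, abs_div, ← Int.cast_abs, cc_contr, abs_of_pos (mul_pos h3 h1),
    div_le_div_iff₀ (mul_pos h3 h1) (by positivity)]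
  have h4 : (cc m : ℝ) ≤ ca m := by exact_mod_cast cc_le_ca h'
  have h5 : (ca l : ℝ) * ca m ≤ ca (l ++ m) := by exact_mod_cast ca_mul_le l m
  have : (cc m : ℝ) * ca l ≤ ca (l++m) := by nlinarith
  nlinarith

lemma yy_rev (l : List ℕ) : yy l = zz l.reverse := by simp [yy, zz, cc_rev, ca_rev]

lemma yy_contr {l m : List ℕ} (h : Pw l) (h' : Pw m) : |yy (l ++ m) - yy m| ≤ 1 / (ca m : ℝ) ^ 2 := by
  rw [yy_rev, yy_rev, List.reverse_append]
  have := zz_contr h'.rev h.rev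
  rwa [ca_rev] at this

lemma zz_mem {l : List ℕ} (h : Pw l) : 0 ≤ zz l ∧ zz l ≤ 1 := by
  have h1 := ca_pos h
  have h2 : (0:ℝ) ≤ cc l := by exact_mod_cast (cnonneg l).2.2.1
  have h4 : (cc l : ℝ) ≤ ca l := by exact_mod_cast cc_le_ca h
  exact ⟨by unfold zz; positivity, by unfold zz; rw [div_le_one h1]; exact h4⟩

lemma yy_mem {l : List ℕ} (h : Pw l) : 0 ≤ yy l ∧ yy l ≤ 1 := by
  rw [yy_rev]; exact zz_mem h.rev

lemma ca_append_real {l m : List ℕ} (h : Pw l) (h' : Pw m) :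
    (ca (l ++ m) : ℝ) = ca l * ca m * (1 + yy l * zz m) := by
  have h1 := ca_pos h
  have h2 := ca_pos h'
  rw [ca_append]; unfold yy zz; push_cast; field_simp

lemma cinj : ∀ {l l' : List ℕ}, Pw l → Pw l' → l.length = l'.length → ca l = ca l' → cc l = cc l' →
    l = l' := by
  intro l
  induction l with
  | nil => intro l' _ _ h _ _; simpa using h.symm
  | cons d l ih =>
    intro l' hl hl' hlen h1 h2
    cases l' with
    | nil => simp at hlen
    | cons d' l' =>
      simp only [List.length_cons, Nat.add_right_cancel_iff] at hlen
      rw [cc_cons, cc_cons] at h2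
      rw [ca_cons, ca_cons, ← h2] at h1
      have hp : 1 ≤ ca l := one_le_ca hl.tail
      -- strictness
      have strict : ∀ m : List ℕ, Pw m → m.length ≠ 1 → cc m < ca m := by
        intro m hm hm1
        match m, hm, hm1 with
        | [], _, _ => simp
        | [x], _, h => simp at h
        | x :: y :: m, hm, _ =>
          have hx : 1 ≤ (x:ℤ) := by exact_mod_cast hm x (by simp)
          have := one_le_ca hm.tail
          have h3 := one_le_ca hm.tail.tail
          rw [ca_cons, cc_cons, cc_cons]; nlinarith
      by_cases hl1 : l.length = 1
      · have hl1' : l'.length = 1 := by omega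
        obtain ⟨x, rfl⟩ := List.length_eq_one_iff.1 hl1
        obtain ⟨x', rfl⟩ := List.length_eq_one_iff.1 hl1'
        simp [ca_cons] at h2
        subst h2
        simp [ca_cons, cc_cons] at h1
        rcases h1 with h1 | h1
        · rw [h1]
        · have := hl.tail x (by simp); omega
      · have s1 := strict l hl.tail hl1
        have s2 := strict l' hl'.tail (by omega)
        rw [← h2] at s2
        have n1 := (cnonneg l).2.2.1
        have n2 := (cnonneg l').2.2.1
        have hdd : (d:ℤ) = d' := by
          by_contra hne
          rcases lt_or_gt_of_ne hne with h | h
          · have : (d:ℤ) + 1 ≤ d' := h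
            nlinarith
          · have : (d':ℤ) + 1 ≤ d := h
            nlinarith
        have h3 : cc l = cc l' := by rw [hdd] at h1; linarith
        have := ih hl.tail hl'.tail hlen h2 h3
        rw [this]; congr 1; exact_mod_cast hdd
end

section
def words (A : Finset ℕ) : ℕ → Finset (List ℕ)
  | 0 => {[]}
  | k + 1 => (A ×ˢ words A k).image (fun p => p.1 :: p.2)

lemma mem_words {A : Finset ℕ} : ∀ {k : ℕ} {l : List ℕ}, l ∈ words A k ↔ l.length = k ∧ ∀ x ∈ l, x ∈ A := by
  intro k
  induction k with
  | zero => intro l; simp only [words, Finset.mem_singleton, List.length_eq_zero_iff]; constructor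
            · rintro rfl; simp
            · exact fun h => h.1
  | succ k ih =>
    intro l
    simp only [words, Finset.mem_image, Finset.mem_product, Prod.exists]
    constructor
    · rintro ⟨a, m, ⟨h1, h2⟩, rfl⟩
      have := ih.1 h2
      refine ⟨by simp [this.1], ?_⟩
      intro x hx
      rcases List.mem_cons.1 hx with rfl | h
      · exact h1
      · exact this.2 x h
    · rintro ⟨h1, h2⟩
      cases l with
      | nil => simp at h1
      | cons a m =>
        exact ⟨a, m, ⟨h2 a (by simp), ih.2 ⟨by simpa using h1, fun x hx => h2 x (List.mem_cons_of_mem _ hx)⟩⟩, rfl⟩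

lemma cfVal_eq {l : List ℕ} (h : l ≠ []) : cfVal l = zz l := by
  cases l with
  | nil => exact absurd rfl h
  | cons d l =>
    unfold cfVal zz
    rw [cc_cons, ← cont_eq, ← cont_eq]; simp

lemma pw_words {A : Finset ℕ} (hpos : ∀ a ∈ A, 0 < a) {k : ℕ} {w : List ℕ} (h : w ∈ words A k) : Pw w :=
  fun x hx => hpos x ((mem_words.1 h).2 x hx)

lemma cover {A : Finset ℕ} (hpos : ∀ a ∈ A, 0 < a) {k : ℕ} (hk : 0 < k) {x : ℝ} (hx : x ∈ cfSet A) :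
    ∃ w ∈ words A k, x ∈ Metric.closedBall (zz w) (1 / (ca w : ℝ)^2) := by
  obtain ⟨d, hd, ht⟩ := hx
  set w := (List.range k).map d with hw
  have hwk : w ∈ words A k := by
    rw [mem_words]; refine ⟨by simp [hw], ?_⟩
    intro x hx
    simp only [hw, List.mem_map] at hx
    obtain ⟨i, _, rfl⟩ := hx; exact hd i
  refine ⟨w, hwk, ?_⟩
  refine Metric.isClosed_closedBall.mem_of_tendsto ht ?_
  filter_upwards [eventually_ge_atTop k] with n hn
  obtain ⟨m, rfl⟩ := Nat.exists_eq_add_of_le hn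
  rw [List.range_add, List.map_append]
  have hne : (List.map d (List.range k) ++ List.map d (List.map (fun x => k + x) (List.range m))) ≠ [] := by
    simp; omega
  rw [cfVal_eq hne, Metric.mem_closedBall, Real.dist_eq]
  refine zz_contr (pw_words hpos hwk) ?_
  intro x hx
  simp only [List.mem_map] at hx
  obtain ⟨i, _, rfl⟩ := hx
  exact hpos _ (hd _)

lemma haus {A : Finset ℕ} (hpos : ∀ a ∈ A, 0 < a) (hδ : 1 - 5/312 < hdim A) :
    ∀ᶠ k : ℕ in atTop, 1 ≤ ∑ w ∈ words A k, (2 / (ca w : ℝ)^2) ^ (0.983 : ℝ) := by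
  have hlt : ((0.983 : NNReal) : ENNReal) < dimH (cfSet A) := by
    have h2 : (0.983:ℝ) < (dimH (cfSet A)).toReal := lt_trans (by norm_num) hδ
    have h3 := (ENNReal.lt_ofReal_iff_toReal_lt (a := ((0.983 : NNReal) : ENNReal)) (b := (dimH (cfSet A)).toReal) (by simp)).2 (by
      simpa using h2)
    rwa [ENNReal.ofReal_toReal (Real.dimH_ne_top _)] at h3
  have hinf := hausdorffMeasure_of_lt_dimH hlt
  have hdiam : ∀ w : List ℕ, Metric.ediam (Metric.closedBall (zz w) (1 / (ca w : ℝ)^2))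
      = ENNReal.ofReal (2 / (ca w : ℝ)^2) := by
    intro w
    rw [Real.closedBall_eq_Icc, Real.ediam_Icc]; congr 1; ring
  have key := MeasureTheory.Measure.hausdorffMeasure_le_liminf_sum (X := ℝ) ((0.983 : NNReal) : ℝ) (cfSet A)
    (l := atTop) (β := ℕ) (ι := fun k => words A k)
    (fun k => ENNReal.ofReal (2 * (1/4:ℝ) ^ (k / 2)))
    (by
      rw [← ENNReal.ofReal_zero]
      apply ENNReal.tendsto_ofReal
      have h1 : Tendsto (fun k : ℕ => (1/4:ℝ) ^ (k / 2)) atTop (nhds 0) :=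
        (tendsto_pow_atTop_nhds_zero_of_lt_one (by norm_num) (by norm_num)).comp
          (Nat.tendsto_div_const_atTop (by norm_num))
      simpa using h1.const_mul 2)
    (fun k w => Metric.closedBall (zz w.1) (1 / (ca w.1 : ℝ)^2))
    (by
      refine Eventually.of_forall fun k w => ?_
      have hp := pw_words hpos w.2
      rw [hdiam]
      apply ENNReal.ofReal_le_ofReal
      have h1 := ca_ge_pow hp
      rw [(mem_words.1 w.2).1] at h1
      have h2 : (2:ℝ) ^ (k/2) ≤ ca w.1 := by exact_mod_cast h1
      rw [div_eq_mul_inv]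
      refine mul_le_mul_of_nonneg_left ?_ (by norm_num)
      rw [one_div, inv_pow]
      apply inv_anti₀ (by positivity)
      calc (4:ℝ)^(k/2) = (2^(k/2))^2 := by rw [← pow_mul, mul_comm, pow_mul]; norm_num
        _ ≤ _ := by gcongr)
    (by
      filter_upwards [eventually_gt_atTop 0] with k hk x hx
      obtain ⟨w, hw, hx⟩ := cover hpos hk hx
      exact Set.mem_iUnion.2 ⟨⟨w, hw⟩, hx⟩)
  rw [hinf, top_le_iff] at key
  have := eventually_lt_of_lt_liminf (b := 1) (lt_of_lt_of_eq (by simp) key.symm) (by isBoundedDefault)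
  filter_upwards [this] with k hk
  simp only [hdiam] at hk
  rw [Finset.sum_coe_sort (words A k) (fun w => ENNReal.ofReal (2 / (ca w : ℝ)^2) ^ ((0.983 : NNReal) : ℝ))] at hk
  have e : ∑ w ∈ words A k, ENNReal.ofReal (2 / (ca w : ℝ)^2) ^ ((0.983 : NNReal) : ℝ)
      = ENNReal.ofReal (∑ w ∈ words A k, (2 / (ca w : ℝ)^2) ^ (0.983 : ℝ)) := by
    rw [ENNReal.ofReal_sum_of_nonneg (fun i _ => by positivity)]
    refine Finset.sum_congr rfl fun w hw => ?_
    rw [ENNReal.ofReal_rpow_of_nonneg (by positivity) (by norm_num)]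
    norm_num
  rw [e] at hk
  by_contra hc
  have : ENNReal.ofReal (∑ w ∈ words A k, (2 / (ca w : ℝ)^2) ^ (0.983 : ℝ)) ≤ 1 := by
    rw [← ENNReal.ofReal_one]; exact ENNReal.ofReal_le_ofReal (by linarith)
  exact absurd hk (not_lt.2 this)
end

section
structure Blk (A : Finset ℕ) (K k : ℕ) (B : Finset (List ℕ)) (W : ℝ) : Prop where
  sub : B ⊆ words A k
  ratio : ∀ w ∈ B, ∀ w' ∈ B, (ca w : ℝ) ≤ exp (1 / (k:ℝ)^2) * ca w'
  yd : ∀ w ∈ B, ∀ w' ∈ B, |yy w - yy w'| ≤ 1 / (k:ℝ)^2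
  zd : ∀ w ∈ B, ∀ w' ∈ B, |zz w - zz w'| ≤ 1 / (k:ℝ)^2
  hi : ∀ w ∈ B, 2 * (ca w : ℝ) ≤ W
  lo : ∀ w ∈ B, W ^ (0.999:ℝ) ≤ (ca w : ℝ)
  card : W ^ (1.96:ℝ) ≤ (B.card : ℝ)
  W_lo : (2:ℝ) ^ (k / 2) ≤ W
  W_hi : W ≤ 6 * ((K:ℝ) + 1) ^ k
  small : ∀ w ∈ B, (k:ℝ) ≤ ca w

lemma ev1 (C : ℝ) : ∀ᶠ k : ℕ in atTop, C * (k:ℝ)^7 ≤ ((2:ℝ) ^ (k / 2)) ^ (0.006:ℝ) := by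
  have hr : (1:ℝ) < 2 ^ (0.003:ℝ) := Real.one_lt_rpow (by norm_num) (by norm_num)
  have h := tendsto_pow_const_div_const_pow_of_one_lt 7 hr
  have h2 := h.const_mul (2 * C)
  rw [mul_zero] at h2
  filter_upwards [h2.eventually_lt_const (show (0:ℝ) < 1 by norm_num)] with k hk
  have hp : (0:ℝ) < (2 ^ (0.003:ℝ))^k := by positivity
  rw [mul_div_assoc', div_lt_one hp] at hk
  have e1 : ((2:ℝ) ^ (0.003:ℝ))^k = 2 ^ (0.003 * (k:ℝ)) := by
    rw [← Real.rpow_natCast, ← Real.rpow_mul (by norm_num)]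
  have e2 : ((2:ℝ) ^ (k / 2)) ^ (0.006:ℝ) = 2 ^ (((k/2 : ℕ):ℝ) * 0.006) := by
    rw [← Real.rpow_natCast, ← Real.rpow_mul (by norm_num)]
  rw [e1] at hk
  rw [e2]
  have h3 : (k:ℝ) ≤ 2 * ((k/2:ℕ):ℝ) + 1 := by
    have : k ≤ 2 * (k/2) + 1 := by omega
    exact_mod_cast this
  have h4 : (2:ℝ) ^ (0.003 * (k:ℝ)) ≤ 2 ^ (((k/2 : ℕ):ℝ) * 0.006 + 1) :=
    Real.rpow_le_rpow_of_exponent_le (by norm_num) (by linarith)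
  rw [Real.rpow_add (by norm_num), Real.rpow_one] at h4
  linarith

lemma ev2 : ∀ᶠ k : ℕ in atTop, (k:ℝ) ≤ (2:ℝ) ^ (k / 2) := by
  filter_upwards [ev1 1, eventually_ge_atTop 1] with k hk h1
  have a1 : (1:ℝ) ≤ k := by exact_mod_cast h1
  have a2 : (k:ℝ) ≤ (k:ℝ)^7 := le_self_pow₀ a1 (by norm_num)
  have a3 : ((2:ℝ) ^ (k / 2)) ^ (0.006:ℝ) ≤ ((2:ℝ) ^ (k / 2)) ^ (1:ℝ) :=
    Real.rpow_le_rpow_of_exponent_le (one_le_pow₀ (by norm_num)) (by norm_num)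
  rw [Real.rpow_one] at a3
  linarith

lemma ev3 (C : ℝ) {e : ℝ} (he : 0 < e) : ∀ᶠ k : ℕ in atTop, C ≤ ((2:ℝ) ^ (k / 2)) ^ e := by
  have : Tendsto (fun k : ℕ => ((2:ℝ) ^ (k / 2)) ^ e) atTop atTop :=
    (tendsto_rpow_atTop he).comp ((tendsto_pow_atTop_atTop_of_one_lt (by norm_num)).comp
      (Nat.tendsto_div_const_atTop (by norm_num)))
  exact this.eventually_ge_atTop C

set_option maxHeartbeats 1000000 in
lemma blocks {A : Finset ℕ} (hpos : ∀ a ∈ A, 0 < a) {K : ℕ} (hK : ∀ a ∈ A, a ≤ K)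
    (hδ : 1 - 5/312 < hdim A) :
    ∀ᶠ k : ℕ in atTop, ∃ B W, Blk A K k B W := by
  set Λ : ℝ := Real.log ((K:ℝ)+1) with hΛ
  have hΛ0 : 0 ≤ Λ := Real.log_nonneg (by simp)
  filter_upwards [haus hpos hδ, ev1 (72 * (4 * (Λ + 1))), ev2, ev3 6 (show (0:ℝ) < 0.001 by norm_num),
    eventually_ge_atTop 1] with k h1 h2 h3 h4 hk
  have hk1 : (1:ℝ) ≤ k := by exact_mod_cast hk
  have hk0 : (0:ℝ) < (k:ℝ)^2 := by positivity
  have hlog : ∀ w ∈ words A k, 0 ≤ Real.log (ca w) ∧ Real.log (ca w) ≤ k * Λ := by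
    intro w hw
    have hp := pw_words hpos hw
    have hm := mem_words.1 hw
    have a1 : (1:ℝ) ≤ ca w := by exact_mod_cast one_le_ca hp
    have a2 := ca_le_pow hp (fun x hx => hK x (hm.2 x hx))
    rw [hm.1] at a2
    have a2 : (ca w : ℝ) ≤ ((K:ℝ)+1)^k := by exact_mod_cast a2
    refine ⟨Real.log_nonneg a1, ?_⟩
    have := Real.log_le_log (by linarith) a2
    rwa [Real.log_pow] at this
  set f : List ℕ → ℕ × ℕ × ℕ := fun w =>
    (⌊(k:ℝ)^2 * Real.log (ca w)⌋₊, ⌊(k:ℝ)^2 * yy w⌋₊, ⌊(k:ℝ)^2 * zz w⌋₊) with hf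
  set T : Finset (ℕ × ℕ × ℕ) :=
    Finset.range (⌊(k:ℝ)^2 * (k * Λ)⌋₊ + 1) ×ˢ Finset.range (k^2 + 1) ×ˢ Finset.range (k^2+1) with hT
  have hmaps : ∀ w ∈ words A k, f w ∈ T := by
    intro w hw
    have hp := pw_words hpos hw
    have hy := yy_mem hp
    have hz := zz_mem hp
    simp only [hf, hT, Finset.mem_product, Finset.mem_range, Nat.lt_succ_iff]
    refine ⟨Nat.floor_le_floor (mul_le_mul_of_nonneg_left (hlog w hw).2 hk0.le), ?_, ?_⟩
    · apply Nat.floor_le_of_le; push_cast; nlinarith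
    · apply Nat.floor_le_of_le; push_cast; nlinarith
  have hTcard : (T.card : ℝ) ≤ 4 * (Λ + 1) * (k:ℝ)^7 := by
    have : (T.card : ℝ) = ((⌊(k:ℝ)^2 * (k * Λ)⌋₊ : ℝ) + 1) * (((k:ℝ)^2+1) * ((k:ℝ)^2+1)) := by
      simp [hT]
    rw [this]
    have b1 : (⌊(k:ℝ)^2 * (k * Λ)⌋₊ : ℝ) + 1 ≤ (Λ+1) * (k:ℝ)^3 := by
      have := Nat.floor_le (show 0 ≤ (k:ℝ)^2 * (k * Λ) by positivity)
      have : (1:ℝ) ≤ (k:ℝ)^3 := one_le_pow₀ hk1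
      nlinarith
    have b2 : (k:ℝ)^2 + 1 ≤ 2 * (k:ℝ)^2 := by nlinarith
    calc _ ≤ ((Λ+1) * (k:ℝ)^3) * ((2 * (k:ℝ)^2) * (2 * (k:ℝ)^2)) := by gcongr
      _ = _ := by ring
  have hTne : T.Nonempty := ⟨(0,0,0), by simp [hT]⟩
  have hTpos : (0:ℝ) < T.card := by exact_mod_cast hTne.card_pos
  obtain ⟨c, hcT, hc⟩ := Finset.exists_le_sum_fiber_of_maps_to_of_nsmul_le_sum (b := 1 / (T.card:ℝ)) hmaps hTne
    (w := fun w => (2 / (ca w : ℝ)^2) ^ (0.983 : ℝ)) (by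
      rw [nsmul_eq_mul, mul_one_div_cancel hTpos.ne']; exact h1)
  set B := (words A k).filter (fun w => f w = c) with hB
  have hmB : ∀ w ∈ B, w ∈ words A k ∧ f w = c := fun w hw => by simpa [hB] using hw
  set W : ℝ := 2 * exp (((c.1:ℝ) + 1) / (k:ℝ)^2) with hW
  have hexp3 : exp (1/(k:ℝ)^2) ≤ 3 := by
    have : 1/(k:ℝ)^2 ≤ 1 := by rw [div_le_one hk0]; nlinarith
    calc _ ≤ exp 1 := Real.exp_le_exp.2 this
      _ ≤ 3 := by have := Real.exp_one_lt_d9; linarith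
  have hca : ∀ w ∈ B, exp ((c.1:ℝ) / (k:ℝ)^2) ≤ ca w ∧ (ca w : ℝ) ≤ exp (((c.1:ℝ) + 1) / (k:ℝ)^2) := by
    intro w hw
    obtain ⟨hw1, hw2⟩ := hmB w hw
    have e : ⌊(k:ℝ)^2 * Real.log (ca w)⌋₊ = c.1 := congrArg Prod.fst hw2
    have hcp := ca_pos (pw_words hpos hw1)
    have hl := hlog w hw1
    have g1 := Nat.floor_le (show 0 ≤ (k:ℝ)^2 * Real.log (ca w) by nlinarith)
    have g2 := (Nat.lt_floor_add_one ((k:ℝ)^2 * Real.log (ca w))).le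
    rw [e] at g1 g2
    constructor
    · rw [← Real.le_log_iff_exp_le hcp, div_le_iff₀ hk0]; linarith
    · rw [← Real.log_le_iff_le_exp hcp, le_div_iff₀ hk0]; linarith
  have hsplit : exp (((c.1:ℝ) + 1) / (k:ℝ)^2) = exp (1/(k:ℝ)^2) * exp ((c.1:ℝ) / (k:ℝ)^2) := by
    rw [← Real.exp_add]; congr 1; ring
  have hE0 := Real.exp_pos ((c.1:ℝ) / (k:ℝ)^2)
  have hW0 : 0 < W := by positivity
  have hlo6 : ∀ w ∈ B, W ≤ 6 * ca w := by
    intro w hw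
    have := (hca w hw).1
    rw [hW, hsplit]; nlinarith
  have hne : B.Nonempty := by
    rw [Finset.nonempty_iff_ne_empty]
    intro h0
    rw [h0] at hc
    rw [Finset.sum_empty] at hc
    have : (0:ℝ) < 1 / (T.card:ℝ) := by positivity
    linarith
  obtain ⟨w0, hw0⟩ := hne
  have hge : ∀ w ∈ B, (2:ℝ)^(k/2) ≤ ca w := by
    intro w hw
    have hw1 := (hmB w hw).1
    have := ca_ge_pow (pw_words hpos hw1)
    rw [(mem_words.1 hw1).1] at this
    exact_mod_cast this
  have hWge : (2:ℝ)^(k/2) ≤ W := by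
    have := hge w0 hw0
    have h3 := (hca w0 hw0).2
    have : 0 < exp (((c.1:ℝ) + 1) / (k:ℝ)^2) := Real.exp_pos _
    rw [hW]; linarith
  have hfl : ∀ x y : ℝ, 0 ≤ x → 0 ≤ y → ⌊(k:ℝ)^2 * x⌋₊ = ⌊(k:ℝ)^2 * y⌋₊ → |x - y| ≤ 1/(k:ℝ)^2 := by
    intro x y hx hy h
    have g1 := Nat.floor_le (show 0 ≤ (k:ℝ)^2 * x by positivity)
    have g2 := (Nat.lt_floor_add_one ((k:ℝ)^2 * x)).le
    have g3 := Nat.floor_le (show 0 ≤ (k:ℝ)^2 * y by positivity)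
    have g4 := (Nat.lt_floor_add_one ((k:ℝ)^2 * y)).le
    rw [h] at g1 g2
    rw [le_div_iff₀ hk0]
    have : |x - y| * (k:ℝ)^2 = |(k:ℝ)^2 * x - (k:ℝ)^2 * y| := by
      rw [← mul_sub, abs_mul, abs_of_pos hk0, mul_comm]
    rw [this, abs_le]; constructor <;> linarith
  have hW1 : 1 ≤ W := le_trans (one_le_pow₀ (by norm_num)) hWge
  refine ⟨B, W, ⟨Finset.filter_subset _ _, ?_, ?_, ?_, ?_, ?_, ?_, hWge, ?_, ?_⟩⟩
  · intro w hw w' hw'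
    have e0 := Real.exp_pos (1/(k:ℝ)^2)
    calc (ca w : ℝ) ≤ _ := (hca w hw).2
      _ = _ := hsplit
      _ ≤ _ := mul_le_mul_of_nonneg_left (hca w' hw').1 e0.le
  · intro w hw w' hw'
    obtain ⟨a1, a2⟩ := hmB w hw
    obtain ⟨b1, b2⟩ := hmB w' hw'
    refine hfl _ _ (yy_mem (pw_words hpos a1)).1 (yy_mem (pw_words hpos b1)).1 ?_
    have := a2.trans b2.symm
    simp only [hf, Prod.mk.injEq] at this
    exact this.2.1
  · intro w hw w' hw'
    obtain ⟨a1, a2⟩ := hmB w hw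
    obtain ⟨b1, b2⟩ := hmB w' hw'
    refine hfl _ _ (zz_mem (pw_words hpos a1)).1 (zz_mem (pw_words hpos b1)).1 ?_
    have := a2.trans b2.symm
    simp only [hf, Prod.mk.injEq] at this
    exact this.2.2
  · intro w hw
    have := (hca w hw).2
    rw [hW]; linarith
  · intro w hw
    have := hlo6 w hw
    have g : 6 ≤ W ^ (0.001:ℝ) := h4.trans (Real.rpow_le_rpow (by positivity) hWge (by norm_num))
    have e : W ^ (0.999:ℝ) * W ^ (0.001:ℝ) = W := by
      rw [← Real.rpow_add hW0]; norm_num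
    have : 0 < W ^ (0.999:ℝ) := by positivity
    nlinarith
  · -- cardinality
    have t1 : ∀ w ∈ B, (2 / (ca w : ℝ)^2) ^ (0.983 : ℝ) ≤ 72 * W ^ (-(1.966:ℝ)) := by
      intro w hw
      have q1 := hlo6 w hw
      have q2 : (0:ℝ) < ca w := by linarith
      have q3 : 2 / (ca w : ℝ)^2 ≤ 72 * W ^ (-(2:ℝ)) := by
        rw [Real.rpow_neg hW0.le, ← div_eq_mul_inv, div_le_div_iff₀ (by positivity) (by positivity)]
        rw [Real.rpow_two]
        nlinarith
      calc (2 / (ca w : ℝ)^2) ^ (0.983 : ℝ) ≤ (72 * W ^ (-(2:ℝ))) ^ (0.983 : ℝ) :=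
            Real.rpow_le_rpow (by positivity) q3 (by norm_num)
        _ = (72:ℝ)^(0.983:ℝ) * W ^ (-(1.966:ℝ)) := by
            rw [Real.mul_rpow (by norm_num) (by positivity), ← Real.rpow_mul hW0.le]; norm_num
        _ ≤ 72 ^ (1:ℝ) * W ^ (-(1.966:ℝ)) := by
            gcongr
            · norm_num
            · norm_num
        _ = _ := by rw [Real.rpow_one]
    have t2 := hc.trans (Finset.sum_le_card_nsmul B _ _ t1)
    rw [nsmul_eq_mul, div_le_iff₀ hTpos] at t2
    have t3 : W ^ (-(1.966:ℝ)) = (W ^ (1.96:ℝ))⁻¹ * (W ^ (0.006:ℝ))⁻¹ := by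
      rw [← Real.rpow_neg hW0.le, ← Real.rpow_neg hW0.le, ← Real.rpow_add hW0]; norm_num
    have t4 : 72 * (T.card:ℝ) ≤ W ^ (0.006:ℝ) := by
      have : ((2:ℝ)^(k/2)) ^ (0.006:ℝ) ≤ W ^ (0.006:ℝ) := Real.rpow_le_rpow (by positivity) hWge (by norm_num)
      nlinarith
    have p1 : 0 < W ^ (1.96:ℝ) := by positivity
    have p2 : 0 < W ^ (0.006:ℝ) := by positivity
    rw [t3] at t2
    have t5 : W ^ (1.96:ℝ) * W ^ (0.006:ℝ) ≤ (B.card:ℝ) * (72 * T.card) := by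
      have := mul_le_mul_of_nonneg_left t2 (mul_pos p1 p2).le
      calc _ = W ^ (1.96:ℝ) * W ^ (0.006:ℝ) * 1 := by ring
        _ ≤ _ := this
        _ = (B.card:ℝ) * (72 * T.card) * ((W ^ (1.96:ℝ) * (W ^ (1.96:ℝ))⁻¹) * (W ^ (0.006:ℝ) * (W ^ (0.006:ℝ))⁻¹)) := by ring
        _ = _ := by rw [mul_inv_cancel₀ p1.ne', mul_inv_cancel₀ p2.ne']; ring
    have t6 : W ^ (1.96:ℝ) * W ^ (0.006:ℝ) ≤ (B.card:ℝ) * W ^ (0.006:ℝ) :=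
      t5.trans (mul_le_mul_of_nonneg_left t4 (by positivity))
    exact le_of_mul_le_mul_right t6 p2
  · have q := hlo6 w0 hw0
    have hw1 := (hmB w0 hw0).1
    have hm := mem_words.1 hw1
    have a2 := ca_le_pow (pw_words hpos hw1) (fun x hx => hK x (hm.2 x hx))
    rw [hm.1] at a2
    have a2 : (ca w0 : ℝ) ≤ ((K:ℝ)+1)^k := by exact_mod_cast a2
    linarith
  · intro w hw
    exact h3.trans (hge w hw)
end

section
def cat (U V : Finset (List ℕ)) : Finset (List ℕ) := (U ×ˢ V).image (fun p => p.1 ++ p.2)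

lemma mem_cat {U V : Finset (List ℕ)} {w : List ℕ} : w ∈ cat U V ↔ ∃ u ∈ U, ∃ v ∈ V, u ++ v = w := by
  simp [cat, and_assoc]

lemma cat_inj {U V : Finset (List ℕ)} {a : ℕ} (hU : ∀ u ∈ U, u.length = a) :
    Set.InjOn (fun p : List ℕ × List ℕ => p.1 ++ p.2) ((U ×ˢ V : Finset _) : Set (List ℕ × List ℕ)) := by
  rintro ⟨u, v⟩ h ⟨u', v'⟩ h' e
  simp only [Finset.coe_product, Set.mem_prod, Finset.mem_coe] at h h'
  have := List.append_inj e ((hU u h.1).trans (hU u' h'.1).symm)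
  exact Prod.ext this.1 this.2

lemma card_cat {U V : Finset (List ℕ)} {a : ℕ} (hU : ∀ u ∈ U, u.length = a) :
    (cat U V).card = U.card * V.card := by
  rw [cat, Finset.card_image_of_injOn (cat_inj hU), Finset.card_product]

lemma sum_cat {U V : Finset (List ℕ)} {a : ℕ} (hU : ∀ u ∈ U, u.length = a) {M : Type*} [AddCommMonoid M]
    (f : List ℕ → M) : ∑ w ∈ cat U V, f w = ∑ u ∈ U, ∑ v ∈ V, f (u ++ v) := by
  rw [cat, Finset.sum_image (cat_inj hU), Finset.sum_product]

lemma cat_assoc (U V Z : Finset (List ℕ)) : cat (cat U V) Z = cat U (cat V Z) := by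
  ext w
  simp only [mem_cat]
  constructor
  · rintro ⟨_, ⟨u, hu, v, hv, rfl⟩, z, hz, rfl⟩
    exact ⟨u, hu, _, ⟨v, hv, z, hz, rfl⟩, by simp⟩
  · rintro ⟨u, hu, _, ⟨v, hv, z, hz, rfl⟩, rfl⟩
    exact ⟨_, ⟨u, hu, v, hv, rfl⟩, z, hz, by simp⟩

def rv (U : Finset (List ℕ)) : Finset (List ℕ) := U.image List.reverse

lemma mem_rv {U : Finset (List ℕ)} {w : List ℕ} : w ∈ rv U ↔ ∃ u ∈ U, u.reverse = w := by simp [rv]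
lemma card_rv (U : Finset (List ℕ)) : (rv U).card = U.card :=
  Finset.card_image_of_injective _ List.reverse_injective
lemma rv_cat (U V : Finset (List ℕ)) : rv (cat U V) = cat (rv V) (rv U) := by
  ext w
  simp only [mem_cat, mem_rv]
  constructor
  · rintro ⟨_, ⟨u, hu, v, hv, rfl⟩, rfl⟩
    exact ⟨_, ⟨v, hv, rfl⟩, _, ⟨u, hu, rfl⟩, by simp⟩
  · rintro ⟨_, ⟨v, hv, rfl⟩, _, ⟨u, hu, rfl⟩, rfl⟩
    exact ⟨_, ⟨u, hu, v, hv, rfl⟩, by simp⟩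

def PP (B : ℕ → Finset (List ℕ)) (i : ℕ) : ℕ → Finset (List ℕ)
  | 0 => {[]}
  | n + 1 => cat (PP B i n) (B (i + n))

def Wq (W : ℕ → ℝ) (i n : ℕ) : ℝ := ∏ j ∈ Finset.range n, W (i + j)

lemma Wq_succ (W : ℕ → ℝ) (i n : ℕ) : Wq W i (n+1) = Wq W i n * W (i + n) := by
  rw [Wq, Finset.prod_range_succ, ← Wq]

lemma Wq_add (W : ℕ → ℝ) (i m n : ℕ) : Wq W i (m+n) = Wq W i m * Wq W (i+m) n := by
  rw [Wq, Finset.prod_range_add, ← Wq]; congr 1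
  rw [Wq]; refine Finset.prod_congr rfl fun j _ => by rw [add_assoc]

lemma PP_add (B : ℕ → Finset (List ℕ)) (i m n : ℕ) : PP B i (m + n) = cat (PP B i m) (PP B (i+m) n) := by
  induction n with
  | zero =>
    ext w; simp [PP, mem_cat]
  | succ n ih =>
    rw [← add_assoc, PP, ih, cat_assoc, PP, add_assoc i m n]

structure Chn (A : Finset ℕ) (K k0 : ℕ) (B : ℕ → Finset (List ℕ)) (W : ℕ → ℝ) : Prop where
  pos : ∀ a ∈ A, 0 < a
  k4 : 4 ≤ k0
  blk : ∀ i, Blk A K (k0 + i) (B i) (W i)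

lemma exists_chn {A : Finset ℕ} (hpos : ∀ a ∈ A, 0 < a) {K : ℕ} (hK : ∀ a ∈ A, a ≤ K)
    (hδ : 1 - 5/312 < hdim A) : ∃ k0 B W, Chn A K k0 B W := by
  obtain ⟨k0, h⟩ := eventually_atTop.1 ((blocks hpos hK hδ).and (eventually_ge_atTop 4))
  choose B W hBW using fun i : ℕ => (h (k0 + i) (by omega)).1
  exact ⟨k0, B, W, hpos, (h k0 le_rfl).2, hBW⟩

section
variable {A : Finset ℕ} {K k0 : ℕ} {B : ℕ → Finset (List ℕ)} {W : ℕ → ℝ}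

lemma Chn.W1 (h : Chn A K k0 B W) (i : ℕ) : 1 ≤ W i :=
  le_trans (one_le_pow₀ (by norm_num)) (h.blk i).W_lo

lemma Chn.Wq1 (h : Chn A K k0 B W) (i n : ℕ) : 1 ≤ Wq W i n := by
  induction n with
  | zero => simp [Wq]
  | succ n ih => rw [Wq_succ]; have := h.W1 (i+n); nlinarith

lemma Chn.Wq_mono (h : Chn A K k0 B W) (i : ℕ) : Monotone (Wq W i) := by
  refine monotone_nat_of_le_succ fun n => ?_
  rw [Wq_succ]; have := h.W1 (i+n); have := h.Wq1 i n; nlinarith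

lemma Chn.let (h : Chn A K k0 B W) (i n : ℕ) : ∀ w ∈ PP B i n, ∀ x ∈ w, x ∈ A := by
  induction n with
  | zero => simp [PP]
  | succ n ih =>
    intro w hw
    obtain ⟨u, hu, v, hv, rfl⟩ := mem_cat.1 hw
    intro x hx
    rcases List.mem_append.1 hx with hx | hx
    · exact ih u hu x hx
    · exact (mem_words.1 ((h.blk _).sub hv)).2 x hx

lemma Chn.pw (h : Chn A K k0 B W) {i n : ℕ} {w : List ℕ} (hw : w ∈ PP B i n) : Pw w :=
  fun x hx => h.pos x (h.let i n w hw x hx)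

lemma Chn.pwB (h : Chn A K k0 B W) {i : ℕ} {w : List ℕ} (hw : w ∈ B i) : Pw w :=
  pw_words h.pos ((h.blk i).sub hw)

lemma Chn.len (h : Chn A K k0 B W) (i n : ℕ) :
    ∀ w ∈ PP B i n, w.length = ∑ j ∈ Finset.range n, (k0 + (i + j)) := by
  induction n with
  | zero => simp [PP]
  | succ n ih =>
    intro w hw
    obtain ⟨u, hu, v, hv, rfl⟩ := mem_cat.1 hw
    rw [List.length_append, ih u hu, (mem_words.1 ((h.blk _).sub hv)).1, Finset.sum_range_succ]

lemma Chn.hi (h : Chn A K k0 B W) (i n : ℕ) : ∀ w ∈ PP B i n, (ca w : ℝ) ≤ Wq W i n := by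
  induction n with
  | zero => simp [PP, Wq]
  | succ n ih =>
    intro w hw
    obtain ⟨u, hu, v, hv, rfl⟩ := mem_cat.1 hw
    have h1 : (ca (u ++ v) : ℝ) ≤ 2 * (ca u * ca v) := by exact_mod_cast ca_le_mul (h.pw hu) (h.pwB hv)
    have h2 := ih u hu
    have h3 := (h.blk _).hi v hv
    have h4 := ca_pos (h.pw hu)
    have h5 := ca_pos (h.pwB hv)
    rw [Wq_succ]
    nlinarith

lemma Chn.lo (h : Chn A K k0 B W) (i n : ℕ) : ∀ w ∈ PP B i n, (Wq W i n) ^ (0.999:ℝ) ≤ ca w := by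
  induction n with
  | zero => simp [PP, Wq]
  | succ n ih =>
    intro w hw
    obtain ⟨u, hu, v, hv, rfl⟩ := mem_cat.1 hw
    have h1 : (ca u : ℝ) * ca v ≤ ca (u ++ v) := by exact_mod_cast ca_mul_le u v
    have h2 := ih u hu
    have h3 := (h.blk _).lo v hv
    have h4 := h.W1 (i+n)
    have h5 := h.Wq1 i n
    rw [Wq_succ, Real.mul_rpow (by linarith) (by linarith)]
    refine le_trans (mul_le_mul h2 h3 (by positivity) (ca_pos (h.pw hu)).le) h1

lemma Chn.card (h : Chn A K k0 B W) (i n : ℕ) : (Wq W i n) ^ (1.96:ℝ) ≤ (PP B i n).card := by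
  induction n with
  | zero => simp [PP, Wq]
  | succ n ih =>
    have h4 := h.W1 (i+n)
    have h5 := h.Wq1 i n
    rw [Wq_succ, Real.mul_rpow (by linarith) (by linarith), PP, card_cat (h.len i n)]
    push_cast
    exact mul_le_mul ih (h.blk _).card (by positivity) (by positivity)

lemma spread_aux {κ : ℝ} (hκ4 : 4 ≤ κ) :
    (10 - 5/(κ-2)) + 1/κ^2 + (3 / (κ-1)^2 + 1/κ^2) ≤ 10 - 5/(κ-1) := by
  have t1 : 1/κ^2 ≤ 1/(κ-1)^2 := by
    apply one_div_le_one_div_of_le (by nlinarith); nlinarith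
  have t2 : 5/(κ-2) - 5/(κ-1) = 5 / ((κ-2)*(κ-1)) := by
    rw [div_sub_div _ _ (by linarith) (by linarith)]; congr 1; ring
  have t3 : 5 / (κ-1)^2 ≤ 5 / ((κ-2)*(κ-1)) := by
    apply div_le_div_of_nonneg_left (by norm_num) (by nlinarith) (by nlinarith)
  have t4 : 5/(κ-1)^2 = 3/(κ-1)^2 + 1/(κ-1)^2 + 1/(κ-1)^2 := by ring
  linarith

set_option maxHeartbeats 1000000 in
lemma Chn.spread0 (h : Chn A K k0 B W) (i n : ℕ) : ∀ w ∈ PP B i n, ∀ w' ∈ PP B i n,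
    |yy w - yy w'| ≤ 3 / ((k0:ℝ) + i + n - 1)^2 ∧
    (ca w : ℝ) ≤ exp (10 - 5 / ((k0:ℝ) + i + n - 2)) * ca w' := by
  have hk4 : (4:ℝ) ≤ k0 := by exact_mod_cast h.k4
  induction n with
  | zero =>
    intro w hw w' hw'
    simp only [PP, Finset.mem_singleton] at hw hw'
    subst hw; subst hw'
    refine ⟨by simp; positivity, ?_⟩
    have : 5 / ((k0:ℝ) + i + (0:ℕ) - 2) ≤ 5 / 1 := by
      apply div_le_div_of_nonneg_left <;> norm_num
      have : (0:ℝ) ≤ i := by positivity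
      linarith
    have := Real.add_one_le_exp (10 - 5 / ((k0:ℝ) + i + (0:ℕ) - 2))
    simp only [ca_nil]; push_cast at *; linarith
  | succ n ih =>
    intro w hw w' hw'
    obtain ⟨u, hu, v, hv, rfl⟩ := mem_cat.1 hw
    obtain ⟨u', hu', v', hv', rfl⟩ := mem_cat.1 hw'
    obtain ⟨ih1, ih2⟩ := ih u hu u' hu'
    have hb := h.blk (i+n)
    have i0 : (0:ℝ) ≤ i := by positivity
    have n0 : (0:ℝ) ≤ n := by positivity
    have hkk : (((k0 + (i+n) : ℕ)) : ℝ) = (k0:ℝ) + i + n := by push_cast; ring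
    set κ : ℝ := (k0:ℝ) + i + n with hκ
    have hκ4 : 4 ≤ κ := by linarith
    have hr := hb.ratio v hv v' hv'
    have hy := hb.yd v hv v' hv'
    have hz := hb.zd v hv v' hv'
    have hs := hb.small v hv
    have hs' := hb.small v' hv'
    rw [hkk] at hr hy hz hs hs'
    have pu := h.pw hu
    have pu' := h.pw hu'
    have pv := h.pwB hv
    have pv' := h.pwB hv'
    constructor
    · have c1 := yy_contr pu pv
      have c2 := yy_contr pu' pv'
      have d1 : 1 / (ca v : ℝ)^2 ≤ 1 / κ^2 := by
        apply one_div_le_one_div_of_le (by positivity); gcongr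
      have d2 : 1 / (ca v' : ℝ)^2 ≤ 1 / κ^2 := by
        apply one_div_le_one_div_of_le (by positivity); gcongr
      have e : (k0:ℝ) + i + ((n+1:ℕ):ℝ) - 1 = κ := by rw [hκ]; push_cast; ring
      rw [e]
      have e3 : 3 / κ^2 = 1/κ^2 + 1/κ^2 + 1/κ^2 := by ring
      rw [e3]
      rw [abs_le] at *
      constructor <;> linarith
    · rw [ca_append_real pu pv, ca_append_real pu' pv']
      have my := yy_mem pu
      have my' := yy_mem pu'
      have mz := zz_mem pv
      have mz' := zz_mem pv'
      have e : (k0:ℝ) + i + ((n+1:ℕ):ℝ) - 2 = κ - 1 := by rw [hκ]; push_cast; ring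
      rw [e]
      set δ : ℝ := 3 / (κ-1)^2 + 1/κ^2 with hδ
      clear_value δ
      have g1 : 1 + yy u * zz v ≤ exp δ * (1 + yy u' * zz v') := by
        have a1 : yy u * zz v - yy u' * zz v' ≤ δ := by
          have b1 : yy u * zz v - yy u' * zz v' = (yy u - yy u') * zz v + yy u' * (zz v - zz v') := by ring
          have b2 : (yy u - yy u') * zz v ≤ |yy u - yy u'| :=
            le_trans (mul_le_mul_of_nonneg_right (le_abs_self _) mz.1)
              (mul_le_of_le_one_right (abs_nonneg _) mz.2)
          have b3 : yy u' * (zz v - zz v') ≤ |zz v - zz v'| :=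
            le_trans (mul_le_mul_of_nonneg_left (le_abs_self _) my'.1)
              (mul_le_of_le_one_left (abs_nonneg _) my'.2)
          rw [b1]; linarith
        have a2 := Real.add_one_le_exp δ
        have a3 : 0 ≤ yy u' * zz v' := mul_nonneg my'.1 mz'.1
        have a4 : 0 ≤ δ := by rw [hδ]; positivity
        nlinarith
      have p1 := ca_pos pu
      have p2 := ca_pos pu'
      have p3 := ca_pos pv
      have p4 := ca_pos pv'
      have q1 : 0 ≤ 1 + yy u * zz v := by nlinarith [mul_nonneg my.1 mz.1]
      calc (ca u : ℝ) * ca v * (1 + yy u * zz v)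
          ≤ (exp (10 - 5/(κ-2)) * ca u') * (exp (1/κ^2) * ca v') * (exp δ * (1 + yy u' * zz v')) := by
            gcongr
        _ = exp ((10 - 5/(κ-2)) + 1/κ^2 + δ) * (ca u' * ca v' * (1 + yy u' * zz v')) := by
            rw [Real.exp_add, Real.exp_add]; ring
        _ ≤ exp (10 - 5/(κ-1)) * (ca u' * ca v' * (1 + yy u' * zz v')) := by
            have a3 : 0 ≤ yy u' * zz v' := mul_nonneg my'.1 mz'.1
            have := spread_aux hκ4
            rw [← hδ] at this
            gcongr

lemma Chn.spread (h : Chn A K k0 B W) {i n : ℕ} {w w' : List ℕ} (hw : w ∈ PP B i n) (hw' : w' ∈ PP B i n) :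
    (ca w : ℝ) ≤ exp 10 * ca w' := by
  refine ((h.spread0 i n w hw w' hw').2).trans ?_
  have hk4 : (4:ℝ) ≤ k0 := by exact_mod_cast h.k4
  have := (ca_pos (h.pw hw')).le
  have i0 : (0:ℝ) ≤ i := by positivity
  have n0 : (0:ℝ) ≤ n := by positivity
  have : 0 ≤ 5 / ((k0:ℝ) + i + n - 2) := div_nonneg (by norm_num) (by linarith)
  gcongr
  linarith

lemma Chn.Wq_ge (h : Chn A K k0 B W) (n : ℕ) : (2:ℝ) ^ ((n:ℝ)^2/4) ≤ Wq W 0 n := by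
  induction n with
  | zero => simp [Wq]
  | succ n ih =>
    rw [Wq_succ]
    have h1 := (h.blk (0+n)).W_lo
    have h2 := h.k4
    have h3 : (2:ℝ) ^ ((2*(n:ℝ)+1)/4) ≤ W (0+n) := by
      refine le_trans ?_ h1
      rw [← Real.rpow_natCast]
      apply Real.rpow_le_rpow_of_exponent_le (by norm_num)
      rw [div_le_iff₀ (by norm_num)]
      have : 2 * n + 1 ≤ ((k0 + (0+n))/2) * 4 := by omega
      exact_mod_cast this
    have e : (((n+1:ℕ):ℝ))^2/4 = (n:ℝ)^2/4 + (2*(n:ℝ)+1)/4 := by push_cast; ring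
    rw [e, Real.rpow_add (by norm_num)]
    exact mul_le_mul ih h3 (by positivity) (by have := h.Wq1 0 n; linarith)

lemma Chn.W_le (h : Chn A K k0 B W) : ∃ C : ℝ, 1 ≤ C ∧ ∀ n, W n ≤ C * (Wq W 0 n) ^ (0.001:ℝ) := by
  set b : ℝ := Real.log ((K:ℝ)+1) with hb
  set c : ℝ := Real.log 2 * (0.001/4) with hc
  have hc0 : 0 < c := by have := Real.log_pos (show (1:ℝ) < 2 by norm_num); positivity
  have hb0 : 0 ≤ b := Real.log_nonneg (by simp)
  have key : ∀ n, W n ≤ exp (Real.log 6 + k0 * b + b^2/(4*c)) * (Wq W 0 n) ^ (0.001:ℝ) := by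
    intro n
    have h1 := (h.blk n).W_hi
    have hK : ((K:ℝ)+1) = exp b := by rw [hb, Real.exp_log (by positivity)]
    have h6 : (6:ℝ) = exp (Real.log 6) := by rw [Real.exp_log (by norm_num)]
    have h2 : (6:ℝ) * ((K:ℝ)+1)^(k0+n) = exp (Real.log 6 + k0 * b + n * b) := by
      rw [Real.exp_add, Real.exp_add, Real.exp_nat_mul, Real.exp_nat_mul, ← hK, ← h6, pow_add]; ring
    have h3 : exp (c * (n:ℝ)^2) ≤ (Wq W 0 n) ^ (0.001:ℝ) := by
      refine le_trans (le_of_eq ?_) (Real.rpow_le_rpow (by positivity) (h.Wq_ge n) (by norm_num))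
      rw [← Real.rpow_mul (by norm_num), Real.rpow_def_of_pos (by norm_num)]
      congr 1; rw [hc]; ring
    rw [h2] at h1
    refine h1.trans (le_trans ?_ (mul_le_mul_of_nonneg_left h3 (Real.exp_pos _).le))
    rw [← Real.exp_add, Real.exp_le_exp]
    have : 0 ≤ (2 * c * n - b)^2 / (4*c) := by positivity
    have e : (2 * c * n - b)^2 / (4*c) = c * (n:ℝ)^2 - n * b + b^2/(4*c) := by
      field_simp; ring
    linarith
  refine ⟨_, ?_, key⟩
  rw [← Real.exp_zero, Real.exp_le_exp]
  have : 0 ≤ Real.log 6 := Real.log_nonneg (by norm_num)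
  positivity

lemma Chn.unb (h : Chn A K k0 B W) (X : ℝ) : ∃ n, X ≤ Wq W 0 n := by
  obtain ⟨n, hn⟩ := exists_nat_ge X
  refine ⟨n * 4, hn.trans (le_trans ?_ (h.Wq_ge (n*4)))⟩
  calc (n:ℝ) ≤ (2:ℝ)^(n:ℝ) := by
        rw [Real.rpow_natCast]; exact_mod_cast Nat.lt_two_pow_self.le
    _ ≤ _ := by
      apply Real.rpow_le_rpow_of_exponent_le (by norm_num)
      push_cast
      nlinarith [(show (n:ℝ) ≤ (n:ℝ)^2 by
        rcases Nat.eq_zero_or_pos n with h | h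
        · simp [h]
        · have : (1:ℝ) ≤ n := by exact_mod_cast h
          nlinarith)]

lemma Chn.scale (h : Chn A K k0 B W) : ∃ C : ℝ, 1 ≤ C ∧ ∀ X : ℝ, 1 ≤ X → ∃ n, X ≤ Wq W 0 n ∧
    Wq W 0 n ≤ C * X ^ (1.001:ℝ) ∧ ∀ m, X ≤ Wq W 0 m → n ≤ m := by
  obtain ⟨C, hC1, hC⟩ := h.W_le
  refine ⟨C, hC1, fun X hX => ?_⟩
  classical
  have hex := h.unb X
  refine ⟨Nat.find hex, Nat.find_spec hex, ?_, fun m hm => Nat.find_min' hex hm⟩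
  have hX1 : 1 ≤ X ^ (1.001:ℝ) := Real.one_le_rpow hX (by norm_num)
  cases hn : Nat.find hex with
  | zero => simp only [Wq, Finset.range_zero, Finset.prod_empty]; nlinarith
  | succ n =>
    have hlt : Wq W 0 n < X := by
      by_contra hc
      have := Nat.find_min' hex (not_lt.1 hc)
      omega
    rw [Wq_succ, zero_add]
    have h1 := h.Wq1 0 n
    calc Wq W 0 n * W n ≤ X * (C * X ^ (0.001:ℝ)) := by
          have := hC n
          have h3 : (Wq W 0 n) ^ (0.001:ℝ) ≤ X ^ (0.001:ℝ) := Real.rpow_le_rpow (by linarith) hlt.le (by norm_num)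
          have h2 := h.W1 n
          apply mul_le_mul hlt.le (this.trans (by gcongr)) (by linarith) (by linarith)
      _ = C * (X ^ (1:ℝ) * X ^ (0.001:ℝ)) := by rw [Real.rpow_one]; ring
      _ = _ := by rw [← Real.rpow_add (by linarith)]; norm_num
end
end

section
def ee {R : ℕ} [NeZero R] : AddChar (ZMod R) ℂ := ZMod.stdAddChar

lemma parseval1 {R : ℕ} [NeZero R] (g : ZMod R → ℂ) :
    ∑ u : ZMod R, ‖∑ z, g z * ee (u * z)‖^2 = R * ∑ z, ‖g z‖^2 := by
  have h : (((∑ u : ZMod R, ‖∑ z, g z * ee (u * z)‖^2 : ℝ)) : ℂ) = ((R * ∑ z, ‖g z‖^2 : ℝ) : ℂ) := by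
    push_cast
    simp_rw [← Complex.conj_mul', map_sum, Finset.sum_mul_sum, map_mul]
    rw [Finset.sum_comm, Finset.mul_sum]
    refine Finset.sum_congr rfl fun z _ => ?_
    rw [Finset.sum_comm]
    have : ∀ w : ZMod R, ∑ u : ZMod R, (starRingEnd ℂ) (g z) * (starRingEnd ℂ) (ee (u * z)) * (g w * ee (u * w))
        = if w = z then R * ((starRingEnd ℂ) (g z) * g z) else 0 := by
      intro w
      have h1 : ∀ u : ZMod R, (starRingEnd ℂ) (g z) * (starRingEnd ℂ) (ee (u * z)) * (g w * ee (u * w))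
          = ((starRingEnd ℂ) (g z) * g w) * ee (u * (w - z)) := by
        intro u
        rw [← AddChar.map_neg_eq_conj, mul_sub, sub_eq_neg_add, AddChar.map_add_eq_mul]; ring
      simp_rw [h1]
      rw [← Finset.mul_sum, ee, AddChar.sum_mulShift _ (ZMod.isPrimitive_stdAddChar R)]
      by_cases hw : w = z
      · simp [hw]; ring
      · simp [hw, sub_eq_zero]
    simp_rw [this]
    simp
  exact_mod_cast h

lemma parseval2 {R : ℕ} [NeZero R] (g : ZMod R × ZMod R → ℂ) :
    ∑ u : ZMod R × ZMod R, ‖∑ z, g z * ee (u.1 * z.1 + u.2 * z.2)‖^2 = (R:ℝ)^2 * ∑ z, ‖g z‖^2 := by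
  rw [Fintype.sum_prod_type_right]
  have h1 : ∀ u2 : ZMod R, ∑ u1 : ZMod R, ‖∑ z : ZMod R × ZMod R, g z * ee (u1 * z.1 + u2 * z.2)‖^2
      = R * ∑ z1, ‖∑ z2, g (z1, z2) * ee (u2 * z2)‖^2 := by
    intro u2
    rw [← parseval1 (fun z1 => ∑ z2, g (z1, z2) * ee (u2 * z2))]
    refine Finset.sum_congr rfl fun u1 _ => ?_
    congr 2
    rw [Fintype.sum_prod_type]
    refine Finset.sum_congr rfl fun z1 _ => ?_
    rw [Finset.sum_mul]
    refine Finset.sum_congr rfl fun z2 _ => ?_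
    rw [AddChar.map_add_eq_mul]; ring
  simp only [h1]
  rw [← Finset.mul_sum, Finset.sum_comm]
  simp_rw [fun z1 => parseval1 (fun z2 => g (z1, z2))]
  rw [← Finset.mul_sum, Fintype.sum_prod_type]; ring

lemma parseval_fam {R : ℕ} [NeZero R] {σ : Type*} (S : Finset σ) (x : σ → ZMod R × ZMod R) (c : σ → ℂ) :
    ∑ u : ZMod R × ZMod R, ‖∑ s ∈ S, c s * ee (u.1 * (x s).1 + u.2 * (x s).2)‖^2
      = (R:ℝ)^2 * ∑ z, ‖∑ s ∈ S with x s = z, c s‖^2 := by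
  classical
  rw [← parseval2]
  refine Finset.sum_congr rfl fun u _ => ?_
  congr 2
  rw [← Finset.sum_fiberwise S x]
  refine Finset.sum_congr rfl fun z _ => ?_
  rw [Finset.sum_mul]
  refine Finset.sum_congr rfl fun s hs => ?_
  rw [(Finset.mem_filter.1 hs).2]

lemma geo_lower {R : ℕ} [NeZero R] {M H n : ℕ} (hn : n ≤ M) (hH : (H - 1) * (6 * M) ≤ R) :
    (H:ℝ) / 2 ≤ ‖∑ m ∈ Finset.range H, (ee ((n : ZMod R) * (m : ZMod R)) : ℂ)‖ := by
  have hR : (0:ℝ) < R := by exact_mod_cast Nat.pos_of_ne_zero (NeZero.ne R)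
  refine le_trans ?_ (Complex.re_le_norm _)
  rw [Complex.re_sum]
  have : ∀ m ∈ Finset.range H, (1:ℝ)/2 ≤ (ee ((n : ZMod R) * (m : ZMod R)) : ℂ).re := by
    intro m hm
    have e1 : ((n : ZMod R) * (m : ZMod R)) = (((n * m : ℕ) : ℤ) : ZMod R) := by push_cast; ring
    rw [e1, ee, ZMod.stdAddChar_coe]
    have e2 : (2 * (π:ℂ) * Complex.I * (((n * m : ℕ) : ℤ) : ℂ) / (R:ℂ)) = ((2 * π * ((n*m:ℕ):ℝ) / R : ℝ) : ℂ) * Complex.I := by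
      push_cast; ring
    rw [e2, Complex.exp_ofReal_mul_I_re, ← Real.cos_pi_div_three]
    have hm' : m ≤ H - 1 := by have := Finset.mem_range.1 hm; omega
    have h6 : 6 * (n * m) ≤ R := by
      calc 6 * (n * m) ≤ 6 * (M * (H-1)) := by gcongr
        _ = (H-1) * (6 * M) := by ring
        _ ≤ R := hH
    have h6' : 6 * ((n*m:ℕ):ℝ) ≤ R := by exact_mod_cast h6
    have hπ := Real.pi_pos
    apply Real.cos_le_cos_of_nonneg_of_le_pi
    · positivity
    · linarith
    · rw [div_le_iff₀ hR]; nlinarith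
  calc (H:ℝ)/2 = ∑ m ∈ Finset.range H, (1:ℝ)/2 := by simp; ring
    _ ≤ _ := Finset.sum_le_sum this

/-- large-sieve type inequality -/
lemma sieve {R : ℕ} [NeZero R] {ι σ : Type*} (U : Finset ι) (p : ι → ℕ × ℕ) {M H : ℕ}
    (hp : Set.InjOn p U) (hM : ∀ u ∈ U, (p u).1 ≤ M ∧ (p u).2 ≤ M) (hMR : M < R)
    (hH : (H - 1) * (6 * M) ≤ R) (hH0 : R ≤ 6 * M * H) (hH1 : 1 ≤ H)
    (Q : Finset σ) (q : σ → ZMod R × ZMod R) (c : σ → ℂ) {Bd : ℝ}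
    (hB : ∀ z : ZMod R × ZMod R, ((Q.filter fun t => ∃ m1 < H, ∃ m2 < H,
      (q t).1 + ((m1 : ℕ) : ZMod R) = z.1 ∧ (q t).2 + ((m2:ℕ) : ZMod R) = z.2).card : ℝ) ≤ Bd) :
    ∑ u ∈ U, ‖∑ t ∈ Q, c t * ee (((p u).1 : ZMod R) * (q t).1 + ((p u).2 : ZMod R) * (q t).2)‖^2
      ≤ 576 * (M:ℝ)^2 * Bd * ∑ t ∈ Q, ‖c t‖^2 := by
  classical
  set T : ZMod R × ZMod R → ℂ := fun u => ∑ t ∈ Q, c t * ee (u.1 * (q t).1 + u.2 * (q t).2) with hT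
  set F : ZMod R → ℂ := fun n => ∑ m ∈ Finset.range H, (ee (n * ((m:ℕ) : ZMod R)) : ℂ) with hF
  set S := Q ×ˢ (Finset.range H ×ˢ Finset.range H) with hS
  set x : σ × ℕ × ℕ → ZMod R × ZMod R := fun s => ((q s.1).1 + (s.2.1 : ZMod R), (q s.1).2 + (s.2.2 : ZMod R)) with hx
  have e1 : ∀ u : ZMod R × ZMod R, T u * (F u.1 * F u.2) = ∑ s ∈ S, c s.1 * ee (u.1 * (x s).1 + u.2 * (x s).2) := by
    intro u
    simp only [hT, hF, hS]
    rw [Finset.sum_mul_sum, ← Finset.sum_product', Finset.sum_mul_sum, ← Finset.sum_product']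
    refine Finset.sum_congr rfl fun s _ => ?_
    simp only [hx]
    have : u.1 * ((q s.1).1 + (s.2.1 : ZMod R)) + u.2 * ((q s.1).2 + (s.2.2 : ZMod R))
      = (u.1 * (q s.1).1 + u.2 * (q s.1).2) + (u.1 * (s.2.1 : ZMod R) + u.2 * (s.2.2 : ZMod R)) := by ring
    rw [this]; simp only [AddChar.map_add_eq_mul]; ring
  -- upper bound of the smoothed sum
  have hHR : H ≤ R ∨ M = 0 := by
    rcases Nat.eq_zero_or_pos M with h | h
    · exact Or.inr h
    · left
      have : H - 1 ≤ (H-1) * M := Nat.le_mul_of_pos_right _ h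
      nlinarith [Nat.sub_add_cancel hH1]
  have hHR : H ≤ R := by
    rcases hHR with h | h
    · exact h
    · rw [h] at hH0; simp at hH0; exact absurd hH0 (NeZero.ne R)
  have hcast : ∀ a < H, ∀ b < H, ((a:ℕ) : ZMod R) = ((b:ℕ) : ZMod R) → a = b := by
    intro a ha b hb hab
    rw [ZMod.natCast_eq_natCast_iff'] at hab
    rwa [Nat.mod_eq_of_lt (by omega), Nat.mod_eq_of_lt (by omega)] at hab
  have e2 : ∑ z, ‖∑ s ∈ S with x s = z, c s.1‖^2 ≤ Bd * ((H:ℝ)^2 * ∑ t ∈ Q, ‖c t‖^2) := by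
    have step : ∀ z, ‖∑ s ∈ S with x s = z, c s.1‖^2 ≤ Bd * ∑ s ∈ S with x s = z, ‖c s.1‖^2 := by
      intro z
      have a1 : ‖∑ s ∈ S with x s = z, c s.1‖^2 ≤ (∑ s ∈ S with x s = z, ‖c s.1‖)^2 := by
        gcongr; exact norm_sum_le _ _
      have a2 := sq_sum_le_card_mul_sum_sq (s := S.filter (fun s => x s = z)) (f := fun s => ‖c s.1‖)
      have a3 : ((S.filter (fun s => x s = z)).card : ℝ) ≤ Bd := by
        refine le_trans ?_ (hB z)
        norm_cast
        refine Finset.card_le_card_of_injOn (fun s => s.1) ?_ ?_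
        · rintro ⟨t, m1, m2⟩ hs
          simp only [hS, hx, Finset.coe_filter, Finset.mem_product, Finset.mem_range, Set.mem_ofPred_eq] at hs ⊢
          refine ⟨hs.1.1, m1, hs.1.2.1, m2, hs.1.2.2, ?_, ?_⟩
          · rw [← hs.2]
          · rw [← hs.2]
        · rintro ⟨t, m1, m2⟩ hs ⟨t', m1', m2'⟩ hs' h
          simp only [hS, hx, Finset.coe_filter, Finset.mem_product, Finset.mem_range, Set.mem_ofPred_eq] at hs hs' h
          subst h
          have := hs.2.trans hs'.2.symm
          simp only [Prod.mk.injEq, add_right_inj] at this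
          rw [hcast _ hs.1.2.1 _ hs'.1.2.1 this.1, hcast _ hs.1.2.2 _ hs'.1.2.2 this.2]
      exact a1.trans (a2.trans (mul_le_mul_of_nonneg_right a3 (Finset.sum_nonneg fun _ _ => by positivity)))
    calc _ ≤ ∑ z, Bd * ∑ s ∈ S with x s = z, ‖c s.1‖^2 := Finset.sum_le_sum fun z _ => step z
      _ = Bd * ∑ s ∈ S, ‖c s.1‖^2 := by rw [← Finset.mul_sum, Finset.sum_fiberwise]
      _ = _ := by
        rw [hS, Finset.sum_product]
        simp only [Finset.sum_const, Finset.card_product, Finset.card_range, nsmul_eq_mul]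
        rw [← Finset.mul_sum]; push_cast; ring
  have e3 : ∑ u : ZMod R × ZMod R, ‖T u * (F u.1 * F u.2)‖^2 ≤ (R:ℝ)^2 * (Bd * ((H:ℝ)^2 * ∑ t ∈ Q, ‖c t‖^2)) := by
    simp_rw [e1]
    rw [parseval_fam]
    gcongr
  -- lower bound
  have hH0' : (0:ℝ) < H := by exact_mod_cast hH1
  have e4 : (H:ℝ)^4/16 * ∑ u ∈ U, ‖T (((p u).1 : ZMod R), ((p u).2 : ZMod R))‖^2 ≤
      ∑ u : ZMod R × ZMod R, ‖T u * (F u.1 * F u.2)‖^2 := by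
    have hinj : Set.InjOn (fun u => (((p u).1 : ZMod R), ((p u).2 : ZMod R))) (U : Set ι) := by
      intro u hu v hv h
      simp only [Prod.mk.injEq] at h
      have a := hM u hu
      have b := hM v hv
      rw [ZMod.natCast_eq_natCast_iff', ZMod.natCast_eq_natCast_iff', Nat.mod_eq_of_lt (by omega),
        Nat.mod_eq_of_lt (by omega), Nat.mod_eq_of_lt (by omega), Nat.mod_eq_of_lt (by omega)] at h
      exact hp hu hv (Prod.ext h.1 h.2)
    calc _ ≤ ∑ u ∈ U, ‖T (((p u).1 : ZMod R), ((p u).2 : ZMod R)) * (F ((p u).1 : ZMod R) * F ((p u).2 : ZMod R))‖^2 := by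
          rw [Finset.mul_sum]
          refine Finset.sum_le_sum fun u hu => ?_
          rw [norm_mul, norm_mul, mul_pow, mul_pow]
          have f1 := geo_lower (R := R) (hM u hu).1 hH
          have f2 := geo_lower (R := R) (hM u hu).2 hH
          have g1 : ((H:ℝ)/2)^2 ≤ ‖F ((p u).1 : ZMod R)‖^2 := by gcongr
          have g2 : ((H:ℝ)/2)^2 ≤ ‖F ((p u).2 : ZMod R)‖^2 := by gcongr
          have g3 := mul_le_mul g1 g2 (by positivity) (by positivity)
          have : 0 ≤ ‖T (((p u).1 : ZMod R), ((p u).2 : ZMod R))‖^2 := by positivity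
          nlinarith
      _ = ∑ y ∈ U.image (fun u => (((p u).1 : ZMod R), ((p u).2 : ZMod R))), ‖T y * (F y.1 * F y.2)‖^2 := by
          rw [Finset.sum_image hinj]
      _ ≤ _ := Finset.sum_le_sum_of_subset_of_nonneg (Finset.subset_univ _) (fun _ _ _ => by positivity)
  have e5 := e4.trans e3
  have hBd0 : 0 ≤ Bd := le_trans (by positivity) (hB 0)
  have hR6 : (R:ℝ) ≤ 6 * M * H := by exact_mod_cast hH0
  set Z := ∑ t ∈ Q, ‖c t‖^2 with hZ
  have hZ0 : 0 ≤ Z := Finset.sum_nonneg fun _ _ => by positivity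
  have e6 : (H:ℝ)^4/16 * ∑ u ∈ U, ‖T (((p u).1 : ZMod R), ((p u).2 : ZMod R))‖^2
      ≤ (H:ℝ)^4/16 * (576 * (M:ℝ)^2 * Bd * Z) := by
    refine e5.trans ?_
    calc (R:ℝ)^2 * (Bd * ((H:ℝ)^2 * Z)) ≤ (6 * M * H)^2 * (Bd * ((H:ℝ)^2 * Z)) := by gcongr
      _ = _ := by ring
  exact le_of_mul_le_mul_left e6 (by positivity)

def SS (R : ℕ) [NeZero R] (Ω : Finset (List ℕ)) (k : ZMod R) : ℂ :=
  ∑ w ∈ Ω, ee (k * (ca w : ZMod R))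

lemma bilin {R : ℕ} [NeZero R] {U V : Finset (List ℕ)} {a : ℕ} (hU : ∀ u ∈ U, u.length = a)
    (hUp : ∀ u ∈ U, Pw u) {M H : ℕ} (hM : ∀ u ∈ U, ca u ≤ M) (hMR : M < R)
    (hH : (H - 1) * (6 * M) ≤ R) (hH0 : R ≤ 6 * M * H) (hH1 : 1 ≤ H)
    (Θ : Finset (ZMod R)) {Bd : ℝ}
    (hB : ∀ z : ZMod R × ZMod R, (((Θ ×ˢ V).filter fun t => ∃ m1 < H, ∃ m2 < H,
      t.1 * (ca t.2 : ZMod R) + ((m1 : ℕ) : ZMod R) = z.1 ∧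
      t.1 * (cc t.2 : ZMod R) + ((m2:ℕ) : ZMod R) = z.2).card : ℝ) ≤ Bd) :
    ∑ k ∈ Θ, ‖SS R (cat U V) k‖^2 ≤ 576 * (M:ℝ)^2 * U.card * V.card * Bd := by
  classical
  set p : List ℕ → ℕ × ℕ := fun u => ((ca u).toNat, (cb u).toNat) with hp
  have hpc : ∀ u, ((p u).1 : ℤ) = ca u ∧ ((p u).2 : ℤ) = cb u := fun u =>
    ⟨Int.toNat_of_nonneg (cnonneg u).1, Int.toNat_of_nonneg (cnonneg u).2.1⟩
  have hinj : Set.InjOn p (U : Set (List ℕ)) := by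
    intro u hu v hv h
    have h1 : ca u = ca v := by rw [← (hpc u).1, ← (hpc v).1, h]
    have h2 : cb u = cb v := by rw [← (hpc u).2, ← (hpc v).2, h]
    have := cinj (hUp u hu).rev (hUp v hv).rev (by simp [hU u hu, hU v hv])
      (by rw [ca_rev, ca_rev, h1]) (by rw [cc_rev, cc_rev, h2])
    exact List.reverse_injective this
  have hpM : ∀ u ∈ U, (p u).1 ≤ M ∧ (p u).2 ≤ M := by
    intro u hu
    have h1 := hM u hu
    have h2 := cb_le_ca (hUp u hu)
    have h3 := hpc u
    constructor
    · have := h3.1; omega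
    · have := h3.2; omega
  set c : ZMod R × List ℕ → ℂ := fun t => (starRingEnd ℂ) (SS R (cat U V) t.1) with hc
  have key := sieve (R := R) U p hinj hpM hMR hH hH0 hH1 (Θ ×ˢ V)
    (fun t => (t.1 * (ca t.2 : ZMod R), t.1 * (cc t.2 : ZMod R))) c hB
  set T : List ℕ → ℂ := fun u => ∑ t ∈ Θ ×ˢ V, c t * ee (((p u).1 : ZMod R) * (t.1 * (ca t.2 : ZMod R))
    + ((p u).2 : ZMod R) * (t.1 * (cc t.2 : ZMod R))) with hT
  set A := ∑ k ∈ Θ, ‖SS R (cat U V) k‖^2 with hA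
  have e1 : ((A : ℝ) : ℂ) = ∑ u ∈ U, T u := by
    rw [hA]; push_cast
    have : ∀ k, ((‖SS R (cat U V) k‖ : ℂ))^2 = ∑ u ∈ U, ∑ v ∈ V, (starRingEnd ℂ) (SS R (cat U V) k) *
        ee (k * (ca (u ++ v) : ZMod R)) := by
      intro k
      rw [← Complex.conj_mul']
      conv_lhs => rw [SS.eq_def R (cat U V) k]
      rw [sum_cat hU, Finset.mul_sum]
      simp_rw [Finset.mul_sum]
      simp [SS, sum_cat hU]
    simp_rw [this]
    rw [Finset.sum_comm]
    refine Finset.sum_congr rfl fun u _ => ?_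
    simp only [hT, hc]
    rw [Finset.sum_product]
    refine Finset.sum_congr rfl fun k _ => Finset.sum_congr rfl fun v _ => ?_
    congr 2
    rw [ca_append, ← (hpc u).1, ← (hpc u).2]; push_cast; ring
  have e2 : A^2 ≤ U.card * ∑ u ∈ U, ‖T u‖^2 := by
    have a0 : 0 ≤ A := Finset.sum_nonneg fun _ _ => by positivity
    have a1 : A ≤ ∑ u ∈ U, ‖T u‖ := by
      have : A = ‖((A:ℝ):ℂ)‖ := by rw [Complex.norm_real, Real.norm_of_nonneg a0]
      rw [this, e1]; exact norm_sum_le _ _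
    calc A^2 ≤ (∑ u ∈ U, ‖T u‖)^2 := by gcongr
      _ ≤ _ := sq_sum_le_card_mul_sum_sq
  have e3 : ∑ t ∈ Θ ×ˢ V, ‖c t‖^2 = V.card * A := by
    rw [Finset.sum_product, hA, Finset.mul_sum]
    refine Finset.sum_congr rfl fun k _ => ?_
    simp [hc]
  rw [e3] at key
  have e4 : A^2 ≤ (576 * (M:ℝ)^2 * U.card * V.card * Bd) * A := by
    refine e2.trans ?_
    calc _ ≤ (U.card:ℝ) * (576 * (M:ℝ)^2 * Bd * (V.card * A)) := by gcongr
      _ = _ := by ring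
  have a0 : 0 ≤ A := Finset.sum_nonneg fun _ _ => by positivity
  have hBd0 : 0 ≤ Bd := le_trans (by positivity) (hB 0)
  rcases a0.eq_or_lt with h | h
  · rw [← h]; positivity
  · rw [sq] at e4; exact le_of_mul_le_mul_right e4 h
end

section
def Ap (R Q0 : ℕ) (k q a b : ℤ) : Prop :=
  1 ≤ q ∧ q ≤ Q0 ∧ IsCoprime a q ∧ q * k = a * R + b ∧ |b| * (Q0 + 1) ≤ R

lemma exists_ap {R Q0 : ℕ} (hR : 0 < R) (hQ : 0 < Q0) (k : ℤ) : ∃ q a b, Ap R Q0 k q a b := by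
  obtain ⟨r, h1, h2⟩ := Real.exists_rat_abs_sub_le_and_den_le ((k:ℝ)/R) hQ
  have hR' : (0:ℝ) < R := by exact_mod_cast hR
  have hd : (0:ℝ) < r.den := by exact_mod_cast r.den_pos
  refine ⟨r.den, r.num, r.den * k - r.num * R, ?_, by exact_mod_cast h2, ?_, by ring, ?_⟩
  · exact_mod_cast r.den_pos
  · rw [Int.isCoprime_iff_nat_coprime]; simpa using r.reduced
  · have e : (k:ℝ)/R - r = ((r.den * k - r.num * R : ℤ) : ℝ) / (r.den * R) := by
      rw [Rat.cast_def]; push_cast; field_simp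
    rw [e, abs_div, abs_of_pos (mul_pos hd hR'), div_le_div_iff₀ (by positivity) (by positivity)] at h1
    have h3 : |((r.den * k - r.num * R : ℤ) : ℝ)| * ((Q0:ℝ)+1) ≤ R := by
      have : (|((r.den * k - r.num * R : ℤ) : ℝ)| * ((Q0:ℝ)+1)) * r.den ≤ R * r.den := by linarith
      exact le_of_mul_le_mul_right this hd
    exact_mod_cast h3

lemma zero_of_small {R e m : ℤ} (h : R * m = e) (he : |e| < R) : m = 0 ∧ e = 0 := by
  have hR : 0 < R := lt_of_le_of_lt (abs_nonneg _) he
  have hm : m = 0 := by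
    by_contra hm
    have : 1 ≤ |m| := Int.one_le_abs hm
    rw [← h, abs_mul, abs_of_pos hR] at he
    nlinarith
  exact ⟨hm, by rw [← h, hm, mul_zero]⟩

lemma dvd_of_prim {q c x y : ℤ} (h : IsCoprime x y) (h1 : q ∣ c * x) (h2 : q ∣ c * y) : q ∣ c := by
  obtain ⟨s, t, hst⟩ := h
  have : c = s * (c * x) + t * (c * y) := by
    calc c = c * (s * x + t * y) := by rw [hst, mul_one]
      _ = _ := by ring
  rw [this]
  exact dvd_add (h1.mul_left _) (h2.mul_left _)

section
variable {R Q0 : ℕ} {k q a b k' q' a' b' x y x' y' h1 h2 n1 n2 L H T : ℤ}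

lemma abs3 {A B C X Y Z : ℤ} (hA : |A| ≤ X) (hB : |B| ≤ Y) (hC : |C| ≤ Z) : |A - B + C| ≤ X + Y + Z := by
  rw [abs_le] at *; constructor <;> linarith

lemma amul {A B X Y : ℤ} (hA : |A| ≤ X) (hB : |B| ≤ Y) : |A * B| ≤ X * Y := by
  rw [abs_mul]; exact mul_le_mul hA hB (abs_nonneg _) ((abs_nonneg _).trans hA)

lemma st_one (hap : Ap R Q0 k q a b) (hap' : Ap R Q0 k' q' a' b')
    (hq : q ≤ T) (hq' : q' ≤ T) (hb : |b| ≤ T) (hb' : |b'| ≤ T)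
    (hx : |x| ≤ L) (hx' : |x'| ≤ L) (hh : |h1| ≤ H) (e1 : k * x - k' * x' = h1 + R * n1)
    (hsm : T^2 * (H + 2 * L) < R) :
    q' * (a * x) = q * (a' * x') + q * q' * n1 ∧ q * q' * h1 = q' * (b * x) - q * (b' * x') := by
  have hqa : |q| ≤ T := by rw [abs_of_nonneg (by linarith [hap.1])]; exact hq
  have hqa' : |q'| ≤ T := by rw [abs_of_nonneg (by linarith [hap'.1])]; exact hq'
  have id : (R:ℤ) * (q' * (a * x) - q * (a' * x') - q * q' * n1)
      = q * q' * h1 - q' * (b * x) + q * (b' * x') := by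
    have f1 := hap.2.2.2.1
    have f2 := hap'.2.2.2.1
    linear_combination (-q' * x) * f1 + (q * x') * f2 + q * q' * e1
  have bd := abs3 (amul (amul hqa hqa') hh) (amul hqa' (amul hb hx)) (amul hqa (amul hb' hx'))
  have := zero_of_small id (lt_of_le_of_lt bd (by nlinarith))
  constructor <;> linarith [this.1, this.2]

lemma star_small (hap : Ap R Q0 k q a b) (hap' : Ap R Q0 k' q' a' b')
    (hq : q ≤ T) (hq' : q' ≤ T) (hb : |b| ≤ T) (hb' : |b'| ≤ T)
    (hx : |x| ≤ L) (hx' : |x'| ≤ L) (hy : |y| ≤ L) (hy' : |y'| ≤ L)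
    (hp : IsCoprime x y) (hp' : IsCoprime x' y')
    (hh1 : |h1| ≤ H) (hh2 : |h2| ≤ H) (e1 : k * x - k' * x' = h1 + R * n1)
    (e2 : k * y - k' * y' = h2 + R * n2)
    (hsm : T^2 * (H + 2 * L) < R) :
    q = q' ∧ a * x - a' * x' = q * n1 ∧ a * y - a' * y' = q * n2 ∧ q * h1 = b * x - b' * x'
      ∧ q * h2 = b * y - b' * y' := by
  obtain ⟨f1, g1⟩ := st_one hap hap' hq hq' hb hb' hx hx' hh1 e1 hsm
  obtain ⟨f2, g2⟩ := st_one hap hap' hq hq' hb hb' hy hy' hh2 e2 hsm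
  have d1 : q ∣ q' := by
    have : q ∣ q' * a := by
      refine dvd_of_prim hp ⟨a' * x' + q' * n1, by rw [mul_assoc, f1]; ring⟩ ⟨a' * y' + q' * n2, by rw [mul_assoc, f2]; ring⟩
    exact hap.2.2.1.symm.dvd_of_dvd_mul_right this
  have d2 : q' ∣ q := by
    have : q' ∣ q * a' := by
      refine dvd_of_prim hp' ⟨a * x - q * n1, by linear_combination -f1⟩ ⟨a * y - q * n2, by linear_combination -f2⟩
    exact hap'.2.2.1.symm.dvd_of_dvd_mul_right this
  have hqq : q = q' := Int.dvd_antisymm (by linarith [hap.1]) (by linarith [hap'.1]) d1 d2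
  subst hqq
  have q0 : q ≠ 0 := by have := hap.1; omega
  refine ⟨rfl, ?_, ?_, ?_, ?_⟩ <;> apply mul_left_cancel₀ q0
  · linear_combination f1
  · linear_combination f2
  · linear_combination g1
  · linear_combination g2

lemma concl_bd {D η : ℤ} (hD : b * D = q * η) (hq : 1 ≤ q) (hη : η = h1 * y' - h2 * x')
    (hh1 : |h1| ≤ H) (hh2 : |h2| ≤ H) (hx' : |x'| ≤ L) (hy' : |y'| ≤ L) :
    |b| * |D| ≤ q * (2 * (L * H)) := by
  rw [← abs_mul, hD, abs_mul, abs_of_pos (by linarith : (0:ℤ) < q)]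
  refine mul_le_mul_of_nonneg_left ?_ (by linarith)
  rw [hη]
  have f1 := amul hh1 hy'
  have f2 := amul hh2 hx'
  rw [abs_le] at *
  constructor <;> nlinarith

lemma star_small' (hap : Ap R Q0 k q a b) (hap' : Ap R Q0 k' q' a' b')
    (hq : q ≤ T) (hq' : q' ≤ T) (hb : |b| ≤ T) (hb' : |b'| ≤ T)
    (hx : |x| ≤ L) (hx' : |x'| ≤ L) (hy : |y| ≤ L) (hy' : |y'| ≤ L)
    (hp : IsCoprime x y) (hp' : IsCoprime x' y')
    (hh1 : |h1| ≤ H) (hh2 : |h2| ≤ H) (e1 : k * x - k' * x' = h1 + R * n1)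
    (e2 : k * y - k' * y' = h2 + R * n2)
    (hsm : T^2 * (H + 2 * L) < R) :
    q ∣ x * y' - y * x' ∧ |b| * |x * y' - y * x'| ≤ q * (2 * (L * H)) := by
  obtain ⟨rfl, f1, f2, g1, g2⟩ := star_small hap hap' hq hq' hb hb' hx hx' hy hy' hp hp' hh1 hh2 e1 e2 hsm
  constructor
  · have : q ∣ a * (x * y' - y * x') := ⟨n1 * y' - n2 * x', by linear_combination y' * f1 - x' * f2⟩
    exact hap.2.2.1.symm.dvd_of_dvd_mul_left this
  · exact concl_bd (η := h1 * y' - h2 * x') (by linear_combination (-y') * g1 + x' * g2) hap.1 rfl hh1 hh2 hx' hy'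

lemma star_small_same (hap : Ap R Q0 k q a b) (hap' : Ap R Q0 k' q' a' b')
    (hq : q ≤ T) (hq' : q' ≤ T) (hb : |b| ≤ T) (hb' : |b'| ≤ T)
    (hx : |x| ≤ L) (hy : |y| ≤ L)
    (hp : IsCoprime x y)
    (hh1 : |h1| ≤ H) (hh2 : |h2| ≤ H) (e1 : k * x - k' * x = h1 + R * n1)
    (e2 : k * y - k' * y = h2 + R * n2)
    (hsm : T^2 * (H + 2 * L) < R) :
    ∃ t s : ℤ, k - k' = t + R * s ∧ t * x = h1 := by
  obtain ⟨rfl, f1, f2, g1, g2⟩ := star_small hap hap' hq hq' hb hb' hx hx hy hy hp hp hh1 hh2 e1 e2 hsm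
  have q0 : q ≠ 0 := by have := hap.1; omega
  obtain ⟨s, hs⟩ : q ∣ a - a' := dvd_of_prim hp ⟨n1, by linear_combination f1⟩ ⟨n2, by linear_combination f2⟩
  have i1 := hap.2.2.2.1
  have i2 := hap'.2.2.2.1
  refine ⟨k - k' - R * s, s, by ring, ?_⟩
  apply mul_left_cancel₀ q0
  linear_combination x * i1 - x * i2 + x * R * hs - g1

lemma star_large (hap : Ap R Q0 k q a b)
    (hx : |x| ≤ L) (hx' : |x'| ≤ L) (hy : |y| ≤ L) (hy' : |y'| ≤ L)
    (hh1 : |h1| ≤ H) (hh2 : |h2| ≤ H) (e1 : k * x - k' * x' = h1 + R * n1)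
    (e2 : k * y - k' * y' = h2 + R * n2)
    (hsm : Q0 * (2 * (L * H)) * (Q0 + 1) + 2 * R * L^2 < R * (Q0 + 1)) :
    q ∣ x * y' - y * x' ∧ |b| * |x * y' - y * x'| ≤ q * (2 * (L * H)) := by
  obtain ⟨i1, i2, i3, i4, i5⟩ := hap
  set D := x * y' - y * x' with hD
  have id : (R:ℤ) * (a * D - q * (n1 * y' - n2 * x')) = q * (h1 * y' - h2 * x') - b * D := by
    linear_combination (-D) * i4 + q * y' * e1 - q * x' * e2 + q * k * hD
  have L0 : 0 ≤ L := (abs_nonneg _).trans hx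
  have H0 : 0 ≤ H := (abs_nonneg _).trans hh1
  have hDb : |D| ≤ 2 * L^2 := by
    have f1 := amul hx hy'
    have f2 := amul hy hx'
    rw [hD]; rw [abs_le] at *; constructor <;> nlinarith
  have hηb : |h1 * y' - h2 * x'| ≤ 2 * (L * H) := by
    have f1 := amul hh1 hy'
    have f2 := amul hh2 hx'
    rw [abs_le] at *; constructor <;> nlinarith
  have hlt : |q * (h1 * y' - h2 * x') - b * D| < R := by
    have j1 : |q * (h1 * y' - h2 * x')| ≤ Q0 * (2 * (L * H)) :=
      amul (by rw [abs_of_nonneg (by linarith)]; exact i2) hηb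
    have j2 : |b * D| * (Q0 + 1) ≤ R * (2 * L^2) := by
      rw [abs_mul]
      calc |b| * |D| * (Q0 + 1) = (|b| * (Q0 + 1)) * |D| := by ring
        _ ≤ R * (2 * L^2) := mul_le_mul i5 hDb (abs_nonneg _) (by positivity)
    have j3 := abs_sub (q * (h1 * y' - h2 * x')) (b * D)
    have Q1 : (0:ℤ) < Q0 + 1 := by positivity
    have : |q * (h1 * y' - h2 * x') - b * D| * (Q0 + 1) < R * (Q0 + 1) := by nlinarith
    exact lt_of_mul_lt_mul_right this Q1.le
  obtain ⟨z1, z2⟩ := zero_of_small id hlt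
  constructor
  · have : q ∣ a * D := ⟨n1 * y' - n2 * x', by linarith⟩
    exact i3.symm.dvd_of_dvd_mul_left this
  · exact concl_bd (η := h1 * y' - h2 * x') (by linarith) i1 rfl hh1 hh2 hx' hy'

lemma star_large_same
    (hx : |x| ≤ L) (hy : |y| ≤ L) (hp : IsCoprime x y)
    (hh1 : |h1| ≤ H) (hh2 : |h2| ≤ H) (e1 : k * x - k' * x = h1 + R * n1)
    (e2 : k * y - k' * y = h2 + R * n2)
    (hsm : 2 * (L * H) < R) :
    ∃ t s : ℤ, k - k' = t + R * s ∧ t * x = h1 := by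
  have id : (R:ℤ) * (n2 * x - n1 * y) = h1 * y - h2 * x := by linear_combination y * e1 - x * e2
  have hηb : |h1 * y - h2 * x| ≤ 2 * (L * H) := by
    have f1 := amul hh1 hy
    have f2 := amul hh2 hx
    rw [abs_le] at *; constructor <;> nlinarith
  obtain ⟨z1, z2⟩ := zero_of_small id (lt_of_le_of_lt hηb hsm)
  obtain ⟨s, t, hst⟩ := hp
  refine ⟨s * h1 + t * h2, s * n1 + t * n2, ?_, ?_⟩
  · linear_combination (-(k - k')) * hst + s * e1 + t * e2
  · linear_combination h1 * hst - t * z2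
end
end

section
lemma zlift {R : ℕ} [NeZero R] {k k' : ZMod R} {x x' : ℤ} {m m' : ℕ} {z : ZMod R}
    (h : k * (x : ZMod R) + (m : ZMod R) = z) (h' : k' * (x' : ZMod R) + (m' : ZMod R) = z) :
    ∃ n : ℤ, (k.val : ℤ) * x - (k'.val : ℤ) * x' = ((m' : ℤ) - m) + R * n := by
  have : (((k.val : ℤ) * x - (k'.val : ℤ) * x' - ((m' : ℤ) - m) : ℤ) : ZMod R) = 0 := by
    push_cast
    rw [ZMod.natCast_zmod_val, ZMod.natCast_zmod_val]
    linear_combination h - h'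
  rw [ZMod.intCast_zmod_eq_zero_iff_dvd] at this
  obtain ⟨n, hn⟩ := this
  exact ⟨n, by linarith⟩

lemma core {N C1 : ℕ} (hC1 : 1 ≤ C1) {U V : Finset (List ℕ)} {l1 : ℕ}
    (hU : ∀ u ∈ U, u.length = l1) (hUp : ∀ u ∈ U, Pw u) (hVp : ∀ v ∈ V, Pw v)
    (hUne : U.Nonempty) (hVne : V.Nonempty)
    (hlo : ∀ u ∈ U, ∀ v ∈ V, (N : ℤ) ≤ C1 * ca (u ++ v)) (hhi : ∀ u ∈ U, ∀ v ∈ V, ca (u ++ v) ≤ N)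
    {q a b : ZMod (N+1) → ℤ} (hap : ∀ k : ZMod (N+1), Ap (N+1) (Nat.sqrt (N+1)) k.val (q k) (a k) (b k))
    (Θ : Finset (ZMod (N+1)))
    (hst : (∃ T : ℤ, (∀ k ∈ Θ, q k ≤ T ∧ |b k| ≤ T) ∧ ∀ u ∈ U, 4 * T^2 ≤ ca u) ∨
      (∀ v ∈ V, 100 * (2 * C1 * ca v)^4 ≤ N))
    {X Cnt : ℝ} (hX : ∀ u ∈ U, (ca u : ℝ) ≤ X) (hCnt0 : 0 ≤ Cnt)
    (hCnt : ∀ k ∈ Θ, ∀ v ∈ V, ((V.filter fun v' => q k ∣ ca v * cc v' - cc v * ca v' ∧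
      |b k| * |ca v * cc v' - cc v * ca v'| ≤ q k * (16 * C1^2 * (ca v)^2)).card : ℝ) ≤ Cnt) :
    ∑ k ∈ Θ, ‖SS (N+1) (cat U V) k‖^2 ≤ 576 * X^2 * U.card * V.card * ((8 * C1 + 1) * Cnt) := by
  obtain ⟨u0, hu0, hmax⟩ := U.exists_max_image (fun u => ca u) hUne
  obtain ⟨v1, hv1⟩ := hVne
  have hu1 := one_le_ca (hUp u0 hu0)
  obtain ⟨M, hM⟩ := Int.eq_ofNat_of_zero_le (by linarith : 0 ≤ ca u0)
  have hcaL : ∀ v ∈ V, ca u0 * ca v ≤ N := fun v hv => (ca_mul_le u0 v).trans (hhi u0 hu0 v hv)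
  have hM1 : 1 ≤ M := by rw [hM] at hu1; exact_mod_cast hu1
  have hMN : M ≤ N := by
    have := hcaL v1 hv1
    have h2 := one_le_ca (hVp v1 hv1)
    have : (M:ℤ) ≤ N := by rw [← hM]; nlinarith
    exact_mod_cast this
  set L := N / M with hL
  set H := (N+1) / (6 * M) + 1 with hH
  have hL1 : 1 ≤ L := Nat.div_pos hMN hM1
  have hH2 : H ≤ 2 * L := by
    have : (N+1) / (6*M) ≤ N / M := by
      rw [Nat.le_div_iff_mul_le hM1]
      have := Nat.div_mul_le_self (N+1) (6*M)
      nlinarith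
    omega
  have hLM : M * L ≤ N := Nat.mul_div_le N M
  have hvL : ∀ v ∈ V, ca v ≤ L := by
    intro v hv
    have := hcaL v hv
    obtain ⟨x, hx⟩ := Int.eq_ofNat_of_zero_le (by linarith [one_le_ca (hVp v hv)] : 0 ≤ ca v)
    rw [hx, hM] at this
    rw [hx]
    have h3 : x ≤ L := by rw [hL, Nat.le_div_iff_mul_le hM1]; rw [mul_comm]; exact_mod_cast this
    exact_mod_cast h3
  have hLv : ∀ v ∈ V, (L:ℤ) ≤ 2 * C1 * ca v := by
    intro v hv
    have h1 := hlo u0 hu0 v hv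
    have h2 := ca_le_mul (hUp u0 hu0) (hVp v hv)
    have h3 : (M:ℤ) * L ≤ N := by exact_mod_cast hLM
    have h4 : (M:ℤ) * L ≤ M * (2 * C1 * ca v) := by
      rw [hM] at h2
      have : (C1:ℤ) * ca (u0 ++ v) ≤ C1 * (2 * (M * ca v)) := mul_le_mul_of_nonneg_left h2 (by positivity)
      linarith
    exact le_of_mul_le_mul_left h4 (by exact_mod_cast hM1)
  have hMX : (M:ℝ) ≤ X := by have := hX u0 hu0; rw [hM] at this; exact_mod_cast this
  have hxa : ∀ v ∈ V, |ca v| ≤ (L:ℤ) := fun v hv => by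
    rw [abs_of_nonneg (cnonneg v).1]; exact hvL v hv
  have hya : ∀ v ∈ V, |cc v| ≤ (L:ℤ) := fun v hv => by
    rw [abs_of_nonneg (cnonneg v).2.2.1]; exact (cc_le_ca (hVp v hv)).trans (hvL v hv)
  have hR : ((N+1 : ℕ) : ℤ) = N + 1 := by push_cast; ring
  -- smallness
  have hst' : (∃ T : ℤ, (∀ k ∈ Θ, q k ≤ T ∧ |b k| ≤ T) ∧ T^2 * ((H:ℤ) + 2 * L) < ((N+1:ℕ):ℤ)) ∨
      (((Nat.sqrt (N+1) : ℕ):ℤ) * (2 * ((L:ℤ) * H)) * ((Nat.sqrt (N+1) : ℕ) + 1) + 2 * ((N+1:ℕ):ℤ) * (L:ℤ)^2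
        < ((N+1:ℕ):ℤ) * ((Nat.sqrt (N+1) : ℕ) + 1)) := by
    rcases hst with ⟨T, h1, h2⟩ | h2
    · left
      refine ⟨T, h1, ?_⟩
      have h3 := h2 u0 hu0
      rw [hM] at h3
      have h4 : (H:ℤ) ≤ 2 * L := by exact_mod_cast hH2
      have h5 : (M:ℤ) * L ≤ N := by exact_mod_cast hLM
      rw [hR]
      have : T^2 * ((H:ℤ) + 2*L) ≤ T^2 * (4 * L) := mul_le_mul_of_nonneg_left (by linarith) (by positivity)
      nlinarith
    · right
      have h3 : 100 * (L:ℤ)^4 ≤ N := by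
        have := hLv v1 hv1
        have h4 : (L:ℤ)^4 ≤ (2 * C1 * ca v1)^4 := pow_le_pow_left₀ (by positivity) this 4
        linarith [h2 v1 hv1]
      set Q := Nat.sqrt (N+1)
      have q1 : Q * Q ≤ N+1 := Nat.sqrt_le _
      have q2 : N+1 < (Q+1) * (Q+1) := Nat.lt_succ_sqrt _
      have h4 : 10 * L^2 < Q + 1 := by
        have : 100 * L^4 ≤ N := by exact_mod_cast h3
        nlinarith
      have h5 : Q * (2 * (L * H)) * (Q+1) + 2 * (N+1) * L^2 < (N+1) * (Q+1) := by
        have a1 : L * H ≤ 2 * L^2 := by nlinarith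
        have a2 : Q * (Q+1) ≤ 2 * (N+1) := by
          have : Q ≤ N+1 := Nat.sqrt_le_self _
          nlinarith
        calc Q * (2 * (L * H)) * (Q+1) + 2 * (N+1) * L^2 = (Q * (Q+1)) * (2 * (L*H)) + 2 * (N+1) * L^2 := by ring
          _ ≤ (2 * (N+1)) * (2 * (2 * L^2)) + 2 * (N+1) * L^2 := by gcongr
          _ = (N+1) * (10 * L^2) := by ring
          _ < _ := by gcongr
      exact_mod_cast h5
  have star : ∀ k ∈ Θ, ∀ k' ∈ Θ, ∀ v ∈ V, ∀ v' ∈ V, ∀ h1 h2 n1 n2 : ℤ, |h1| ≤ H → |h2| ≤ H →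
      (k.val : ℤ) * ca v - (k'.val : ℤ) * ca v' = h1 + ((N+1:ℕ):ℤ) * n1 →
      (k.val : ℤ) * cc v - (k'.val : ℤ) * cc v' = h2 + ((N+1:ℕ):ℤ) * n2 →
      q k ∣ ca v * cc v' - cc v * ca v' ∧ |b k| * |ca v * cc v' - cc v * ca v'| ≤ q k * (2 * ((L:ℤ) * H)) := by
    intro k hk k' hk' v hv v' hv' h1 h2 n1 n2 b1 b2 e1 e2
    rcases hst' with ⟨T, t1, t2⟩ | t2
    · exact star_small' (hap k) (hap k') (t1 k hk).1 (t1 k' hk').1 (t1 k hk).2 (t1 k' hk').2 (hxa v hv) (hxa v' hv')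
        (hya v hv) (hya v' hv') (cprim v) (cprim v') b1 b2 e1 e2 t2
    · exact star_large (hap k) (hxa v hv) (hxa v' hv') (hya v hv) (hya v' hv') b1 b2 e1 e2 t2
  have same : ∀ k ∈ Θ, ∀ k' ∈ Θ, ∀ v ∈ V, ∀ h1 h2 n1 n2 : ℤ, |h1| ≤ H → |h2| ≤ H →
      (k.val : ℤ) * ca v - (k'.val : ℤ) * ca v = h1 + ((N+1:ℕ):ℤ) * n1 →
      (k.val : ℤ) * cc v - (k'.val : ℤ) * cc v = h2 + ((N+1:ℕ):ℤ) * n2 →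
      ∃ t s : ℤ, (k.val : ℤ) - k'.val = t + ((N+1:ℕ):ℤ) * s ∧ t * ca v = h1 := by
    intro k hk k' hk' v hv h1 h2 n1 n2 b1 b2 e1 e2
    rcases hst' with ⟨T, t1, t2⟩ | t2
    · exact star_small_same (hap k) (hap k') (t1 k hk).1 (t1 k' hk').1 (t1 k hk).2 (t1 k' hk').2 (hxa v hv)
        (hya v hv) (cprim v) b1 b2 e1 e2 t2
    · refine star_large_same (hxa v hv) (hya v hv) (cprim v) b1 b2 e1 e2 ?_
      by_contra hc
      push Not at hc
      set Q := (((Nat.sqrt (N+1) : ℕ)):ℤ)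
      have Q1 : 1 ≤ Q := by
        have : 1 ≤ Nat.sqrt (N+1) := Nat.sqrt_pos.mpr (by omega)
        exact Int.ofNat_le.mpr this
      have : (0:ℤ) ≤ 2 * ((N+1:ℕ):ℤ) * (L:ℤ)^2 := by positivity
      have hz : ((N+1:ℕ):ℤ) * 1 ≤ (2 * ((L:ℤ) * H)) * Q := mul_le_mul hc Q1 (by norm_num) (by positivity)
      have := mul_le_mul_of_nonneg_right hz (by linarith : 0 ≤ Q + 1)
      linarith
  -- box count
  have hB : ∀ z : ZMod (N+1) × ZMod (N+1), (((Θ ×ˢ V).filter fun t => ∃ m1 < H, ∃ m2 < H,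
      t.1 * (ca t.2 : ZMod (N+1)) + ((m1:ℕ) : ZMod (N+1)) = z.1 ∧
      t.1 * (cc t.2 : ZMod (N+1)) + ((m2:ℕ) : ZMod (N+1)) = z.2).card : ℝ) ≤ (8 * C1 + 1) * Cnt := by
    intro z
    set S := ((Θ ×ˢ V).filter fun t => ∃ m1 < H, ∃ m2 < H,
      t.1 * (ca t.2 : ZMod (N+1)) + ((m1:ℕ) : ZMod (N+1)) = z.1 ∧
      t.1 * (cc t.2 : ZMod (N+1)) + ((m2:ℕ) : ZMod (N+1)) = z.2) with hS
    rcases S.eq_empty_or_nonempty with he | ⟨t0, ht0⟩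
    · rw [he]; simp; positivity
    have hmem : ∀ t ∈ S, t.1 ∈ Θ ∧ t.2 ∈ V := fun t ht => by
      rw [hS, Finset.mem_filter, Finset.mem_product] at ht; exact ht.1
    have lift : ∀ t ∈ S, ∀ t' ∈ S, ∃ h1 h2 n1 n2 : ℤ, |h1| < H ∧ |h2| < H ∧
      (t.1.val : ℤ) * ca t.2 - (t'.1.val : ℤ) * ca t'.2 = h1 + ((N+1:ℕ):ℤ) * n1 ∧
      (t.1.val : ℤ) * cc t.2 - (t'.1.val : ℤ) * cc t'.2 = h2 + ((N+1:ℕ):ℤ) * n2 := by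
      intro t ht t' ht'
      rw [hS, Finset.mem_filter] at ht ht'
      obtain ⟨_, m1, l1, m2, l2, e1, e2⟩ := ht
      obtain ⟨_, m1', l1', m2', l2', e1', e2'⟩ := ht'
      obtain ⟨n1, f1⟩ := zlift e1 e1'
      obtain ⟨n2, f2⟩ := zlift e2 e2'
      refine ⟨_, _, n1, n2, ?_, ?_, f1, f2⟩ <;> rw [abs_lt] <;> constructor <;> omega
    set V1 := V.filter fun v' => q t0.1 ∣ ca t0.2 * cc v' - cc t0.2 * ca v' ∧
      |b t0.1| * |ca t0.2 * cc v' - cc t0.2 * ca v'| ≤ q t0.1 * (16 * C1^2 * (ca t0.2)^2) with hV1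
    have m0 := hmem t0 ht0
    have c1 : S.card ≤ (8 * C1 + 1) * V1.card := by
      refine Finset.card_le_mul_card_image_of_maps_to (f := Prod.snd) ?_ _ ?_
      · intro t ht
        obtain ⟨h1, h2, n1, n2, b1, b2, e1, e2⟩ := lift t0 ht0 t ht
        have := star t0.1 m0.1 t.1 (hmem t ht).1 t0.2 m0.2 t.2 (hmem t ht).2 h1 h2 n1 n2 b1.le b2.le e1 e2
        rw [hV1, Finset.mem_filter]
        refine ⟨(hmem t ht).2, this.1, this.2.trans ?_⟩
        refine mul_le_mul_of_nonneg_left ?_ (by linarith [(hap t0.1).1])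
        have h4 : (H:ℤ) ≤ 2 * L := by exact_mod_cast hH2
        have h5 := hLv t0.2 m0.2
        have h6 : (0:ℤ) ≤ L := by positivity
        have h7 : (L:ℤ)^2 ≤ (2 * C1 * ca t0.2)^2 := pow_le_pow_left₀ h6 h5 2
        nlinarith
      · intro v' hv'
        rcases (S.filter fun t => t.2 = v').eq_empty_or_nonempty with he | ⟨t1, ht1⟩
        · rw [he]; simp
        rw [Finset.mem_filter] at ht1
        obtain ⟨ht1, rfl⟩ := ht1
        have m1 := hmem t1 ht1
        have : (S.filter fun t => t.2 = t1.2) ⊆ (Finset.Icc (-(4 * C1 : ℤ)) (4 * C1)).image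
            (fun s : ℤ => (t1.1 - (s : ZMod (N+1)), t1.2)) := by
          intro t ht
          rw [Finset.mem_filter] at ht
          obtain ⟨ht, e⟩ := ht
          obtain ⟨h1, h2, n1, n2, b1, b2, e1, e2⟩ := lift t1 ht1 t ht
          rw [e] at e1 e2
          obtain ⟨s, r, g1, g2⟩ := same t1.1 m1.1 t.1 (hmem t ht).1 t1.2 m1.2 h1 h2 n1 n2 b1.le b2.le e1 e2
          rw [Finset.mem_image]
          refine ⟨s, ?_, ?_⟩
          · rw [Finset.mem_Icc, ← abs_le]
            have x1 := one_le_ca (hVp _ m1.2)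
            have h4 : (H:ℤ) ≤ 2 * L := by exact_mod_cast hH2
            have h5 := hLv t1.2 m1.2
            have : |s| * ca t1.2 ≤ (4 * C1) * ca t1.2 := by
              rw [← g2, abs_mul, abs_of_pos (by linarith : 0 < ca t1.2)] at b1
              linarith
            exact le_of_mul_le_mul_right this (by linarith)
          · have : (((t1.1.val : ℤ) - t.1.val : ℤ) : ZMod (N+1)) = ((s + ((N+1:ℕ):ℤ) * r : ℤ) : ZMod (N+1)) := by
              rw [g1]
            rw [Int.cast_sub, Int.cast_add, Int.cast_mul, Int.cast_natCast, Int.cast_natCast, Int.cast_natCast,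
              ZMod.natCast_zmod_val, ZMod.natCast_zmod_val, ZMod.natCast_self, zero_mul, add_zero] at this
            refine Prod.ext ?_ ?_
            · show t1.1 - (s : ZMod (N+1)) = t.1
              rw [← this]; ring
            · exact e.symm
        refine (Finset.card_le_card this).trans (Finset.card_image_le.trans ?_)
        rw [Int.card_Icc]; omega
    have c2 := hCnt t0.1 m0.1 t0.2 m0.2
    calc (S.card : ℝ) ≤ (8 * C1 + 1) * V1.card := by exact_mod_cast c1
      _ ≤ _ := by gcongr
  have hMM : ∀ u ∈ U, ca u ≤ M := fun u hu => by rw [← hM]; exact hmax u hu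
  have fin := bilin (R := N+1) (V := V) hU hUp (M := M) (H := H) hMM (by omega)
    (by rw [hH, Nat.add_sub_cancel]; exact Nat.div_mul_le_self _ _)
    (by rw [hH]; exact (Nat.lt_mul_div_succ _ (by omega)).le) (by rw [hH]; exact Nat.le_add_left _ _) Θ hB
  refine fin.trans ?_
  gcongr
end

section
lemma count {S : Finset (List ℕ)} {l : ℕ} (hl : ∀ v ∈ S, v.length = l) (hp : ∀ v ∈ S, Pw v)
    {x0 y0 : ℤ} (hc : IsCoprime x0 y0) (hx0 : 1 ≤ x0) {C0 : ℕ} (hC : ∀ v ∈ S, ca v ≤ C0 * x0)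
    {q : ℤ} (hq : 1 ≤ q) {T : ℝ} (hT : 0 ≤ T) (hd : ∀ v ∈ S, q ∣ x0 * cc v - y0 * ca v)
    (hD : ∀ v ∈ S, ((|x0 * cc v - y0 * ca v| : ℤ) : ℝ) ≤ T) :
    (S.card : ℝ) ≤ (2 * T / q + 1) * (C0 + 1) := by
  have q0 : (0:ℝ) < q := by exact_mod_cast hq
  set t := ⌊T / q⌋ with ht
  have t0 : 0 ≤ t := Int.floor_nonneg.mpr (by positivity)
  have h1 : S.card ≤ (Finset.Icc (-t) t ×ˢ Finset.Icc (0:ℤ) C0).card := by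
    refine Finset.card_le_card_of_injOn (fun v => ((x0 * cc v - y0 * ca v) / q, ca v / x0)) ?_ ?_
    · intro v hv
      simp only [Finset.coe_product, Set.mem_prod, Finset.coe_Icc, Set.mem_Icc]
      refine ⟨?_, Int.ediv_nonneg (cnonneg v).1 (by linarith), ?_⟩
      · rw [← abs_le, ht, Int.le_floor, le_div_iff₀ q0]
        obtain ⟨d, hd⟩ := hd v hv
        have := hD v hv
        rw [hd, abs_mul, abs_of_pos (by linarith : 0 < q)] at this
        rw [hd, Int.mul_ediv_cancel_left _ (by omega)]
        push_cast at this ⊢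
        linarith
      · refine Int.ediv_le_of_le_mul (by linarith) (hC v hv)
    · intro v hv v' hv' h
      simp only [Prod.mk.injEq] at h
      obtain ⟨e1, e2⟩ := h
      have f1 : x0 * cc v - y0 * ca v = x0 * cc v' - y0 * ca v' := by
        rw [← Int.mul_ediv_cancel' (hd v hv), e1, Int.mul_ediv_cancel' (hd v' hv')]
      have f2 : x0 ∣ (ca v - ca v') := by
        have : x0 ∣ y0 * (ca v - ca v') := ⟨cc v - cc v', by linarith⟩
        exact hc.dvd_of_dvd_mul_left this
      have f3 : ca v = ca v' := by
        obtain ⟨s, hs⟩ := f2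
        have : ca v = ca v' + x0 * s := by linarith
        rw [this, Int.add_mul_ediv_left _ _ (by omega)] at e2
        have : s = 0 := by omega
        rw [this] at hs; linarith
      have f4 : cc v = cc v' := by
        rw [f3] at f1
        have : x0 * cc v = x0 * cc v' := by linarith
        exact mul_left_cancel₀ (by omega) this
      exact cinj (hp v hv) (hp v' hv') ((hl v hv).trans (hl v' hv').symm) f3 f4
  have h2 : (t:ℝ) ≤ T / q := Int.floor_le _
  rw [Finset.card_product, Int.card_Icc, Int.card_Icc] at h1
  have h3 : (((t + 1 - -t).toNat : ℤ):ℝ) = 2 * t + 1 := by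
    rw [Int.toNat_of_nonneg (by omega)]; push_cast; ring
  have h4 : (((C0:ℤ) + 1 - 0).toNat) = C0 + 1 := by omega
  have h5 : (S.card : ℝ) ≤ ((t + 1 - -t).toNat : ℝ) * (C0 + 1) := by
    rw [h4] at h1; exact_mod_cast h1
  rw [Int.cast_natCast] at h3
  rw [h3] at h5
  refine h5.trans ?_
  gcongr
  rw [mul_div_assoc]; linarith

lemma D_le {v v' : List ℕ} (h : Pw v) (h' : Pw v') {Y : ℝ} (hY : (ca v : ℝ) ≤ Y) (hY' : (ca v' : ℝ) ≤ Y) :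
    ((|ca v * cc v' - cc v * ca v'| : ℤ) : ℝ) ≤ 2 * Y^2 := by
  have a1 : (cc v : ℝ) ≤ ca v := by exact_mod_cast cc_le_ca h
  have a2 : (cc v' : ℝ) ≤ ca v' := by exact_mod_cast cc_le_ca h'
  have b1 : (0:ℝ) ≤ cc v := by exact_mod_cast (cnonneg v).2.2.1
  have b2 : (0:ℝ) ≤ cc v' := by exact_mod_cast (cnonneg v').2.2.1
  have c1 := ca_pos h
  have c2 := ca_pos h'
  push_cast
  rw [abs_le]
  have m1 : (ca v : ℝ) * cc v' ≤ Y * Y := mul_le_mul hY (a2.trans hY') b2 (c1.le.trans hY)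
  have m2 : (cc v : ℝ) * ca v' ≤ Y * Y := mul_le_mul (a1.trans hY) hY' c2.le (c1.le.trans hY)
  have m3 : 0 ≤ (ca v : ℝ) * cc v' := by positivity
  have m4 : 0 ≤ (cc v : ℝ) * ca v' := by positivity
  constructor <;> nlinarith

lemma cnt_simple {V : Finset (List ℕ)} {l : ℕ} (hl : ∀ v ∈ V, v.length = l) (hp : ∀ v ∈ V, Pw v)
    {C0 C1 : ℕ} (hC1 : 1 ≤ C1) (hC : ∀ v ∈ V, ∀ v' ∈ V, ca v ≤ C0 * ca v') {Y : ℝ} (hY : ∀ v ∈ V, (ca v : ℝ) ≤ Y)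
    {q b : ℤ} (hq : 1 ≤ q) {P : ℝ} (hP : 0 < P) (hqb : P ≤ q ∨ P ≤ |b|) {v : List ℕ} (hv : v ∈ V) :
    ((V.filter fun v' => q ∣ ca v * cc v' - cc v * ca v' ∧
      |b| * |ca v * cc v' - cc v * ca v'| ≤ q * (16 * C1^2 * (ca v)^2)).card : ℝ)
      ≤ (32 * C1^2 * Y^2 / P + 1) * (C0 + 1) := by
  have q0 : (0:ℝ) < q := by exact_mod_cast hq
  have c1 : (1:ℝ) ≤ C1 := by exact_mod_cast hC1
  have Y0 : 0 ≤ Y := (ca_pos (hp v hv)).le.trans (hY v hv)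
  rcases hqb with h | h
  · refine (count (l := l) (x0 := ca v) (y0 := cc v) (C0 := C0) (q := q) (T := 2 * Y^2) ?_ ?_ (cprim v) (one_le_ca (hp v hv)) ?_ hq
      (by positivity) ?_ ?_).trans ?_
    · intro w hw; exact hl w (Finset.mem_filter.mp hw).1
    · intro w hw; exact hp w (Finset.mem_filter.mp hw).1
    · intro w hw; exact hC w (Finset.mem_filter.mp hw).1 v hv
    · intro w hw; exact (Finset.mem_filter.mp hw).2.1
    · intro w hw; exact D_le (hp v hv) (hp w (Finset.mem_filter.mp hw).1) (hY v hv) (hY w (Finset.mem_filter.mp hw).1)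
    · have : 2 * (2 * Y^2) ≤ 32 * (C1:ℝ)^2 * Y^2 := by
        have : (1:ℝ) ≤ C1^2 := one_le_pow₀ c1
        nlinarith [sq_nonneg Y]
      refine mul_le_mul_of_nonneg_right (add_le_add_left ?_ 1) (by positivity)
      exact div_le_div₀ (by positivity) this hP h
  · have b0 : (0:ℝ) < |(b:ℝ)| := lt_of_lt_of_le hP (by exact_mod_cast h)
    refine (count (l := l) (x0 := ca v) (y0 := cc v) (C0 := C0) (q := q) (T := q * (16 * C1^2 * Y^2) / |(b:ℝ)|) ?_ ?_ (cprim v) (one_le_ca (hp v hv)) ?_ hq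
      (by positivity) ?_ ?_).trans ?_
    · intro w hw; exact hl w (Finset.mem_filter.mp hw).1
    · intro w hw; exact hp w (Finset.mem_filter.mp hw).1
    · intro w hw; exact hC w (Finset.mem_filter.mp hw).1 v hv
    · intro w hw; exact (Finset.mem_filter.mp hw).2.1
    · intro w hw
      have := (Finset.mem_filter.mp hw).2.2
      rw [le_div_iff₀ b0]
      have h2 : ((|b| * |ca v * cc w - cc v * ca w| : ℤ):ℝ) ≤ ((q * (16 * C1^2 * (ca v)^2) : ℤ) : ℝ) := by exact_mod_cast this
      have h3 : ((q * (16 * C1^2 * (ca v)^2) : ℤ) : ℝ) ≤ q * (16 * C1^2 * Y^2) := by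
        push_cast
        have := hY v hv
        have := (ca_pos (hp v hv)).le
        gcongr
      push_cast at h2 h3 ⊢
      linarith
    · refine mul_le_mul_of_nonneg_right (add_le_add_left ?_ 1) (by positivity)
      rw [show 2 * (q * (16 * (C1:ℝ)^2 * Y^2) / |(b:ℝ)|) / q = 32 * C1^2 * Y^2 / |(b:ℝ)| by field_simp; norm_num; ring]
      have : P ≤ |(b:ℝ)| := by exact_mod_cast h
      gcongr

lemma card_filter_cat {U V : Finset (List ℕ)} {a : ℕ} (hU : ∀ u ∈ U, u.length = a) (p : List ℕ → Prop)
    [DecidablePred p] :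
    ((cat U V).filter p).card = ∑ u ∈ U, (V.filter fun v => p (u ++ v)).card := by
  rw [Finset.card_filter, sum_cat hU]
  simp_rw [Finset.card_filter]

lemma cnt_q {G Z : Finset (List ℕ)} {l l' : ℕ} (hl' : ∀ v ∈ G, v.length = l') (hl : ∀ v ∈ Z, v.length = l) (hp : ∀ v ∈ Z, Pw v)
    {C0 : ℕ} (hC : ∀ v ∈ Z, ∀ v' ∈ Z, ca v ≤ C0 * ca v') {Y : ℝ} (hY : ∀ v ∈ Z, (ca v : ℝ) ≤ Y)
    {q : ℤ} (hq : 1 ≤ q) (v : List ℕ) (r : List ℕ → Prop) [DecidablePred r]  :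
    (((cat G Z).filter fun v' => q ∣ ca v * cc v' - cc v * ca v' ∧ r v').card : ℝ)
      ≤ G.card * ((4 * Y^2 / q + 1) * (C0 + 1)) := by
  have q0 : (0:ℝ) < q := by exact_mod_cast hq
  rw [card_filter_cat hl', Nat.cast_sum, ← nsmul_eq_mul]
  refine Finset.sum_le_card_nsmul _ _ _ ?_
  intro g hg
  set S := Z.filter fun z => q ∣ ca v * cc (g ++ z) - cc v * ca (g ++ z) ∧ r (g ++ z) with hS
  rcases S.eq_empty_or_nonempty with he | ⟨z0, hz0⟩
  · rw [he]; simp; positivity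
  have hm : ∀ z ∈ S, z ∈ Z ∧ q ∣ ca v * cc (g ++ z) - cc v * ca (g ++ z) := fun z hz => by
    rw [hS, Finset.mem_filter] at hz; exact ⟨hz.1, hz.2.1⟩
  have m0 := hm z0 hz0
  refine (count (l := l) (x0 := ca z0) (y0 := cc z0) (C0 := C0) (q := q) (T := 2 * Y^2) ?_ ?_ (cprim z0) (one_le_ca (hp z0 m0.1)) ?_ hq
      (by positivity) ?_ ?_).trans ?_
  · intro w hw; exact hl w (hm w hw).1
  · intro w hw; exact hp w (hm w hw).1
  · intro w hw; exact hC w (hm w hw).1 z0 m0.1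
  · intro w hw
    obtain ⟨d1, e1⟩ := (hm w hw).2
    obtain ⟨d0, e0⟩ := m0.2
    rw [cc_append, ca_append] at e1 e0
    have hdet := cdet g
    have hcop : IsCoprime (ca v * cc g - cc v * ca g) (ca v * cd g - cc v * cb g) := by
      obtain ⟨s, t, hst⟩ := cprim v
      have hs : ((-1:ℤ)^g.length) * (-1)^g.length = 1 := by rw [← mul_pow]; simp
      refine ⟨(-1)^g.length * (-(s * cb g) - t * cd g), (-1)^g.length * (s * ca g + t * cc g), ?_⟩
      linear_combination ((-1)^g.length * (s * ca v + t * cc v)) * hdet + hs * (s * ca v + t * cc v) + hst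
    refine dvd_of_prim hcop ?_ ?_
    · exact ⟨d0 * cc w - d1 * cc z0, by linear_combination cc w * e0 - cc z0 * e1⟩
    · exact ⟨d1 * ca z0 - d0 * ca w, by linear_combination ca z0 * e1 - ca w * e0⟩
  · intro w hw; exact D_le (hp _ m0.1) (hp w (hm w hw).1) (hY _ m0.1) (hY w (hm w hw).1)
  · rw [show 2 * (2 * Y^2) = 4 * Y^2 by ring]

lemma cnt_K {G Z : Finset (List ℕ)} {l : ℕ} (hl : ∀ v ∈ G, v.length = l) (hp : ∀ v ∈ G, Pw v)
    (hpZ : ∀ v ∈ Z, Pw v)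
    {C0 C1 C2 : ℕ} (hC : ∀ v ∈ G, ∀ v' ∈ G, ca v ≤ C0 * ca v')
    (hC2 : ∀ v ∈ cat G Z, ∀ v' ∈ cat G Z, ca v ≤ C2 * ca v') {Y : ℝ} (hY : ∀ v ∈ G, (ca v : ℝ) ≤ Y)
    {q b : ℤ} (hq : 1 ≤ q) {Q : ℝ} (hQ0 : 0 < Q) (hQ : Q * q ≤ |b|) {v : List ℕ} (hv : v ∈ cat G Z)
    (r : List ℕ → Prop) [DecidablePred r] :
    (((cat G Z).filter fun v' => r v' ∧
      |b| * |ca v * cc v' - cc v * ca v'| ≤ q * (16 * C1^2 * (ca v)^2)).card : ℝ)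
      ≤ Z.card * ((2 * (32 * C1^2 * C2 * Y^2 / Q + 2 * C0) + 1) * (C0 + 1)) := by
  have q0 : (0:ℝ) < q := by exact_mod_cast hq
  have hpv : ∀ v ∈ cat G Z, Pw v := by
    intro v hv
    obtain ⟨g, hg, z, hz, rfl⟩ := mem_cat.mp hv
    exact (hp g hg).append (hpZ z hz)
  rw [card_filter_cat hl, Nat.cast_sum]
  have sw : ∑ g ∈ G, ((Z.filter fun z => r (g ++ z) ∧
      |b| * |ca v * cc (g ++ z) - cc v * ca (g ++ z)| ≤ q * (16 * C1^2 * (ca v)^2)).card : ℝ) =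
      ∑ z ∈ Z, ((G.filter fun g => r (g ++ z) ∧
      |b| * |ca v * cc (g ++ z) - cc v * ca (g ++ z)| ≤ q * (16 * C1^2 * (ca v)^2)).card : ℝ) := by
    simp_rw [Finset.card_filter]
    push_cast
    rw [Finset.sum_comm]
  rw [sw, ← nsmul_eq_mul]
  refine Finset.sum_le_card_nsmul _ _ _ ?_
  intro z hz
  set S := G.filter fun g => r (g ++ z) ∧
      |b| * |ca v * cc (g ++ z) - cc v * ca (g ++ z)| ≤ q * (16 * C1^2 * (ca v)^2) with hS
  rcases S.eq_empty_or_nonempty with he | ⟨g0, hg0⟩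
  · rw [he]; simp; positivity
  have hm : ∀ g ∈ S, g ∈ G ∧ |b| * |ca v * cc (g ++ z) - cc v * ca (g ++ z)| ≤ q * (16 * C1^2 * (ca v)^2) := fun g hg => by
    rw [hS, Finset.mem_filter] at hg; exact ⟨hg.1, hg.2.2⟩
  have key : ∀ g ∈ S, |zz g - zz v| ≤ 16 * C1^2 * C2 / Q + 1 / (ca g : ℝ)^2 := by
    intro g hg
    have m := hm g hg
    have hgz : g ++ z ∈ cat G Z := mem_cat.mpr ⟨g, m.1, z, hz, rfl⟩
    have f1 := zz_contr (hp g m.1) (hpZ z hz)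
    have x1 := ca_pos (hpv v hv)
    have x2 := ca_pos (hpv _ hgz)
    have f2 : |zz (g ++ z) - zz v| ≤ 16 * C1^2 * C2 / Q := by
      have e : zz (g ++ z) - zz v = ((ca v * cc (g ++ z) - cc v * ca (g ++ z) : ℤ) : ℝ) / (ca v * ca (g ++ z)) := by
        rw [zz, zz]; push_cast; field_simp
      rw [e, abs_div, abs_of_pos (mul_pos x1 x2), div_le_div_iff₀ (by positivity) hQ0]
      have h2 : ((|b| * |ca v * cc (g ++ z) - cc v * ca (g ++ z)| : ℤ):ℝ) ≤ ((q * (16 * C1^2 * (ca v)^2) : ℤ) : ℝ) := by exact_mod_cast m.2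
      have h3 : (ca v : ℝ) ≤ C2 * ca (g ++ z) := by exact_mod_cast hC2 v hv _ hgz
      rw [Int.cast_mul, Int.cast_abs (a := ca v * cc (g ++ z) - cc v * ca (g ++ z))] at h2
      set D := |((ca v * cc (g ++ z) - cc v * ca (g ++ z) : ℤ):ℝ)|
      have D0 : 0 ≤ D := abs_nonneg _
      have h4 : (Q * q) * D ≤ q * (16 * C1^2 * (ca v)^2) := by
        refine (mul_le_mul_of_nonneg_right hQ D0).trans ?_
        push_cast at h2 ⊢
        exact h2
      have h5 : D * Q ≤ 16 * C1^2 * (ca v)^2 := by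
        refine le_of_mul_le_mul_left ?_ q0
        linarith
      have h6 : 16 * (C1:ℝ)^2 * (ca v * ca v) ≤ 16 * C1^2 * (ca v * (C2 * ca (g ++ z))) := by gcongr
      nlinarith
    calc |zz g - zz v| = |(zz (g ++ z) - zz v) - (zz (g ++ z) - zz g)| := by congr 1; ring
      _ ≤ |zz (g ++ z) - zz v| + |zz (g ++ z) - zz g| := abs_sub _ _
      _ ≤ _ := add_le_add f2 f1
  have m0 := hm g0 hg0
  have Y0 : 0 ≤ Y := (ca_pos (hp g0 m0.1)).le.trans (hY g0 m0.1)
  have := count (S := S) (l := l) (x0 := ca g0) (y0 := cc g0) (C0 := C0) (q := 1) (T := 32 * C1^2 * C2 * Y^2 / Q + 2 * C0) ?_ ?_ (cprim g0) (one_le_ca (hp g0 m0.1)) ?_ le_rfl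
      (by positivity) ?_ ?_
  · simpa using this
  · intro w hw; exact hl w (hm w hw).1
  · intro w hw; exact hp w (hm w hw).1
  · intro w hw; exact hC w (hm w hw).1 g0 m0.1
  · intro w hw; exact one_dvd _
  · intro w hw
    have mw := hm w hw
    have x1 := ca_pos (hp w mw.1)
    have x0 := ca_pos (hp g0 m0.1)
    have e : ((ca g0 * cc w - cc g0 * ca w : ℤ):ℝ) = (ca g0 * ca w) * ((zz w - zz v) - (zz g0 - zz v)) := by
      have z1 : zz w * ca w = cc w := by rw [zz]; field_simp
      have z0 : zz g0 * ca g0 = cc g0 := by rw [zz]; field_simp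
      push_cast
      linear_combination (-(ca g0 : ℝ)) * z1 + (ca w : ℝ) * z0
    rw [Int.cast_abs, e, abs_mul, abs_of_pos (mul_pos x0 x1)]
    have k1 := key w hw
    have k0 := key g0 hg0
    have k2 : |(zz w - zz v) - (zz g0 - zz v)| ≤ 32 * C1^2 * C2 / Q + (1 / (ca w : ℝ)^2 + 1 / (ca g0 : ℝ)^2) := by
      refine (abs_sub _ _).trans ((add_le_add k1 k0).trans (le_of_eq ?_))
      ring
    refine (mul_le_mul_of_nonneg_left k2 (by positivity)).trans ?_
    rw [mul_add]
    refine add_le_add ?_ ?_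
    · rw [mul_div_assoc']
      refine div_le_div_of_nonneg_right ?_ hQ0.le
      have := mul_le_mul (hY g0 m0.1) (hY w mw.1) x1.le Y0
      calc (ca g0 : ℝ) * ca w * (32 * C1^2 * C2) ≤ (Y * Y) * (32 * C1^2 * C2) := by gcongr
        _ = _ := by ring
    · have r1 : (ca w : ℝ) ≤ C0 * ca g0 := by exact_mod_cast hC w mw.1 g0 m0.1
      have r2 : (ca g0 : ℝ) ≤ C0 * ca w := by exact_mod_cast hC g0 m0.1 w mw.1
      have : (ca g0 : ℝ) * ca w * (1 / (ca w : ℝ)^2 + 1 / (ca g0 : ℝ)^2) = ca g0 / ca w + ca w / ca g0 := by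
        field_simp
      rw [this]
      have s1 : (ca g0 : ℝ) / ca w ≤ C0 := by rw [div_le_iff₀ x1]; exact r2
      have s2 : (ca w : ℝ) / ca g0 ≤ C0 := by rw [div_le_iff₀ x0]; exact r1
      linarith
end

section
variable {A : Finset ℕ} {K k0 : ℕ} {B : ℕ → Finset (List ℕ)} {W : ℕ → ℝ}

structure Om (A : Finset ℕ) (K k0 : ℕ) (B : ℕ → Finset (List ℕ)) (W : ℕ → ℝ) (C1 N J : ℕ) (F : List ℕ) : Prop where
  chn : Chn A K k0 B W
  one : 1 ≤ C1
  letF : ∀ x ∈ F, x ∈ A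
  pwF : Pw F
  lo : ∀ u ∈ PP B 0 J, ∀ w ∈ PP B 0 J, (N:ℤ) ≤ C1 * ca (u ++ (F ++ w.reverse))
  hi : ∀ u ∈ PP B 0 J, ∀ w ∈ PP B 0 J, ca (u ++ (F ++ w.reverse)) ≤ N
  J1 : (N:ℝ) ^ (0.499:ℝ) ≤ Wq W 0 J
  J2 : Wq W 0 J ≤ (N:ℝ) ^ (0.5:ℝ)
  F1 : (ca F : ℝ) ≤ (N:ℝ) ^ (0.004:ℝ)

lemma Chn.ne (h : Chn A K k0 B W) (i n : ℕ) : (PP B i n).Nonempty := by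
  rw [← Finset.card_pos]
  have := h.card i n
  have h2 : (0:ℝ) < (Wq W i n) ^ (1.96:ℝ) := rpow_pos_of_pos (by linarith [h.Wq1 i n]) _
  exact_mod_cast lt_of_lt_of_le h2 this

lemma ev_rpow {C a b : ℝ} (hab : a < b) : ∀ᶠ N : ℕ in atTop, C * (N:ℝ) ^ a ≤ (N:ℝ) ^ b := by
  have h1 : Tendsto (fun N : ℕ => (N:ℝ) ^ (b - a)) atTop atTop :=
    (tendsto_rpow_atTop (by linarith)).comp tendsto_natCast_atTop_atTop
  filter_upwards [h1.eventually_ge_atTop C, eventually_gt_atTop 0] with N hN h0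
  have h0' : (0:ℝ) < N := by exact_mod_cast h0
  calc C * (N:ℝ)^a ≤ (N:ℝ)^(b-a) * (N:ℝ)^a := by gcongr
    _ = (N:ℝ)^b := by rw [← rpow_add h0']; congr 1; ring

lemma filler {a K : ℕ} (ha : 0 < a) (haK : a ≤ K) {D N : ℤ} (hD : 1 ≤ D) (hDN : D ≤ N) :
    ∃ F : List ℕ, (∀ x ∈ F, x = a) ∧ D * ca F ≤ N ∧ N ≤ D * ((K+1) * ca F) := by
  have hp : ∀ m, Pw (List.replicate m a) := fun m x hx => by rw [List.eq_of_mem_replicate hx]; exact ha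
  have ex : ∃ m, N < D * ca (List.replicate (m+1) a) := by
    refine ⟨2 * (N.toNat + 1), ?_⟩
    have h1 := ca_ge_pow (hp (2 * (N.toNat + 1) + 1))
    rw [List.length_replicate, show (2 * (N.toNat + 1) + 1)/2 = N.toNat + 1 by omega] at h1
    have h2 : N.toNat + 1 < 2^(N.toNat+1) := Nat.lt_two_pow_self
    have h3 : ((N.toNat + 1 : ℕ) : ℤ) < 2^(N.toNat+1) := by exact_mod_cast h2
    have h4 : N ≤ (N.toNat : ℤ) := Int.self_le_toNat N
    push_cast at h3
    nlinarith
  classical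
  set m := Nat.find ex with hm
  have h1 : N < D * ca (List.replicate (m+1) a) := Nat.find_spec ex
  have h0 : D * ca (List.replicate m a) ≤ N := by
    rcases Nat.eq_zero_or_pos m with h | h
    · rw [h]; simpa using hDN
    · have := Nat.find_min ex (m := m - 1) (by omega)
      rw [not_lt, show m - 1 + 1 = m by omega] at this
      exact this
  refine ⟨List.replicate m a, fun x hx => List.eq_of_mem_replicate hx, h0, h1.le.trans ?_⟩
  refine mul_le_mul_of_nonneg_left ?_ (by linarith)
  rw [List.replicate_succ, ca_cons]
  have c1 := cc_le_ca (hp m)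
  have c2 := one_le_ca (hp m)
  have c3 : (a:ℤ) ≤ K := by exact_mod_cast haK
  nlinarith

lemma setup (h : Chn A K k0 B W) (hK : ∀ a ∈ A, a ≤ K) (hpos : ∀ a ∈ A, 0 < a) (hne : A.Nonempty) :
    ∃ C1 E0 : ℕ, exp 10 ≤ E0 ∧ ∀ᶠ N : ℕ in atTop, ∃ J F, Om A K k0 B W C1 N J F := by
  obtain ⟨E, hE⟩ := exists_nat_ge (exp 10)
  obtain ⟨a, ha⟩ := hne
  obtain ⟨C, hC1, hC⟩ := h.scale
  have E1 : (1:ℝ) ≤ E := le_trans (by rw [← exp_zero]; exact exp_le_exp.mpr (by norm_num)) hE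
  have E1' : 1 ≤ E := by exact_mod_cast E1
  refine ⟨4 * E^4 * (K+1), E, hE, ?_⟩
  filter_upwards [ev_rpow (C := 2 * E * C) (show (0.4995:ℝ) < 0.5 by norm_num), ev_rpow (C := 1) (show (0.997:ℝ) < 0.998 by norm_num), eventually_ge_atTop 1] with N n1 n2 n3
  have N1 : (1:ℝ) ≤ N := by exact_mod_cast n3
  have N0 : (0:ℝ) < N := by linarith
  obtain ⟨J, j1, j2, -⟩ := hC ((N:ℝ)^(0.499:ℝ)) (one_le_rpow N1 (by norm_num))
  obtain ⟨w0, hw0⟩ := h.ne 0 J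
  have X1 := h.Wq1 0 J
  have hn0 := h.hi 0 J w0 hw0
  have j3 : 2 * E * Wq W 0 J ≤ (N:ℝ)^(0.5:ℝ) := by
    refine le_trans ?_ n1
    rw [mul_assoc (2 * (E:ℝ))]
    refine mul_le_mul_of_nonneg_left (j2.trans ?_) (by positivity)
    rw [← rpow_mul N0.le]
    gcongr
    norm_num
  have p0 := h.pw hw0
  have q1 := one_le_ca p0
  have hDN : 4 * (E:ℤ)^2 * (ca w0)^2 ≤ N := by
    have : (2 * E * (ca w0 : ℝ))^2 ≤ N := by
      calc (2 * E * (ca w0 : ℝ))^2 ≤ ((N:ℝ)^(0.5:ℝ))^2 := by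
            have := (ca_pos p0).le
            have : 2 * E * (ca w0 : ℝ) ≤ (N:ℝ)^(0.5:ℝ) := le_trans (by gcongr) j3
            gcongr
        _ = (N:ℝ) := by rw [← rpow_natCast, ← rpow_mul N0.le]; norm_num
    have h2 : 4 * (E:ℝ)^2 * (ca w0 : ℝ)^2 ≤ N := by linarith
    exact_mod_cast h2
  have hD1 : 1 ≤ 4 * (E:ℤ)^2 * (ca w0)^2 := by
    have : (1:ℤ) ≤ E := by exact_mod_cast E1'
    have : (1:ℤ) ≤ E^2 := one_le_pow₀ this
    have : 1 ≤ (ca w0)^2 := one_le_pow₀ q1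
    nlinarith
  obtain ⟨F, f1, f2, f3⟩ := filler (hpos a ha) (hK a ha) hD1 hDN
  have pF : Pw F := fun x hx => by rw [f1 x hx]; exact hpos a ha
  have cF := one_le_ca pF
  have sp : ∀ u ∈ PP B 0 J, ca u ≤ E * ca w0 ∧ ca w0 ≤ E * ca u := by
    intro u hu
    have s1 := h.spread hu hw0
    have s2 := h.spread hw0 hu
    have c1 := ca_pos p0
    have c2 := ca_pos (h.pw hu)
    have t1 : (ca u : ℝ) ≤ E * ca w0 := s1.trans (by gcongr)
    have t2 : (ca w0 : ℝ) ≤ E * ca u := s2.trans (by gcongr)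
    exact ⟨by exact_mod_cast t1, by exact_mod_cast t2⟩
  refine ⟨J, F, h, ?_, fun x hx => by rw [f1 x hx]; exact ha, pF, ?_, ?_, j1, ?_, ?_⟩
  · have : 1 ≤ E^4 := Nat.one_le_pow _ _ (by omega)
    nlinarith [Nat.zero_le K]
  · intro u hu w hw
    have a1 := ca_mul_le u (F ++ w.reverse)
    have a2 := ca_mul_le F w.reverse
    rw [ca_rev] at a2
    have b1 := (sp u hu).2
    have b2 := (sp w hw).2
    have c1 := one_le_ca (h.pw hu)
    have c2 := one_le_ca (h.pw hw)
    have d1 : ca w0 * ca w0 ≤ (E * ca u) * (E * ca w) := mul_le_mul b1 b2 (by linarith) (by positivity)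
    have d2 : ca u * (ca F * ca w) ≤ ca (u ++ (F ++ w.reverse)) :=
      (mul_le_mul_of_nonneg_left a2 (by linarith)).trans a1
    calc (N:ℤ) ≤ 4 * E^2 * (ca w0)^2 * ((K+1) * ca F) := f3
      _ = (4 * E^2 * ((K+1) * ca F)) * (ca w0 * ca w0) := by ring
      _ ≤ (4 * E^2 * ((K+1) * ca F)) * ((E * ca u) * (E * ca w)) :=
          mul_le_mul_of_nonneg_left d1 (by positivity)
      _ = (4 * E^4 * (K+1)) * (ca u * (ca F * ca w)) := by ring
      _ ≤ (4 * E^4 * (K+1)) * ca (u ++ (F ++ w.reverse)) := mul_le_mul_of_nonneg_left d2 (by positivity)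
      _ = _ := by push_cast; ring
  · intro u hu w hw
    have a1 := ca_le_mul (h.pw hu) (pF.append (h.pw hw).rev)
    have a2 := ca_le_mul pF (h.pw hw).rev
    rw [ca_rev] at a2
    have b1 := (sp u hu).1
    have b2 := (sp w hw).1
    have c1 := one_le_ca (h.pw hu)
    have c2 := one_le_ca (h.pw hw)
    have d1 : ca u * ca w ≤ (E * ca w0) * (E * ca w0) := mul_le_mul b1 b2 (by linarith) (by positivity)
    calc ca (u ++ (F ++ w.reverse)) ≤ 2 * (ca u * (2 * (ca F * ca w))) :=
          a1.trans (mul_le_mul_of_nonneg_left (mul_le_mul_of_nonneg_left a2 (by linarith)) (by norm_num))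
      _ = 4 * ca F * (ca u * ca w) := by ring
      _ ≤ 4 * ca F * ((E * ca w0) * (E * ca w0)) := mul_le_mul_of_nonneg_left d1 (by positivity)
      _ = 4 * E^2 * (ca w0)^2 * ca F := by ring
      _ ≤ N := f2
  · refine le_trans ?_ j3
    nlinarith
  · have l0 := h.lo 0 J w0 hw0
    have l1 : (N:ℝ)^(0.4985:ℝ) ≤ ca w0 := by
      refine le_trans ?_ ((rpow_le_rpow (by positivity) j1 (by norm_num : (0:ℝ) ≤ 0.999)).trans l0)
      rw [← rpow_mul N0.le]
      gcongr
      norm_num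
    have l2 : (N:ℝ)^(0.997:ℝ) ≤ (ca w0 : ℝ)^2 := by
      calc (N:ℝ)^(0.997:ℝ) = ((N:ℝ)^(0.4985:ℝ))^2 := by rw [← rpow_natCast, ← rpow_mul N0.le]; norm_num
        _ ≤ _ := by gcongr
    have f2' : 4 * (E:ℝ)^2 * (ca w0)^2 * ca F ≤ N := by exact_mod_cast f2
    have g0 := (ca_pos pF)
    have g1 : (N:ℝ)^(0.997:ℝ) * ca F ≤ N := by
      refine le_trans ?_ f2'
      gcongr
      have : (1:ℝ) ≤ E^2 := one_le_pow₀ E1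
      nlinarith
    have g2 : (N:ℝ) = N^(0.997:ℝ) * N^(0.003:ℝ) := by rw [← rpow_add N0]; norm_num
    have g3 : (ca F : ℝ) ≤ (N:ℝ)^(0.003:ℝ) := by
      refine le_of_mul_le_mul_left (g1.trans_eq g2) (by positivity)
    refine g3.trans ?_
    gcongr
    norm_num
end

section
variable {A : Finset ℕ} {K k0 : ℕ} {B : ℕ → Finset (List ℕ)} {W : ℕ → ℝ}

structure WS (U : Finset (List ℕ)) (Y : ℝ) : Prop where
  len : ∃ l, ∀ u ∈ U, u.length = l
  pw : ∀ u ∈ U, Pw u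
  hi : ∀ u ∈ U, (ca u : ℝ) ≤ Y
  ne : U.Nonempty

lemma WS.cat {U V : Finset (List ℕ)} {Y Y' : ℝ} (h : WS U Y) (h' : WS V Y') : WS (cat U V) (2 * (Y * Y')) := by
  refine ⟨?_, ?_, ?_, ?_⟩
  · obtain ⟨l, hl⟩ := h.len
    obtain ⟨l', hl'⟩ := h'.len
    refine ⟨l + l', fun w hw => ?_⟩
    obtain ⟨u, hu, v, hv, rfl⟩ := mem_cat.mp hw
    rw [List.length_append, hl u hu, hl' v hv]
  · intro w hw
    obtain ⟨u, hu, v, hv, rfl⟩ := mem_cat.mp hw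
    exact (h.pw u hu).append (h'.pw v hv)
  · intro w hw
    obtain ⟨u, hu, v, hv, rfl⟩ := mem_cat.mp hw
    have h1 : (ca (u ++ v) : ℝ) ≤ 2 * (ca u * ca v) := by exact_mod_cast ca_le_mul (h.pw u hu) (h'.pw v hv)
    have h2 := ca_pos (h.pw u hu)
    have h3 := ca_pos (h'.pw v hv)
    have := mul_le_mul (h.hi u hu) (h'.hi v hv) h3.le (h2.le.trans (h.hi u hu))
    linarith
  · obtain ⟨u, hu⟩ := h.ne
    obtain ⟨v, hv⟩ := h'.ne
    exact ⟨u ++ v, mem_cat.mpr ⟨u, hu, v, hv, rfl⟩⟩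

lemma WS.rv {U : Finset (List ℕ)} {Y : ℝ} (h : WS U Y) : WS (rv U) Y := by
  refine ⟨?_, ?_, ?_, ?_⟩
  · obtain ⟨l, hl⟩ := h.len
    refine ⟨l, fun w hw => ?_⟩
    obtain ⟨u, hu, rfl⟩ := mem_rv.mp hw
    rw [List.length_reverse, hl u hu]
  · intro w hw
    obtain ⟨u, hu, rfl⟩ := mem_rv.mp hw
    exact (h.pw u hu).rev
  · intro w hw
    obtain ⟨u, hu, rfl⟩ := mem_rv.mp hw
    rw [ca_rev]; exact h.hi u hu
  · obtain ⟨u, hu⟩ := h.ne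
    exact ⟨u.reverse, mem_rv.mpr ⟨u, hu, rfl⟩⟩

lemma WS.PP (h : Chn A K k0 B W) (i n : ℕ) : WS (PP B i n) (Wq W i n) :=
  ⟨⟨_, h.len i n⟩, fun _ hu => h.pw hu, h.hi i n, h.ne i n⟩

lemma WS.sing {F : List ℕ} (h : Pw F) : WS {F} (ca F) := by
  refine ⟨⟨F.length, ?_⟩, ?_, ?_, ⟨F, by simp⟩⟩ <;> intro u hu <;> rw [Finset.mem_singleton] at hu <;> subst hu
  · rfl
  · exact h
  · exact le_rfl

lemma WS.card {U V : Finset (List ℕ)} {Y : ℝ} (h : WS U Y) : (_root_.cat U V).card = U.card * V.card := by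
  obtain ⟨l, hl⟩ := h.len
  exact card_cat hl

def Omg (B : ℕ → Finset (List ℕ)) (J : ℕ) (F : List ℕ) : Finset (List ℕ) :=
  cat (PP B 0 J) (cat {F} (rv (PP B 0 J)))

lemma Om.card {C1 N J : ℕ} {F : List ℕ} (om : Om A K k0 B W C1 N J F) : (Omg B J F).card = (PP B 0 J).card * (PP B 0 J).card := by
  rw [Omg, (WS.PP om.chn 0 J).card, (WS.sing om.pwF).card, card_rv]; simp

lemma Om.bd {C1 N J : ℕ} {F : List ℕ} (om : Om A K k0 B W C1 N J F) {w : List ℕ} (hw : w ∈ Omg B J F) :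
    (N:ℤ) ≤ C1 * ca w ∧ ca w ≤ N := by
  obtain ⟨u, hu, v, hv, rfl⟩ := mem_cat.mp hw
  obtain ⟨f, hf, z, hz, rfl⟩ := mem_cat.mp hv
  obtain ⟨r, hr, rfl⟩ := mem_rv.mp hz
  rw [Finset.mem_singleton] at hf
  subst hf
  exact ⟨om.lo u hu r hr, om.hi u hu r hr⟩

lemma core2 {C1 N J : ℕ} {F : List ℕ} (om : Om A K k0 B W C1 N J F) {U V : Finset (List ℕ)} {X Y : ℝ}
    (hU : WS U X) (hV : WS V Y) (hΩ : Omg B J F = cat U V)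
    {q a b : ZMod (N+1) → ℤ} (hap : ∀ k : ZMod (N+1), Ap (N+1) (Nat.sqrt (N+1)) k.val (q k) (a k) (b k))
    (Θ : Finset (ZMod (N+1)))
    (hst : (∃ T : ℤ, (∀ k ∈ Θ, q k ≤ T ∧ |b k| ≤ T) ∧ ∀ u ∈ U, 4 * T^2 ≤ ca u) ∨
      (∀ v ∈ V, 100 * (2 * C1 * ca v)^4 ≤ N))
    {Cnt D : ℝ} (hCnt0 : 0 ≤ Cnt)
    (hCnt : ∀ k ∈ Θ, ∀ v ∈ V, ((V.filter fun v' => q k ∣ ca v * cc v' - cc v * ca v' ∧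
      |b k| * |ca v * cc v' - cc v * ca v'| ≤ q k * (16 * C1^2 * (ca v)^2)).card : ℝ) ≤ Cnt)
    (hD : X^2 * Cnt ≤ D * (U.card * V.card)) :
    ∑ k ∈ Θ, ‖SS (N+1) (Omg B J F) k‖^2 ≤ 576 * (8 * C1 + 1) * D * ((Omg B J F).card:ℝ)^2 := by
  obtain ⟨l, hl⟩ := hU.len
  have hm : ∀ u ∈ U, ∀ v ∈ V, u ++ v ∈ Omg B J F := fun u hu v hv => by
    rw [hΩ]; exact mem_cat.mpr ⟨u, hu, v, hv, rfl⟩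
  have := core om.one hl hU.pw hV.pw hU.ne hV.ne (fun u hu v hv => (om.bd (hm u hu v hv)).1)
    (fun u hu v hv => (om.bd (hm u hu v hv)).2) hap Θ hst hU.hi hCnt0 hCnt
  rw [hΩ, hU.card]
  refine this.trans ?_
  push_cast
  calc 576 * X^2 * U.card * V.card * ((8 * C1 + 1) * Cnt)
      = (576 * (8 * C1 + 1) * (U.card * V.card)) * (X^2 * Cnt) := by ring
    _ ≤ (576 * (8 * C1 + 1) * (U.card * V.card)) * (D * (U.card * V.card)) :=
        mul_le_mul_of_nonneg_left hD (by positivity)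
    _ = _ := by ring

lemma Om.split {C1 N J : ℕ} {F : List ℕ} (_ : Om A K k0 B W C1 N J F) {i : ℕ} (hi : i ≤ J) :
    PP B 0 J = cat (PP B 0 i) (PP B i (J - i)) := by
  have := PP_add B 0 i (J - i)
  rwa [Nat.add_sub_cancel' hi, zero_add] at this

lemma Wsplit (W : ℕ → ℝ) {i J : ℕ} (hi : i ≤ J) : Wq W 0 J = Wq W 0 i * Wq W i (J - i) := by
  have := Wq_add W 0 i (J - i)
  rwa [Nat.add_sub_cancel' hi, zero_add] at this

lemma Chn.ratio (h : Chn A K k0 B W) {E0 : ℕ} (hE : exp 10 ≤ E0) {i n : ℕ} :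
    ∀ v ∈ PP B i n, ∀ v' ∈ PP B i n, ca v ≤ E0 * ca v' := by
  intro v hv v' hv'
  have s1 := h.spread hv hv'
  have c1 := ca_pos (h.pw hv')
  have : (ca v : ℝ) ≤ E0 * ca v' := s1.trans (by gcongr)
  exact_mod_cast this

lemma Chn.ratio_rv (h : Chn A K k0 B W) {E0 : ℕ} (hE : exp 10 ≤ E0) {i n : ℕ} :
    ∀ v ∈ rv (PP B i n), ∀ v' ∈ rv (PP B i n), ca v ≤ E0 * ca v' := by
  intro v hv v' hv'
  obtain ⟨u, hu, rfl⟩ := mem_rv.mp hv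
  obtain ⟨u', hu', rfl⟩ := mem_rv.mp hv'
  rw [ca_rev, ca_rev]
  exact h.ratio hE u hu u' hu'

lemma large (h : Chn A K k0 B W) {E0 : ℕ} (hE : exp 10 ≤ E0) (C1 : ℕ) :
    ∃ D : ℝ, 0 ≤ D ∧ ∀ᶠ N : ℕ in atTop, ∀ J F, Om A K k0 B W C1 N J F → ∀ q a b : ZMod (N+1) → ℤ,
      (∀ k : ZMod (N+1), Ap (N+1) (Nat.sqrt (N+1)) k.val (q k) (a k) (b k)) → ∀ Θ : Finset (ZMod (N+1)),
      (∀ k ∈ Θ, (N:ℝ)^(0.1:ℝ) ≤ q k ∨ (N:ℝ)^(0.1:ℝ) ≤ ((|b k| : ℤ):ℝ)) →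
      ∑ k ∈ Θ, ‖SS (N+1) (Omg B J F) k‖^2 ≤ D * ((Omg B J F).card:ℝ)^2 := by
  obtain ⟨C, hC1, hC⟩ := h.scale
  refine ⟨576 * (8 * C1 + 1) * (1024 * C1^2 * (E0 + 1)), by positivity, ?_⟩
  filter_upwards [eventually_ge_atTop 1, ev_rpow (C := 100 * (2 * C1 * C)^4) (show (0.5:ℝ) < 1 by norm_num)]
    with N n1 n2 J F om q a b hap Θ hΘ
  have N1 : (1:ℝ) ≤ N := by exact_mod_cast n1
  have N0 : (0:ℝ) < N := by linarith
  set P := (N:ℝ)^(0.1:ℝ) with hP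
  have P1 : 1 ≤ P := one_le_rpow N1 (by norm_num)
  obtain ⟨i, i1, i2, i3⟩ := hC P P1
  have hi : i ≤ J := i3 J (le_trans (rpow_le_rpow_of_exponent_le N1 (by norm_num)) om.J1)
  set Y := Wq W 0 i with hY
  set Z := Wq W i (J - i) with hZ
  set X := Wq W 0 J with hX
  have hXYZ : X = Y * Z := Wsplit W hi
  have Y1 : 1 ≤ Y := h.Wq1 0 i
  have Z1 : 1 ≤ Z := h.Wq1 i _
  have X1 : 1 ≤ X := h.Wq1 0 J
  have wU := (WS.PP h 0 J).cat ((WS.sing om.pwF).cat (WS.PP h i (J - i)).rv)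
  have wV := (WS.PP h 0 i).rv
  have hΩ : Omg B J F = cat (cat (PP B 0 J) (cat {F} (rv (PP B i (J - i))))) (rv (PP B 0 i)) := by
    rw [cat_assoc, cat_assoc, ← rv_cat, ← om.split hi, Omg]
  have c1 : (1:ℝ) ≤ C1 := by exact_mod_cast om.one
  refine core2 om wU wV hΩ hap Θ (Or.inr ?_) (Cnt := (32 * C1^2 * Y^2 / P + 1) * (E0 + 1)) (by positivity) ?_ ?_
  · intro v hv
    have f1 := wV.hi v hv
    have f0 := ca_pos (wV.pw v hv)
    have f2 : (ca v : ℝ) ≤ C * N^(0.125:ℝ) := by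
      refine f1.trans (i2.trans ?_)
      rw [hP, ← rpow_mul N0.le]
      gcongr
      norm_num
    have : 100 * (2 * C1 * (ca v : ℝ))^4 ≤ N := by
      calc 100 * (2 * C1 * (ca v : ℝ))^4 ≤ 100 * (2 * C1 * (C * N^(0.125:ℝ)))^4 := by gcongr
        _ = 100 * (2 * C1 * C)^4 * (N^(0.125:ℝ))^4 := by ring
        _ = 100 * (2 * C1 * C)^4 * N^(0.5:ℝ) := by
            rw [← rpow_natCast ((N:ℝ)^(0.125:ℝ)), ← rpow_mul N0.le]; norm_num
        _ ≤ N := by simpa using n2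
    exact_mod_cast this
  · intro k hk v hv
    obtain ⟨l, hl⟩ := wV.len
    exact cnt_simple hl wV.pw om.one (h.ratio_rv hE) wV.hi (hap k).1 (by linarith) (hΘ k hk) hv
  · have e1 := om.card
    rw [hΩ, wU.card] at e1
    have e2 : ((cat (PP B 0 J) (cat {F} (rv (PP B i (J - i))))).card : ℝ) * (rv (PP B 0 i)).card
       = (PP B 0 J).card * (PP B 0 J).card := by exact_mod_cast e1
    rw [e2]
    have e3 := h.card 0 J
    set f := (ca F : ℝ)
    have f0 : 0 < f := ca_pos om.pwF
    have g1 : (32 * C1^2 * Y^2 / P + 1) ≤ 64 * C1^2 * Y^2 / P := by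
      have : 1 ≤ 32 * C1^2 * Y^2 / P := by
        rw [le_div_iff₀ (by linarith), one_mul]
        have : (1:ℝ) ≤ C1^2 := one_le_pow₀ c1
        have : P ≤ Y^2 := by nlinarith
        nlinarith
      have e : 64 * C1^2 * Y^2 / P = 32 * C1^2 * Y^2 / P + 32 * C1^2 * Y^2 / P := by ring
      linarith
    have g2 : f^2 ≤ (N:ℝ)^(0.008:ℝ) := by
      calc f^2 ≤ ((N:ℝ)^(0.004:ℝ))^2 := by gcongr; exact om.F1
        _ = _ := by rw [← rpow_natCast, ← rpow_mul N0.le]; norm_num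
    have g3 : X^4 ≤ (X^(1.96:ℝ) * X^(1.96:ℝ)) * (N:ℝ)^(0.04:ℝ) := by
      have : X^(0.08:ℝ) ≤ (N:ℝ)^(0.04:ℝ) := by
        calc X^(0.08:ℝ) ≤ ((N:ℝ)^(0.5:ℝ))^(0.08:ℝ) := by gcongr; exact om.J2
          _ = _ := by rw [← rpow_mul N0.le]; norm_num
      calc X^4 = X^(1.96:ℝ) * X^(1.96:ℝ) * X^(0.08:ℝ) := by
            rw [← rpow_add (by linarith), ← rpow_add (by linarith), ← rpow_natCast]; norm_num
        _ ≤ _ := by gcongr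
    have g4 : (N:ℝ)^(0.008:ℝ) * (N:ℝ)^(0.04:ℝ) ≤ P := by
      rw [hP, ← rpow_add N0]; exact rpow_le_rpow_of_exponent_le N1 (by norm_num)
    calc (2 * (X * (2 * (f * Z))))^2 * ((32 * C1^2 * Y^2 / P + 1) * (E0 + 1))
        ≤ (2 * (X * (2 * (f * Z))))^2 * ((64 * C1^2 * Y^2 / P) * (E0 + 1)) := by gcongr
      _ = (1024 * C1^2 * (E0 + 1)) * (f^2 * X^4 / P) := by rw [hXYZ]; ring
      _ ≤ (1024 * C1^2 * (E0 + 1)) * ((N:ℝ)^(0.008:ℝ) * ((X^(1.96:ℝ) * X^(1.96:ℝ)) * (N:ℝ)^(0.04:ℝ)) / P) := by gcongr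
      _ = (1024 * C1^2 * (E0 + 1)) * ((X^(1.96:ℝ) * X^(1.96:ℝ)) * (((N:ℝ)^(0.008:ℝ) * (N:ℝ)^(0.04:ℝ)) / P)) := by ring
      _ ≤ (1024 * C1^2 * (E0 + 1)) * ((X^(1.96:ℝ) * X^(1.96:ℝ)) * 1) := by
          gcongr; rw [div_le_one (by linarith)]; exact g4
      _ ≤ (1024 * C1^2 * (E0 + 1)) * (((PP B 0 J).card : ℝ) * (PP B 0 J).card) := by
          rw [mul_one]; gcongr

lemma scale2 (h : Chn A K k0 B W) : ∃ C3 C4 : ℝ, 1 ≤ C3 ∧ 1 ≤ C4 ∧ ∀ P : ℝ, 1 ≤ P → ∃ j0 j1, j0 ≤ j1 ∧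
    100 * P^3 ≤ Wq W 0 j0 ∧ Wq W 0 j0 ≤ C3 * P^(3.1:ℝ) ∧ P * Wq W 0 j0 ≤ Wq W 0 j1 ∧
    Wq W 0 j1 ≤ C4 * P^(4.2:ℝ) ∧ ∀ m, C3 * P^(4.1:ℝ) ≤ Wq W 0 m → j1 ≤ m := by
  obtain ⟨C, hC1, hC⟩ := h.scale
  set C3 := C * (100:ℝ)^(1.001:ℝ) with hC3
  have c3 : 1 ≤ C3 := by
    have : (1:ℝ) ≤ (100:ℝ)^(1.001:ℝ) := one_le_rpow (by norm_num) (by norm_num)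
    nlinarith
  refine ⟨C3, C * C3^(1.001:ℝ), c3, ?_, ?_⟩
  · have : (1:ℝ) ≤ C3^(1.001:ℝ) := one_le_rpow c3 (by norm_num)
    nlinarith
  intro P P1
  have P0 : 0 < P := by linarith
  obtain ⟨j0, a1, a2, a3⟩ := hC (100 * P^3) (by have := one_le_pow₀ P1 (n := 3); linarith)
  have X1 := h.Wq1 0 j0
  obtain ⟨j1, b1, b2, b3⟩ := hC (P * Wq W 0 j0) (by nlinarith)
  have a4 : Wq W 0 j0 ≤ C3 * P^(3.1:ℝ) := by
    refine a2.trans ?_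
    rw [mul_rpow (by norm_num) (by positivity), ← rpow_natCast, ← rpow_mul P0.le, hC3, mul_assoc]
    gcongr
    norm_num
  have a5 : P * Wq W 0 j0 ≤ C3 * P^(4.1:ℝ) := by
    calc P * Wq W 0 j0 ≤ P * (C3 * P^(3.1:ℝ)) := by gcongr
      _ = C3 * (P^(1:ℝ) * P^(3.1:ℝ)) := by rw [rpow_one]; ring
      _ = _ := by rw [← rpow_add P0]; norm_num
  refine ⟨j0, j1, a3 j1 (a1.trans (le_trans ?_ b1)), a1, a4, b1, ?_, fun m hm => b3 m (a5.trans hm)⟩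
  · nlinarith
  · calc Wq W 0 j1 ≤ C * (P * Wq W 0 j0)^(1.001:ℝ) := b2
      _ ≤ C * (C3 * P^(4.1:ℝ))^(1.001:ℝ) := by gcongr
      _ = C * C3^(1.001:ℝ) * P^(4.1 * 1.001 : ℝ) := by
          rw [mul_rpow (by linarith) (by positivity), ← rpow_mul P0.le]; ring
      _ ≤ _ := by gcongr; norm_num

lemma ca_big (h : Chn A K k0 B W) {P : ℕ} (hP : 1 ≤ P) {j0 : ℕ} (hj : 100 * (P:ℝ)^3 ≤ Wq W 0 j0) :
    ∀ u ∈ PP B 0 j0, 4 * (2 * (P:ℤ))^2 ≤ ca u := by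
  intro u hu
  have P1 : (1:ℝ) ≤ P := by exact_mod_cast hP
  have l := h.lo 0 j0 u hu
  have : 4 * (2 * (P:ℝ))^2 ≤ ca u := by
    refine le_trans ?_ l
    calc 4 * (2 * (P:ℝ))^2 = ((4 * (P:ℝ))^3)^((2:ℝ)/3) := by
          rw [← rpow_natCast (4 * (P:ℝ)) 3, ← rpow_mul (by positivity)]; norm_num; ring
      _ ≤ (Wq W 0 j0)^((2:ℝ)/3) := by
          gcongr
          refine le_trans ?_ hj
          have := pow_nonneg (by linarith : (0:ℝ) ≤ P) 3
          nlinarith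
      _ ≤ _ := rpow_le_rpow_of_exponent_le (h.Wq1 0 j0) (by norm_num)
  exact_mod_cast this
end

section
variable {A : Finset ℕ} {K k0 : ℕ} {B : ℕ → Finset (List ℕ)} {W : ℕ → ℝ}

lemma pw_half {P : ℝ} (hP : 1 ≤ P) : 1 ≤ P^(0.5:ℝ) ∧ P^(0.5:ℝ) ≤ P ∧ (P^(0.5:ℝ))^2 = P ∧ P^(0.4:ℝ) / P^(0.5:ℝ) = P^(-0.1:ℝ) := by
  have P0 : 0 < P := by linarith
  refine ⟨one_le_rpow hP (by norm_num), ?_, ?_, ?_⟩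
  · conv_rhs => rw [← rpow_one P]
    exact rpow_le_rpow_of_exponent_le hP (by norm_num)
  · rw [← rpow_natCast, ← rpow_mul P0.le]; norm_num
  · rw [← rpow_sub P0]; norm_num

lemma small_pw {C P X e t : ℝ} (hC : 1 ≤ C) (hP : 1 ≤ P) (hX : 0 ≤ X) (h : X ≤ C * P^e) (ht : 0 ≤ t) (ht1 : t ≤ 1)
    (he : e * t ≤ 0.4) : X^t ≤ C * P^(0.4:ℝ) := by
  have P0 : 0 < P := by linarith
  calc X^t ≤ (C * P^e)^t := rpow_le_rpow hX h ht
    _ = C^t * P^(e*t) := by rw [mul_rpow (by linarith) (by positivity), ← rpow_mul P0.le]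
    _ ≤ C^(1:ℝ) * P^(0.4:ℝ) := by
        gcongr
    _ = _ := by rw [rpow_one]

lemma qcase (h : Chn A K k0 B W) {E0 : ℕ} (hE : exp 10 ≤ E0) (C1 : ℕ) :
    ∃ D : ℝ, 0 ≤ D ∧ ∀ᶠ N : ℕ in atTop, ∀ J F, Om A K k0 B W C1 N J F → ∀ q a b : ZMod (N+1) → ℤ,
      (∀ k : ZMod (N+1), Ap (N+1) (Nat.sqrt (N+1)) k.val (q k) (a k) (b k)) → ∀ P : ℕ, 1 ≤ P → (P:ℝ) ≤ (N:ℝ)^(0.1:ℝ) →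
      ∀ Θ : Finset (ZMod (N+1)), (∀ k ∈ Θ, q k ≤ 2 * P ∧ |b k| ≤ 2 * P ∧ (P:ℤ) ≤ (q k)^2) →
      ∑ k ∈ Θ, ‖SS (N+1) (Omg B J F) k‖^2 ≤ D * (P:ℝ)^(-0.1:ℝ) * ((Omg B J F).card:ℝ)^2 := by
  obtain ⟨C3, C4, c3, c4, hsc⟩ := scale2 h
  refine ⟨576 * (8 * C1 + 1) * (5 * (E0 + 1) * C3), by positivity, ?_⟩
  filter_upwards [eventually_ge_atTop 1, ev_rpow (C := C3) (show (0.41:ℝ) < 0.499 by norm_num)]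
    with N n1 n2 J F om q a b hap P hP1 hPN Θ hΘ
  have N0 : (0:ℝ) < N := by exact_mod_cast n1
  have P1 : (1:ℝ) ≤ P := by exact_mod_cast hP1
  obtain ⟨j0, j1, h01, a1, a2, -, -, a3⟩ := hsc P P1
  have hj1 : j1 ≤ J := by
    refine a3 J (le_trans ?_ (n2.trans om.J1))
    gcongr
    calc (P:ℝ)^(4.1:ℝ) ≤ ((N:ℝ)^(0.1:ℝ))^(4.1:ℝ) := by gcongr
      _ = _ := by rw [← rpow_mul N0.le]; norm_num
  have hi := h01.trans hj1
  set X := Wq W 0 j0 with hX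
  have X1 : 1 ≤ X := h.Wq1 0 j0
  obtain ⟨s1, sP, s2, s3⟩ := pw_half P1
  set s := (P:ℝ)^(0.5:ℝ) with hs
  have wU := WS.PP h 0 j0
  have wG := (WS.PP h j0 (J - j0)).cat ((WS.sing om.pwF).cat (WS.PP h j0 (J - j0)).rv)
  set G := cat (PP B j0 (J - j0)) (cat {F} (rv (PP B j0 (J - j0)))) with hG
  have wZ := wU.rv
  have wV := wG.cat wZ
  have hΩ : Omg B J F = cat (PP B 0 j0) (cat G (rv (PP B 0 j0))) := by
    rw [hG, cat_assoc, cat_assoc, ← rv_cat, ← cat_assoc, ← om.split hi, Omg]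
  have := core2 om wU wV hΩ hap Θ (Or.inl ⟨2 * P, fun k hk => ⟨(hΘ k hk).1, (hΘ k hk).2.1⟩, ca_big h hP1 a1⟩)
    (Cnt := G.card * ((4 * X^2 / s + 1) * (E0 + 1))) (D := 5 * (E0 + 1) * C3 * (P:ℝ)^(-0.1:ℝ)) (by positivity) ?_ ?_
  · refine this.trans (le_of_eq ?_); ring
  · intro k hk v hv
    obtain ⟨l, hl⟩ := wZ.len
    obtain ⟨l', hl'⟩ := wG.len
    refine (cnt_q hl' hl wZ.pw (h.ratio_rv hE) wZ.hi (hap k).1 v _).trans ?_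
    have hq1 : (1:ℝ) ≤ q k := by exact_mod_cast (hap k).1
    have hq2 : (P:ℝ) ≤ (q k)^2 := by exact_mod_cast (hΘ k hk).2.2
    have : s ≤ q k := by
      by_contra hc
      push Not at hc
      nlinarith
    gcongr
  · rw [wG.card, card_rv]
    have e3 := h.card 0 j0
    have e4 : X^(0.08:ℝ) ≤ C3 * (P:ℝ)^(0.4:ℝ) := small_pw c3 P1 (by linarith) a2 (by norm_num) (by norm_num) (by norm_num)
    have e5 : X^4 = X^(1.96:ℝ) * X^(1.96:ℝ) * X^(0.08:ℝ) := by
      rw [← rpow_add (by linarith), ← rpow_add (by linarith), ← rpow_natCast]; norm_num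
    have e6 : 1 ≤ X^2 / s := by
      rw [le_div_iff₀ (by linarith), one_mul]
      have : (P:ℝ) ≤ P^3 := le_self_pow₀ P1 (by norm_num)
      nlinarith
    calc X^2 * (G.card * ((4 * X^2 / s + 1) * (E0 + 1)))
        ≤ X^2 * (G.card * ((4 * X^2 / s + X^2 / s) * (E0 + 1))) := by gcongr
      _ = 5 * (E0 + 1) * G.card * (X^4 / s) := by ring
      _ ≤ 5 * (E0 + 1) * G.card * (((PP B 0 j0).card * (PP B 0 j0).card * (C3 * (P:ℝ)^(0.4:ℝ))) / s) := by
          rw [e5]; gcongr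
      _ = 5 * (E0 + 1) * C3 * ((P:ℝ)^(0.4:ℝ) / s) * ((PP B 0 j0).card * (G.card * (PP B 0 j0).card)) := by ring
      _ = _ := by rw [s3]; push_cast; ring

lemma Kcase (h : Chn A K k0 B W) {E0 : ℕ} (hE : exp 10 ≤ E0) (C1 : ℕ) :
    ∃ D : ℝ, 0 ≤ D ∧ ∀ᶠ N : ℕ in atTop, ∀ J F, Om A K k0 B W C1 N J F → ∀ q a b : ZMod (N+1) → ℤ,
      (∀ k : ZMod (N+1), Ap (N+1) (Nat.sqrt (N+1)) k.val (q k) (a k) (b k)) → ∀ P : ℕ, 1 ≤ P → (P:ℝ) ≤ (N:ℝ)^(0.1:ℝ) →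
      ∀ Θ : Finset (ZMod (N+1)), (∀ k ∈ Θ, q k ≤ 2 * P ∧ |b k| ≤ 2 * P ∧ (P:ℝ)^(0.5:ℝ) * q k ≤ ((|b k| : ℤ) : ℝ)) →
      ∑ k ∈ Θ, ‖SS (N+1) (Omg B J F) k‖^2 ≤ D * (P:ℝ)^(-0.1:ℝ) * ((Omg B J F).card:ℝ)^2 := by
  obtain ⟨C3, C4, c3, c4, hsc⟩ := scale2 h
  refine ⟨576 * (8 * C1 + 1) * ((128 * C1^3 + 4 * E0 + 1) * (E0 + 1) * C4), by positivity, ?_⟩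
  filter_upwards [eventually_ge_atTop 1, ev_rpow (C := C3) (show (0.41:ℝ) < 0.499 by norm_num)]
    with N n1 n2 J F om q a b hap P hP1 hPN Θ hΘ
  have N0 : (0:ℝ) < N := by exact_mod_cast n1
  have P1 : (1:ℝ) ≤ P := by exact_mod_cast hP1
  obtain ⟨j0, j1, h01, a1, -, b1, b2, a3⟩ := hsc P P1
  have hj1 : j1 ≤ J := by
    refine a3 J (le_trans ?_ (n2.trans om.J1))
    gcongr
    calc (P:ℝ)^(4.1:ℝ) ≤ ((N:ℝ)^(0.1:ℝ))^(4.1:ℝ) := by gcongr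
      _ = _ := by rw [← rpow_mul N0.le]; norm_num
  have sp : PP B 0 j1 = cat (PP B 0 j0) (PP B j0 (j1 - j0)) := by
    have := PP_add B 0 j0 (j1 - j0)
    rwa [Nat.add_sub_cancel' h01, zero_add] at this
  have eW : Wq W 0 j1 = Wq W 0 j0 * Wq W j0 (j1 - j0) := Wsplit W h01
  set X := Wq W 0 j0 with hX
  set Y := Wq W j0 (j1 - j0) with hY
  have X1 : 1 ≤ X := h.Wq1 0 j0
  have Y1 : 1 ≤ Y := h.Wq1 j0 _
  have PY : (P:ℝ) ≤ Y := by
    rw [eW, mul_comm] at b1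
    exact le_of_mul_le_mul_left b1 (by linarith)
  obtain ⟨s1, sP, s2, s3⟩ := pw_half P1
  set s := (P:ℝ)^(0.5:ℝ) with hs
  have wU := WS.PP h 0 j0
  have wG := WS.PP h j0 (j1 - j0)
  have wZ := (WS.PP h j1 (J - j1)).cat ((WS.sing om.pwF).cat (WS.PP h 0 J).rv)
  set Z := cat (PP B j1 (J - j1)) (cat {F} (rv (PP B 0 J))) with hZ
  have wV := wG.cat wZ
  have hΩ : Omg B J F = cat (PP B 0 j0) (cat (PP B j0 (j1 - j0)) Z) := by
    rw [← cat_assoc, ← sp, hZ, ← cat_assoc, ← om.split hj1, Omg]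
  have hC2 : ∀ v ∈ cat (PP B j0 (j1 - j0)) Z, ∀ v' ∈ cat (PP B j0 (j1 - j0)) Z, ca v ≤ (2 * C1 : ℕ) * ca v' := by
    intro v hv v' hv'
    obtain ⟨u, hu⟩ := wU.ne
    have g1 := (om.bd (by rw [hΩ]; exact mem_cat.mpr ⟨u, hu, v, hv, rfl⟩)).2
    have g2 := (om.bd (by rw [hΩ]; exact mem_cat.mpr ⟨u, hu, v', hv', rfl⟩)).1
    have g3 := ca_mul_le u v
    have g4 := ca_le_mul (wU.pw u hu) (wV.pw v' hv')
    have g5 := one_le_ca (wU.pw u hu)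
    have g6 : (C1:ℤ) * ca (u ++ v') ≤ C1 * (2 * (ca u * ca v')) := mul_le_mul_of_nonneg_left g4 (by positivity)
    have g7 : ca u * ca v ≤ ca u * ((2 * C1 : ℕ) * ca v') := by push_cast; linarith
    exact le_of_mul_le_mul_left g7 (by linarith)
  have := core2 om wU wV hΩ hap Θ (Or.inl ⟨2 * P, fun k hk => ⟨(hΘ k hk).1, (hΘ k hk).2.1⟩, ca_big h hP1 a1⟩)
    (Cnt := Z.card * ((2 * (32 * C1^2 * (2 * C1 : ℕ) * Y^2 / s + 2 * E0) + 1) * (E0 + 1)))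
    (D := (128 * C1^3 + 4 * E0 + 1) * (E0 + 1) * C4 * (P:ℝ)^(-0.1:ℝ)) (by positivity) ?_ ?_
  · refine this.trans (le_of_eq ?_); ring
  · intro k hk v hv
    obtain ⟨l, hl⟩ := wG.len
    exact cnt_K (C1 := C1) hl wG.pw wZ.pw (h.ratio hE) hC2 wG.hi (hap k).1 (by linarith) (hΘ k hk).2.2 hv _
  · rw [wG.card]
    have e3 := h.card 0 j0
    have e3' := h.card j0 (j1 - j0)
    have e4 : (X * Y)^(0.04:ℝ) ≤ C4 * (P:ℝ)^(0.4:ℝ) :=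
      small_pw c4 P1 (by positivity) (by rw [← eW]; exact b2) (by norm_num) (by norm_num) (by norm_num)
    have e5 : X^2 * Y^2 = X^(1.96:ℝ) * Y^(1.96:ℝ) * (X * Y)^(0.04:ℝ) := by
      rw [← mul_pow, ← mul_rpow (by linarith) (by linarith), ← rpow_add (by positivity), ← rpow_natCast]; norm_num
    have e6 : 1 ≤ Y^2 / s := by
      rw [le_div_iff₀ (by linarith), one_mul]
      nlinarith
    calc X^2 * (Z.card * ((2 * (32 * C1^2 * (2 * C1 : ℕ) * Y^2 / s + 2 * E0) + 1) * (E0 + 1)))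
        = X^2 * (Z.card * ((128 * C1^3 * (Y^2 / s) + (4 * E0 + 1) * 1) * (E0 + 1))) := by push_cast; ring
      _ ≤ X^2 * (Z.card * ((128 * C1^3 * (Y^2 / s) + (4 * E0 + 1) * (Y^2 / s)) * (E0 + 1))) := by gcongr
      _ = (128 * C1^3 + 4 * E0 + 1) * (E0 + 1) * Z.card * ((X^2 * Y^2) / s) := by ring
      _ ≤ (128 * C1^3 + 4 * E0 + 1) * (E0 + 1) * Z.card *
          (((PP B 0 j0).card * (PP B j0 (j1 - j0)).card * (C4 * (P:ℝ)^(0.4:ℝ))) / s) := by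
          rw [e5]; gcongr
      _ = (128 * C1^3 + 4 * E0 + 1) * (E0 + 1) * C4 * ((P:ℝ)^(0.4:ℝ) / s) *
          ((PP B 0 j0).card * ((PP B j0 (j1 - j0)).card * Z.card)) := by ring
      _ = _ := by rw [s3]; push_cast; ring
end

section
section
variable {A : Finset ℕ} {K k0 : ℕ} {B : ℕ → Finset (List ℕ)} {W : ℕ → ℝ}

lemma geo_sum : Summable fun j : ℕ => ((2^j : ℕ) : ℝ)^(-0.1:ℝ) := by
  have e : ∀ j : ℕ, ((2^j : ℕ) : ℝ)^(-0.1:ℝ) = ((2:ℝ)^(-0.1:ℝ))^j := by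
    intro j
    push_cast
    rw [← rpow_natCast, ← rpow_natCast, ← rpow_mul (by norm_num), ← rpow_mul (by norm_num), mul_comm]
  simp_rw [e]
  exact summable_geometric_of_lt_one (by positivity) (rpow_lt_one_of_one_lt_of_neg (by norm_num) (by norm_num))

lemma total (h : Chn A K k0 B W) {E0 : ℕ} (hE : exp 10 ≤ E0) (C1 : ℕ) :
    ∃ D : ℝ, 0 ≤ D ∧ ∀ᶠ N : ℕ in atTop, ∀ J F, Om A K k0 B W C1 N J F →
      ∑ k : ZMod (N+1), ‖SS (N+1) (Omg B J F) k‖^2 ≤ D * ((Omg B J F).card:ℝ)^2 := by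
  classical
  obtain ⟨D1, d1, H1⟩ := large h hE C1
  obtain ⟨D2, d2, H2⟩ := qcase h hE C1
  obtain ⟨D3, d3, H3⟩ := Kcase h hE C1
  set S := ∑' j : ℕ, ((2^j : ℕ) : ℝ)^(-0.1:ℝ) with hS
  have S0 : 0 ≤ S := tsum_nonneg fun j => by positivity
  refine ⟨D1 + (D2 + D3) * S, by positivity, ?_⟩
  filter_upwards [H1, H2, H3] with N H1 H2 H3 J F om
  have ex : ∀ k : ZMod (N+1), ∃ q a b, Ap (N+1) (Nat.sqrt (N+1)) k.val q a b := fun k =>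
    exists_ap (by omega) (Nat.sqrt_pos.2 (by omega)) _
  choose q a b hap using ex
  specialize H1 J F om q a b hap
  specialize H2 J F om q a b hap
  specialize H3 J F om q a b hap
  set f : ZMod (N+1) → ℝ := fun k => ‖SS (N+1) (Omg B J F) k‖^2 with hf
  set c2 : ℝ := ((Omg B J F).card:ℝ)^2 with hc2
  have c20 : 0 ≤ c2 := by positivity
  set lg : ZMod (N+1) → Prop := fun k => (N:ℝ)^(0.1:ℝ) ≤ q k ∨ (N:ℝ)^(0.1:ℝ) ≤ ((|b k| : ℤ):ℝ) with hlg
  set M : ZMod (N+1) → ℕ := fun k => max (q k).natAbs (b k).natAbs with hM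
  rw [← Finset.sum_filter_add_sum_filter_not Finset.univ lg, add_mul]
  refine add_le_add (H1 _ fun k hk => (Finset.mem_filter.1 hk).2) ?_
  set Θ := Finset.univ.filter fun k => ¬ lg k with hΘ
  rw [← Finset.sum_fiberwise_of_maps_to (t := Θ.image fun k => Nat.log 2 (M k)) (g := fun k => Nat.log 2 (M k))
    (fun k hk => Finset.mem_image_of_mem _ hk)]
  have key : ∀ j, ∑ k ∈ Θ.filter (fun k => Nat.log 2 (M k) = j), f k ≤ ((D2 + D3) * c2) * ((2^j : ℕ) : ℝ)^(-0.1:ℝ) := by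
    intro j
    have bas : ∀ k ∈ Θ.filter (fun k => Nat.log 2 (M k) = j), ((2^j : ℕ) : ℝ) ≤ (N:ℝ)^(0.1:ℝ) ∧
        1 ≤ q k ∧ q k ≤ 2 * (2^j : ℕ) ∧ |b k| ≤ 2 * (2^j : ℕ) ∧ (((2^j : ℕ) : ℤ) ≤ q k ∨ ((2^j : ℕ) : ℤ) ≤ |b k|) := by
      intro k hk
      rw [Finset.mem_filter, hΘ, Finset.mem_filter] at hk
      obtain ⟨⟨-, nl⟩, hj⟩ := hk
      have q1 := (hap k).1
      have M0 : M k ≠ 0 := by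
        have : 1 ≤ (q k).natAbs := by omega
        have := le_max_left (q k).natAbs (b k).natAbs
        simp only [hM]; omega
      have l1 := Nat.pow_log_le_self 2 M0
      have l2 := Nat.lt_pow_succ_log_self (b := 2) (by norm_num) (M k)
      rw [hj] at l1 l2
      have m1 := le_max_left (q k).natAbs (b k).natAbs
      have m2 := le_max_right (q k).natAbs (b k).natAbs
      have m3 := max_choice (q k).natAbs (b k).natAbs
      rw [pow_succ] at l2
      have eb := Int.abs_eq_natAbs (b k)
      have l3 : ((2^j : ℕ) : ℤ) ≤ q k ∨ ((2^j : ℕ) : ℤ) ≤ |b k| := by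
        simp only [hM] at l1
        rcases m3 with m3 | m3 <;> rw [m3] at l1
        · left; omega
        · right; omega
      refine ⟨?_, q1, ?_, ?_, l3⟩
      · simp only [hlg, not_or, not_le] at nl
        rcases l3 with l | l
        · have : ((2^j : ℕ) : ℝ) ≤ q k := by exact_mod_cast l
          exact this.trans nl.1.le
        · have : ((2^j : ℕ) : ℝ) ≤ ((|b k| : ℤ) : ℝ) := by exact_mod_cast l
          exact this.trans nl.2.le
      · simp only [hM] at l2; omega
      · simp only [hM] at l2; omega
    set Λ := Θ.filter (fun k => Nat.log 2 (M k) = j) with hΛ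
    rcases Λ.eq_empty_or_nonempty with he | ⟨k1, hk1⟩
    · rw [he]; simp; positivity
    have PN := (bas k1 hk1).1
    have p1 : 1 ≤ 2^j := Nat.one_le_two_pow
    have P1 : (1:ℝ) ≤ ((2^j : ℕ) : ℝ) := by exact_mod_cast p1
    rw [← Finset.sum_filter_add_sum_filter_not Λ (fun k => ((2^j : ℕ):ℤ) ≤ (q k)^2)]
    have z1 := H2 (2^j) p1 PN (Λ.filter fun k => ((2^j : ℕ):ℤ) ≤ (q k)^2) fun k hk => by
      rw [Finset.mem_filter] at hk
      have := bas k hk.1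
      exact ⟨this.2.2.1, this.2.2.2.1, hk.2⟩
    have z2 := H3 (2^j) p1 PN (Λ.filter fun k => ¬ ((2^j : ℕ):ℤ) ≤ (q k)^2) fun k hk => by
      rw [Finset.mem_filter] at hk
      obtain ⟨-, q1, h2, h3, h4⟩ := bas k hk.1
      refine ⟨h2, h3, ?_⟩
      have h5 := hk.2
      push Not at h5
      have h6 : ((2^j : ℕ) : ℤ) ≤ |b k| := by
        rcases h4 with h4 | h4
        · nlinarith
        · exact h4
      obtain ⟨s1, sP, s2, -⟩ := pw_half P1
      set s := ((2^j : ℕ) : ℝ)^(0.5:ℝ)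
      have h7 : ((q k : ℤ) : ℝ)^2 < ((2^j : ℕ) : ℝ) := by exact_mod_cast h5
      have h8 : (1:ℝ) ≤ q k := by exact_mod_cast q1
      have h9 : (q k : ℝ) ≤ s := by
        by_contra hc
        push Not at hc
        nlinarith
      calc s * q k ≤ s * s := by gcongr
        _ = ((2^j : ℕ) : ℝ) := by rw [← sq, s2]
        _ ≤ _ := by exact_mod_cast h6
    calc _ ≤ D2 * ((2^j : ℕ) : ℝ)^(-0.1:ℝ) * c2 + D3 * ((2^j : ℕ) : ℝ)^(-0.1:ℝ) * c2 := add_le_add z1 z2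
      _ = _ := by ring
  refine (Finset.sum_le_sum fun j _ => key j).trans ?_
  rw [← Finset.mul_sum]
  have := geo_sum.sum_le_tsum (Θ.image fun k => Nat.log 2 (M k)) (fun j _ => by positivity)
  calc _ ≤ ((D2 + D3) * c2) * S := by gcongr
    _ = _ := by ring

lemma fin_dd (A : Finset ℕ) (N : ℕ) : (DD A N).Finite :=
  (Set.finite_Icc 1 N).subset fun _ hd => ⟨hd.1, hd.2.1⟩

lemma concl {C1 N J : ℕ} {F : List ℕ} (om : Om A K k0 B W C1 N J F) (hN : C1 < N) {D : ℝ}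
    (hD : ∑ k : ZMod (N+1), ‖SS (N+1) (Omg B J F) k‖^2 ≤ D * ((Omg B J F).card:ℝ)^2) :
    (N:ℝ) + 1 ≤ D * (DD A N).ncard := by
  classical
  set Ω := Omg B J F with hΩ
  set g : ZMod (N+1) → ℝ := fun z => ((Ω.filter fun w => (ca w : ZMod (N+1)) = z).card : ℝ) with hg
  have eS : ∀ k : ZMod (N+1), SS (N+1) Ω k = ∑ z, ((g z : ℝ) : ℂ) * ee (k * z) := by
    intro k
    rw [SS, ← Finset.sum_fiberwise Ω (fun w => (ca w : ZMod (N+1)))]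
    refine Finset.sum_congr rfl fun z _ => ?_
    rw [Finset.sum_congr rfl (g := fun _ => ee (k * z))]
    · rw [Finset.sum_const, nsmul_eq_mul]; simp [hg]
    · intro w hw
      rw [(Finset.mem_filter.1 hw).2]
  simp_rw [eS] at hD
  rw [parseval1] at hD
  simp only [Complex.norm_real, Real.norm_eq_abs, sq_abs] at hD
  set S := Ω.image fun w => (ca w : ZMod (N+1)) with hS
  have sg : ∑ z ∈ S, g z = Ω.card := by
    rw [Finset.card_eq_sum_card_image (fun w => (ca w : ZMod (N+1))) Ω]
    push_cast; rfl
  have cs : (Ω.card : ℝ)^2 ≤ S.card * ∑ z, (g z)^2 := by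
    rw [← sg]
    refine (sq_sum_le_card_mul_sum_sq).trans ?_
    exact mul_le_mul_of_nonneg_left (Finset.sum_le_univ_sum_of_nonneg (f := fun z => (g z)^2) fun z => sq_nonneg _) (by positivity)
  have w0 : 0 < (Ω.card : ℝ) := by
    have := om.card
    have n1 := (om.chn.ne 0 J).card_pos
    rw [← hΩ] at this
    rw [this]; exact_mod_cast Nat.mul_pos n1 n1
  have sd : S.card ≤ (DD A N).ncard := by
    have e : S = (Ω.image fun w => cont w).image fun n : ℕ => (n : ZMod (N+1)) := by
      rw [Finset.image_image, hS]
      refine Finset.image_congr fun w _ => ?_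
      simp only [Function.comp]
      rw [← cont_eq]; simp
    rw [e]
    refine Finset.card_image_le.trans ?_
    rw [← Set.ncard_coe_finset]
    refine Set.ncard_le_ncard ?_ (fin_dd A N)
    intro d hd
    obtain ⟨w, hw, rfl⟩ := Finset.mem_image.1 (Finset.mem_coe.1 hd)
    have bd := om.bd hw
    rw [← cont_eq] at bd
    obtain ⟨b1, b2⟩ := bd
    have b1' : N ≤ C1 * cont w := by exact_mod_cast b1
    have b2' : cont w ≤ N := by exact_mod_cast b2
    refine ⟨?_, b2', w, ?_, ?_, rfl⟩
    · rcases Nat.eq_zero_or_pos (cont w) with h0 | h0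
      · rw [h0] at b1'; omega
      · exact h0
    · rintro rfl
      rw [cont] at b1'; omega
    · obtain ⟨u, hu, v, hv, rfl⟩ := mem_cat.mp hw
      obtain ⟨f, hf, z, hz, rfl⟩ := mem_cat.mp hv
      obtain ⟨r, hr, rfl⟩ := mem_rv.mp hz
      rw [Finset.mem_singleton] at hf
      subst hf
      intro x hx
      rw [List.mem_append, List.mem_append, List.mem_reverse] at hx
      rcases hx with hx | hx | hx
      · exact om.chn.let 0 J u hu x hx
      · exact om.letF x hx
      · exact om.chn.let 0 J r hr x hx
  have sd' : (S.card : ℝ) ≤ (DD A N).ncard := by exact_mod_cast sd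
  have n0 : (0:ℝ) < (N:ℝ) + 1 := by positivity
  have g0 : 0 ≤ ∑ z, (g z)^2 := Finset.sum_nonneg fun z _ => sq_nonneg _
  push_cast at hD
  have f1 : ((N:ℝ)+1) * (Ω.card:ℝ)^2 ≤ (S.card * D) * (Ω.card:ℝ)^2 := by
    calc ((N:ℝ)+1) * (Ω.card:ℝ)^2 ≤ (N+1) * (S.card * ∑ z, (g z)^2) := by gcongr
      _ = S.card * ((N+1) * ∑ z, (g z)^2) := by ring
      _ ≤ S.card * (D * (Ω.card:ℝ)^2) := by gcongr
      _ = _ := by ring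
  have f2 := le_of_mul_le_mul_right f1 (by positivity)
  have D0 : 0 ≤ D := by
    by_contra hc
    push Not at hc
    have : (0:ℝ) ≤ S.card := by positivity
    nlinarith
  calc (N:ℝ) + 1 ≤ S.card * D := f2
    _ ≤ (DD A N).ncard * D := by gcongr
    _ = _ := by ring

end
end

theorem bourgain_kontorovich
    (A : Finset ℕ) (hpos : ∀ a ∈ A, 0 < a) (hcard : 2 ≤ A.card)
    (hδ : 1 - 5/312 < hdim A) :
    ∃ c : ℝ, 0 < c ∧ ∃ N₀ : ℕ, ∀ N : ℕ, N₀ ≤ N →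
      c * N ≤ ((DD A N).ncard : ℝ) := by
  have hK : ∀ a ∈ A, a ≤ A.sup id := fun a ha => Finset.le_sup (f := id) ha
  have hne : A.Nonempty := Finset.card_pos.1 (by omega)
  obtain ⟨k0, B, W, h⟩ := exists_chn hpos hK hδ
  obtain ⟨C1, E0, hE, hs⟩ := setup h hK hpos hne
  obtain ⟨D, hD, ht⟩ := total h hE C1
  obtain ⟨N₀, hN⟩ := eventually_atTop.1 ((hs.and ht).and (eventually_gt_atTop C1))
  refine ⟨1 / (D + 1), by positivity, N₀, fun N hNN => ?_⟩
  obtain ⟨⟨⟨J, F, om⟩, h2⟩, h3⟩ := hN N hNN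
  have := concl om h3 (h2 J F om)
  rw [div_mul_eq_mul_div, one_mul, div_le_iff₀ (by positivity)]
  have : (0:ℝ) ≤ (DD A N).ncard := by positivity
  nlinarith

end
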